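/- arXiv:2406.19857 — 2 statements merged into one kernel-verified Lean document; each statement's English description precedes it below -/
import Mathlib

section
/- In the abelian category Sh(G) of sheaves of ℚ-vector spaces on G = SU(2), one has Ext^n_{Sh(G)}(i_*ℚ, K) ≅ ℚ for n ∈ {1, 3}, and Ext^n_{Sh(G)}(i_*ℚ, K) = 0 for all other integers n. -/
open CategoryTheory TopologicalSpace Limits

noncomputable section

/-- The special unitary group `SU(2)`, as the kernel of the determinant on the unitary group
of 2×2 complex matrices. -/
abbrev SU2 : Subgroup (Matrix.unitaryGroup (Fin 2) ℂ) :=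
  MonoidHom.ker (Matrix.detMonoidHom.comp (Matrix.unitaryGroup (Fin 2) ℂ).subtype)

/-- `SU(2)` as a topological space. -/
abbrev GTop : TopCat := TopCat.of SU2

/-- The category of sheaves of `ℚ`-vector spaces on `SU(2)`. -/
abbrev ShG : Type _ := Sheaf (Opens.grothendieckTopology GTop) (ModuleCat.{0} ℚ)

attribute [local instance] Classical.propDecidable

/-- The constant sheaf `ℚ_G` on `SU(2)`. -/
def QG : ShG :=
  (constantSheaf (Opens.grothendieckTopology GTop) (ModuleCat.{0} ℚ)).obj (ModuleCat.of ℚ ℚ)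

/-- The skyscraper sheaf `i_* ℚ` at the identity element of `SU(2)`. -/
def skyQ : ShG := skyscraperSheaf (X := GTop) (1 : SU2) (ModuleCat.of ℚ ℚ)

/-- The unit `ℚ_G ⟶ i_* i^* ℚ_G` of the stalk/skyscraper adjunction at the identity. -/
def unitQG := (stalkSkyscraperSheafAdjunction (C := ModuleCat.{0} ℚ) (X := GTop)
  (1 : SU2)).unit.app QG

/-- `K` is the kernel of the unit `ℚ_G ⟶ i_* i^* ℚ_G`; equivalently, the extension by zero
of the constant sheaf `ℚ` on `SU(2) ∖ {1}`. -/
def KK : ShG := kernel unitQG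

instance : HasDerivedCategory ShG := HasDerivedCategory.standard _
instance : HasExt.{1} ShG := hasExt_of_hasDerivedCategory _

open Opposite Topology

/-- Sheaves of rational vector spaces on a space. -/
abbrev Shv (X : TopCat.{0}) : Type _ := Sheaf (Opens.grothendieckTopology X) (ModuleCat.{0} ℚ)

section qz
variable {X : TopCat.{0}}

/-- the indicator function with rational values -/
def ind (Z : Set X) (x : X) : ℚ := if x ∈ Z then 1 else 0

lemma ind_of_mem {Z : Set X} {x : X} (h : x ∈ Z) : ind Z x = 1 := if_pos h
lemma ind_of_notMem {Z : Set X} {x : X} (h : x ∉ Z) : ind Z x = 0 := if_neg h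

/-- Sections over `U` of the sheaf `ℚ_Z`. -/
def qSub (Z : Set X) (U : Opens X) : Submodule ℚ (U → ℚ) where
  carrier := {f | ∀ x : U, ∀ᶠ y in 𝓝 x, f y = f x * ind Z y}
  add_mem' := by
    intro f g hf hg x
    filter_upwards [hf x, hg x] with y h1 h2
    simp only [Pi.add_apply, h1, h2]; ring
  zero_mem' := by intro x; simp
  smul_mem' := by
    intro c f hf x
    filter_upwards [hf x] with y h1
    simp only [Pi.smul_apply, smul_eq_mul, h1]; ring

lemma mem_qSub {Z : Set X} {U : Opens X} {f : U → ℚ} :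
    f ∈ qSub Z U ↔ ∀ x : U, ∀ᶠ y in 𝓝 x, f y = f x * ind Z y := Iff.rfl

lemma qSub_zero {Z : Set X} {U : Opens X} {f : U → ℚ} (hf : f ∈ qSub Z U) (x : U) (hx : f x ≠ 0) :
    (x : X) ∈ Z := by
  by_contra h
  have := (hf x).self_of_nhds
  rw [ind_of_notMem h] at this
  simp at this
  exact hx this

/-- restriction of functions -/
def resFun {U V : Opens X} (h : V ≤ U) (f : U → ℚ) : V → ℚ := fun x => f ⟨x.1, h x.2⟩

lemma resFun_mem (Z : Set X) {U V : Opens X} (h : V ≤ U) {f : U → ℚ} (hf : f ∈ qSub Z U) :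
    resFun h f ∈ qSub Z V := by
  intro x
  have hc : Continuous (fun x : V => (⟨x.1, h x.2⟩ : U)) := by fun_prop
  exact (hc.tendsto x).eventually (hf ⟨x.1, h x.2⟩)

/-- restriction as a linear map -/
def qRes (Z : Set X) {U V : Opens X} (h : V ≤ U) : qSub Z U →ₗ[ℚ] qSub Z V where
  toFun f := ⟨resFun h f.1, resFun_mem Z h f.2⟩
  map_add' _ _ := rfl
  map_smul' _ _ := rfl

/-- the presheaf `ℚ_Z` -/
def qPre (Z : Set X) : TopCat.Presheaf (ModuleCat.{0} ℚ) X where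
  obj U := ModuleCat.of ℚ (qSub Z U.unop)
  map i := ModuleCat.ofHom (qRes Z i.unop.le)
  map_id _ := rfl
  map_comp _ _ := rfl

/-- membership is local -/
lemma mem_qSub_of_local {Z : Set X} {U : Opens X} {f : U → ℚ}
    (h : ∀ x : U, ∃ (V : Opens X) (hV : V ≤ U), x.1 ∈ V ∧ resFun hV f ∈ qSub Z V) :
    f ∈ qSub Z U := by
  intro x
  obtain ⟨V, hV, hx, hm⟩ := h x
  have := hm ⟨x.1, hx⟩
  rw [nhds_subtype_eq_comap, Filter.eventually_comap] at this ⊢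
  filter_upwards [this, V.isOpen.mem_nhds hx] with y hy hyV
  rintro a rfl
  exact hy ⟨a.1, hyV⟩ rfl

lemma qPre_isSheaf (Z : Set X) : (qPre Z).IsSheaf := by
  rw [TopCat.Presheaf.isSheaf_iff_isSheafUniqueGluing]
  intro ι U sf hsf
  have key : ∀ (i j : ι) (x : X) (hi : x ∈ U i) (hj : x ∈ U j),
      (sf i).1 ⟨x, hi⟩ = (sf j).1 ⟨x, hj⟩ := by
    intro i j x hi hj
    have := hsf i j
    exact congrFun (congrArg Subtype.val this) ⟨x, hi, hj⟩
  have hex : ∀ x : ↥(iSup U : Opens X), ∃ i, x.1 ∈ U i := fun x => Opens.mem_iSup.1 x.2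
  choose c hc using hex
  have hle : ∀ i, U i ≤ iSup U := fun i => le_iSup U i
  let f : ↥(iSup U : Opens X) → ℚ := fun x => (sf (c x)).1 ⟨x.1, hc x⟩
  have hfr : ∀ i, resFun (hle i) f = (sf i).1 := by
    intro i
    funext x
    exact key _ _ _ _ _
  have hf : f ∈ qSub Z (iSup U) := by
    apply mem_qSub_of_local
    intro x
    exact ⟨U (c x), hle _, hc x, by rw [hfr]; exact (sf (c x)).2⟩
  refine ⟨(⟨f, hf⟩ : qSub Z (iSup U)), ?_, ?_⟩
  · intro i
    exact Subtype.ext (hfr i)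
  · intro g hg
    apply Subtype.ext
    funext x
    have := congrFun (congrArg Subtype.val (hg (c x))) ⟨x.1, hc x⟩
    exact this

/-- the sheaf `ℚ_Z` -/
def qSh (Z : Set X) : Shv X := ⟨qPre Z, qPre_isSheaf Z⟩

/-- compatibility condition for multiplication by the indicator -/
def QComp (Z Z' : Set X) : Prop :=
  ∀ x ∈ Z, ∀ᶠ y in 𝓝 x, y ∈ Z' → x ∈ Z' ∧ y ∈ Z

lemma mul_mem {Z Z' : Set X} (h : QComp Z Z') {U : Opens X} {f : U → ℚ} (hf : f ∈ qSub Z U) :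
    (fun x : U => f x * ind Z' x) ∈ qSub Z' U := by
  intro x
  by_cases h0 : f x = 0
  · filter_upwards [hf x] with y hy
    simp [hy, h0]
  · have hx := qSub_zero hf x h0
    have h2 := continuous_subtype_val.continuousAt.eventually (h x.1 hx)
    filter_upwards [hf x, h2] with y hy hy2
    by_cases hyZ : (y : X) ∈ Z'
    · obtain ⟨h3, h4⟩ := hy2 hyZ
      simp [hy, ind_of_mem h3, ind_of_mem h4, ind_of_mem hyZ]
    · simp [ind_of_notMem hyZ]

/-- multiplication by an indicator function -/
def qMul {Z Z' : Set X} (h : QComp Z Z') (U : Opens X) : qSub Z U →ₗ[ℚ] qSub Z' U where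
  toFun f := ⟨fun x => f.1 x * ind Z' x, mul_mem h f.2⟩
  map_add' f g := by ext x; simp [add_mul]
  map_smul' c f := by ext x; simp [mul_assoc]

/-- the natural morphism between the `ℚ_Z` -/
def qMap {Z Z' : Set X} (h : QComp Z Z') : qSh Z ⟶ qSh Z' where
  hom := { app := fun U => ModuleCat.ofHom (qMul h U.unop)
           naturality := fun _ _ _ => rfl }

/-- `Z` is locally closed -/
def LC (Z : Set X) : Prop := ∀ x ∈ Z, ∀ᶠ y in 𝓝 x, y ∉ Z → ∀ᶠ z in 𝓝 y, z ∉ Z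

/-- relative openness -/
def OpenIn (Z' Z : Set X) : Prop := Z' ⊆ Z ∧ ∀ x ∈ Z', ∀ᶠ y in 𝓝 x, y ∈ Z → y ∈ Z'

lemma OpenIn.comp₁ {Z' Z : Set X} (h : OpenIn Z' Z) : QComp Z' Z := by
  intro x hx
  filter_upwards [h.2 x hx] with y hy hyZ
  exact ⟨h.1 hx, hy hyZ⟩

lemma OpenIn.comp₂ {Z' Z : Set X} (h : OpenIn Z' Z) : QComp Z (Z \ Z') := by
  intro x hx
  by_cases hx' : x ∈ Z'
  · filter_upwards [h.2 x hx'] with y hy hyZ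
    exact absurd (hy hyZ.1) hyZ.2
  · filter_upwards with y hy
    exact ⟨⟨hx, hx'⟩, hy.1⟩

/-- the section `1_Z` when it makes sense -/
lemma ind_mem {Z : Set X} {U : Opens X} (h : ∀ x ∈ U, x ∉ Z → ∀ᶠ y in 𝓝 x, y ∉ Z) :
    (fun x : U => ind Z x) ∈ qSub Z U := by
  intro x
  by_cases hx : x.1 ∈ Z
  · filter_upwards with y
    simp [ind_of_mem hx]
  · filter_upwards [continuous_subtype_val.continuousAt.eventually (h x.1 x.2 hx)] with y hy
    rw [ind_of_notMem hy, ind_of_notMem hx]; simp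

/-- a nonzero section looks locally like a multiple of the indicator -/
lemma local_form {Z : Set X} {U : Opens X} (f : qSub Z U) (x : U) :
    ∃ (V : Opens X) (hV : V ≤ U), x.1 ∈ V ∧ ∀ y (hy : y ∈ V), f.1 ⟨y, hV hy⟩ = f.1 x * ind Z y := by
  have := f.2 x
  rw [nhds_subtype_eq_comap, Filter.eventually_comap] at this
  obtain ⟨W, hW, hWo, hxW⟩ := eventually_nhds_iff.1 this
  refine ⟨⟨W, hWo⟩ ⊓ U, inf_le_right, ⟨hxW, x.2⟩, fun y hy => ?_⟩
  exact hW y hy.1 ⟨y, hy.2⟩ rfl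

end qz

section ses
variable {X : TopCat.{0}}

lemma shv_hom_ext {F G : Shv X} {a b : F ⟶ G}
    (h : ∀ (U : Opens X) (s : F.obj.obj (op U)), a.hom.app (op U) s = b.hom.app (op U) s) : a = b := by
  apply Sheaf.hom_ext
  ext U s
  exact h U.unop s

lemma shv_epi {F G : Shv X} (a : F ⟶ G)
    (h : ∀ (U : Opens X) (t : G.obj.obj (op U)) (x : X), x ∈ U → ∃ (V : Opens X) (hV : V ≤ U),
      x ∈ V ∧ ∃ s : F.obj.obj (op V), a.hom.app (op V) s = G.obj.map (homOfLE hV).op t) : Epi a := by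
  refine (TopCat.Sheaf.isLocallySurjective_iff_epi (F := F) (G := G) a).1 ?_
  rw [TopCat.Presheaf.isLocallySurjective_iff]
  intro U t x hx
  obtain ⟨V, hV, hxV, s, hs⟩ := h U t x hx
  exact ⟨V, hV, ⟨s, hs⟩, hxV⟩

lemma shv_epi_local {F G : Shv X} (a : F ⟶ G) [ha : Epi a] (U : Opens X) (t : G.obj.obj (op U))
    (x : X) (hx : x ∈ U) : ∃ (V : Opens X) (hV : V ≤ U),
      x ∈ V ∧ ∃ s : F.obj.obj (op V), a.hom.app (op V) s = G.obj.map (homOfLE hV).op t := by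
  have := (TopCat.Sheaf.isLocallySurjective_iff_epi (F := F) (G := G) a).2 ha
  rw [TopCat.Presheaf.isLocallySurjective_iff] at this
  obtain ⟨V, hV, ⟨s, hs⟩, hxV⟩ := this U t x hx
  exact ⟨V, hV, hxV, s, hs⟩

lemma shv_mono {F G : Shv X} (a : F ⟶ G)
    (h : ∀ (U : Opens X) (s t : F.obj.obj (op U)), a.hom.app (op U) s = a.hom.app (op U) t → s = t) :
    Mono a := by
  constructor
  intro T g k hgk
  apply shv_hom_ext
  intro U s
  apply h
  have := congrArg (fun m => m.hom.app (op U) s) hgk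
  exact this

lemma lift_mem {Z' Z : Set X} {U : Opens X} (h : OpenIn Z' Z) (f : qSub Z U)
    (hf : qMul h.comp₂ U f = 0) : f.1 ∈ qSub Z' U := by
  intro x
  by_cases h0 : f.1 x = 0
  · filter_upwards [f.2 x] with y hy
    rw [hy, h0]; simp
  · have hx := qSub_zero f.2 x h0
    have hx' : x.1 ∈ Z' := by
      by_contra hn
      have h1 := congrFun (congrArg Subtype.val hf) x
      have h2 : f.1 x * ind (Z \ Z') x = 0 := h1
      rw [ind_of_mem (show x.1 ∈ Z \ Z' from ⟨hx, hn⟩)] at h2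
      simp at h2
      exact h0 h2
    filter_upwards [f.2 x, continuous_subtype_val.continuousAt.eventually (h.2 x.1 hx')] with y hy hy2
    rw [hy]
    congr 1
    by_cases hyZ : y.1 ∈ Z
    · rw [ind_of_mem hyZ, ind_of_mem (hy2 hyZ)]
    · rw [ind_of_notMem hyZ, ind_of_notMem (fun hh => hyZ (h.1 hh))]

lemma qMul_val_of_subset {Z' Z : Set X} {U : Opens X} (h : QComp Z' Z) (hs : Z' ⊆ Z)
    (f : qSub Z' U) : (qMul h U f).1 = f.1 := by
  funext x
  change f.1 x * ind Z x = f.1 x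
  by_cases h0 : f.1 x = 0
  · rw [h0]; simp
  · rw [ind_of_mem (hs (qSub_zero f.2 x h0))]; simp

/-- the short complex attached to a relatively open set -/
def qSC {Z' Z : Set X} (h : OpenIn Z' Z) : ShortComplex (Shv X) :=
  ShortComplex.mk (qMap h.comp₁) (qMap h.comp₂) (by
    apply shv_hom_ext
    intro U (s : qSub Z' U)
    apply Subtype.ext
    funext x
    change (qMul h.comp₁ U s).1 x * ind (Z \ Z') x = 0
    rw [qMul_val_of_subset h.comp₁ h.1 s]
    by_cases h0 : s.1 x = 0
    · rw [h0]; simp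
    · rw [ind_of_notMem (fun hh => hh.2 (qSub_zero s.2 x h0))]; simp)

/-- lifting a morphism to a kernel -/
def qLift {Z' Z : Set X} (h : OpenIn Z' Z) {T : Shv X} (k : T ⟶ qSh Z)
    (hk : k ≫ qMap h.comp₂ = 0) : T ⟶ qSh Z' where
  hom :=
  { app := fun U => ModuleCat.ofHom
      { toFun := fun t => ⟨(show qSub Z U.unop from k.hom.app U t).1, lift_mem h _ (by
          exact congrArg (fun m => m.hom.app U t) hk)⟩
        map_add' := fun a b => by
          apply Subtype.ext
          change (show qSub Z U.unop from k.hom.app U (a + b)).1 = _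
          rw [map_add]; rfl
        map_smul' := fun a b => by
          apply Subtype.ext
          change (show qSub Z U.unop from k.hom.app U (a • b)).1 = _
          rw [map_smul]; rfl }
    naturality := by
      intro U V i
      ext t
      apply Subtype.ext
      have := congrArg (fun m => m t) (k.hom.naturality i)
      exact congrArg (fun q : qSub Z V.unop => q.1) this }

lemma qSC_shortExact {Z' Z : Set X} (h : OpenIn Z' Z) (hZ : LC Z) : (qSC h).ShortExact := by
  have hm : Mono (qSC h).f := by
    apply shv_mono
    intro U (s : qSub Z' U) (t : qSub Z' U) hst
    apply Subtype.ext
    have := congrArg (fun q : qSub Z U => q.1) hst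
    change (qMul h.comp₁ U s).1 = (qMul h.comp₁ U t).1 at this
    rwa [qMul_val_of_subset _ h.1, qMul_val_of_subset _ h.1] at this
  refine ShortComplex.ShortExact.mk' ?_ hm ?_
  · apply ShortComplex.exact_of_f_is_kernel
    refine KernelFork.IsLimit.ofι' _ _ (fun k hk => ⟨qLift h k hk, ?_⟩)
    apply shv_hom_ext
    intro U s
    apply Subtype.ext
    exact qMul_val_of_subset h.comp₁ h.1 _
  · apply shv_epi
    intro U (t : qSub (Z \ Z') U) x hx
    obtain ⟨V, hV, hxV, ht⟩ := local_form t ⟨x, hx⟩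
    set c := t.1 ⟨x, hx⟩ with hc
    by_cases h0 : c = 0
    · refine ⟨V, hV, hxV, 0, ?_⟩
      rw [map_zero]
      symm
      apply Subtype.ext
      funext y
      exact (ht y.1 y.2).trans (by rw [h0, zero_mul]; rfl)
    · have hxZ := qSub_zero t.2 ⟨x, hx⟩ h0
      obtain ⟨W, hW, hWo, hxW⟩ := eventually_nhds_iff.1 (hZ x hxZ.1)
      have hi : (fun x : (V ⊓ ⟨W, hWo⟩ : Opens X) => ind Z x) ∈ qSub Z (V ⊓ ⟨W, hWo⟩) :=
        ind_mem (fun y hy hyZ => hW y hy.2 hyZ)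
      refine ⟨V ⊓ ⟨W, hWo⟩, inf_le_left.trans hV, ⟨hxV, hxW⟩,
        c • (⟨_, hi⟩ : qSub Z (V ⊓ ⟨W, hWo⟩)), ?_⟩
      apply Subtype.ext
      funext y
      refine Eq.trans ?_ (ht y.1 y.2.1).symm
      change (c * ind Z y.1) * ind (Z \ Z') y.1 = c * ind (Z \ Z') y.1
      by_cases hy : y.1 ∈ Z \ Z'
      · rw [ind_of_mem hy.1]; simp
      · rw [ind_of_notMem hy]; simp

/-- morphisms out of `ℚ_Z` are determined by the image of `1_Z` -/
lemma qSh_hom_ext {Z : Set X} {B : Opens X} (hZB : Z ⊆ B) (hi : (fun x : B => ind Z x) ∈ qSub Z B)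
    {F : Shv X} {a b : qSh Z ⟶ F}
    (h : a.hom.app (op B) (⟨_, hi⟩ : qSub Z B) = b.hom.app (op B) (⟨_, hi⟩ : qSub Z B)) : a = b := by
  apply shv_hom_ext
  intro U (s : qSub Z U)
  choose V hV hxV ht using local_form s
  let V' : U → Opens X := fun x => if s.1 x = 0 then V x else V x ⊓ B
  have hV' : ∀ x, V' x ≤ U := fun x => by
    simp only [V']; split_ifs
    · exact hV x
    · exact inf_le_left.trans (hV x)
  have key : ∀ x, a.hom.app (op (V' x)) ((qSh Z).obj.map (homOfLE (hV' x)).op s) =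
      b.hom.app (op (V' x)) ((qSh Z).obj.map (homOfLE (hV' x)).op s) := by
    intro x
    by_cases h0 : s.1 x = 0
    · have : (qSh Z).obj.map (homOfLE (hV' x)).op s = 0 := by
        apply Subtype.ext
        funext y
        have hy : y.1 ∈ V x := by have := y.2; simpa [V', h0] using this
        exact (ht x y.1 hy).trans (by rw [h0, zero_mul]; rfl)
      rw [this, map_zero, map_zero]
    · have hle : V' x ≤ B := by simp only [V', if_neg h0]; exact inf_le_right
      have : (qSh Z).obj.map (homOfLE (hV' x)).op s =
        (s.1 x) • (qSh Z).obj.map (homOfLE hle).op (⟨_, hi⟩ : qSub Z B) := by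
        apply Subtype.ext
        funext y
        have hy : y.1 ∈ V x := by have := y.2; simp [V', h0] at this; exact this.1
        exact (ht x y.1 hy)
      rw [this, map_smul, map_smul]
      congr 1
      have e1 := congrArg (fun m => m (⟨_, hi⟩ : qSub Z B)) (a.hom.naturality (homOfLE hle).op)
      have e2 := congrArg (fun m => m (⟨_, hi⟩ : qSub Z B)) (b.hom.naturality (homOfLE hle).op)
      refine e1.trans (Eq.trans ?_ e2.symm)
      exact congrArg (fun m => F.obj.map (homOfLE hle).op m) h
  refine TopCat.Sheaf.eq_of_locally_eq' F V' U (fun x => homOfLE (hV' x)) ?_ _ _ ?_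
  · intro x hx
    rw [Opens.mem_iSup]
    refine ⟨⟨x, hx⟩, ?_⟩
    simp only [V']; split_ifs with h0
    · exact hxV _
    · exact ⟨hxV _, hZB (qSub_zero s.2 ⟨x, hx⟩ h0)⟩
  · intro x
    have e1 := congrArg (fun m => m s) (a.hom.naturality (homOfLE (hV' x)).op)
    have e2 := congrArg (fun m => m s) (b.hom.naturality (homOfLE (hV' x)).op)
    exact e1.symm.trans ((key x).trans e2)

end ses

section yon
variable {X : TopCat.{0}}

lemma locW {P Q : (Opens X)ᵒᵖ ⥤ ModuleCat.{0} ℚ} (η : P ⟶ Q)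
    (h1 : ∀ (W : Opens X) (x : X), x ∈ W → ∀ s t : P.obj (op W), η.app (op W) s = η.app (op W) t → s = t)
    (h2 : ∀ (W : Opens X) (t : Q.obj (op W)) (x : X), x ∈ W → ∃ (V : Opens X) (hV : V ≤ W),
      x ∈ V ∧ ∃ s : P.obj (op V), η.app (op V) s = Q.map (homOfLE hV).op t) :
    (Opens.grothendieckTopology X).W η := by
  have i1 : Presheaf.IsLocallyInjective (Opens.grothendieckTopology X) η := by
    constructor
    intro W s t hst x hx
    refine ⟨W.unop, 𝟙 _, ?_, hx⟩
    have := h1 W.unop x hx s t hst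
    subst this
    simp
  have i2 : Presheaf.IsLocallySurjective (Opens.grothendieckTopology X) η := by
    constructor
    intro W t x hx
    obtain ⟨V, hV, hxV, s, hs⟩ := h2 W t x hx
    exact ⟨V, homOfLE hV, ⟨s, hs⟩, hxV⟩
  exact GrothendieckTopology.W_of_isLocallyBijective (J := Opens.grothendieckTopology X) η

lemma one_mem {U W : Opens X} (h : W ≤ U) : (fun x : W => ind (U : Set X) x) ∈ qSub (U : Set X) W :=
  ind_mem (fun x hx hn => absurd (h hx) hn)

/-- the section 1 -/
def one (U : Opens X) {W : Opens X} (h : W ≤ U) : qSub (U : Set X) W := ⟨_, one_mem h⟩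

/-- free presheaf on `U` -/
def freeP (U : Opens X) : (Opens X)ᵒᵖ ⥤ ModuleCat.{0} ℚ := yoneda.obj U ⋙ ModuleCat.free ℚ

/-- maps out of free presheaf -/
def freePDesc (U : Opens X) (F : (Opens X)ᵒᵖ ⥤ ModuleCat.{0} ℚ) (s : F.obj (op U)) : freeP U ⟶ F where
  app W := ModuleCat.freeDesc (↾ fun i : W.unop ⟶ U => F.map i.op s)
  naturality W V i := by
    apply ModuleCat.free_hom_ext
    intro x
    have e : (freeP U).map i (ModuleCat.freeMk x) = ModuleCat.freeMk (i.unop ≫ x) :=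
      ModuleCat.free_map_apply _ _
    change ModuleCat.freeDesc _ ((freeP U).map i (ModuleCat.freeMk x)) = F.map i (ModuleCat.freeDesc _ (ModuleCat.freeMk x))
    rw [e]
    erw [ModuleCat.freeDesc_apply, ModuleCat.freeDesc_apply]
    simp

lemma freePDesc_apply (U : Opens X) (F : (Opens X)ᵒᵖ ⥤ ModuleCat.{0} ℚ) (s : F.obj (op U))
    (W : Opens X) (i : W ⟶ U) :
    (freePDesc U F s).app (op W) (ModuleCat.freeMk i) = F.map i.op s :=
  ModuleCat.freeDesc_apply _ _

lemma freeP_form (U W : Opens X) (s : (freeP U).obj (op W)) :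
    s = 0 ∨ ∃ (i : W ⟶ U) (c : ℚ), s = c • (ModuleCat.freeMk i : (ModuleCat.free ℚ).obj (W ⟶ U)) := by
  by_cases h : W ≤ U
  · right
    refine ⟨homOfLE h, (show (W ⟶ U) →₀ ℚ from s) (homOfLE h), ?_⟩
    refine Finsupp.ext (f := (show (W ⟶ U) →₀ ℚ from s)) (g := _ • Finsupp.single (homOfLE h) 1) (fun i => ?_)
    rw [Subsingleton.elim i (homOfLE h)]
    refine Eq.trans ?_ (Finsupp.smul_apply _ _ _).symm
    rw [Finsupp.single_eq_same, smul_eq_mul, mul_one]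
  · left
    refine Finsupp.ext (f := (show (W ⟶ U) →₀ ℚ from s)) (g := 0) (fun i => ?_)
    exact absurd i.le h

/-- the universal map to `qPre` -/
def etaU (U : Opens X) : freeP U ⟶ qPre (U : Set X) := freePDesc U (qPre (U : Set X)) (one U le_rfl)

lemma etaU_apply (U W : Opens X) (i : W ⟶ U) (c : ℚ) :
    (etaU U).app (op W) (c • (ModuleCat.freeMk i : (ModuleCat.free ℚ).obj (W ⟶ U))) = c • one U i.le := by
  refine (map_smul ((etaU U).app (op W)).hom c (ModuleCat.freeMk i : (ModuleCat.free ℚ).obj (W ⟶ U))).trans ?_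
  exact congrArg (fun q : qSub (U : Set X) W => c • q) (freePDesc_apply U _ _ W i)

lemma etaU_apply' (U W : Opens X) (i : W ⟶ U) :
    (etaU U).app (op W) (ModuleCat.freeMk i : (ModuleCat.free ℚ).obj (W ⟶ U)) = one U i.le := 
  (freePDesc_apply U _ _ W i)

lemma freeP_W (U : Opens X) : (Opens.grothendieckTopology X).W (etaU U) := by
  apply locW
  · intro W x hx
    suffices h : ∀ s, (etaU U).app (op W) s = 0 → s = 0 by
      intro s t hst
      apply sub_eq_zero.1
      apply h
      rw [map_sub, hst, sub_self]
    intro s hs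
    obtain h | ⟨i, c, h⟩ := freeP_form U W s
    · exact h
    · subst h
      have e2 := (etaU_apply U W i c).symm.trans hs
      have e3 := congrFun (congrArg (fun q : qSub (U : Set X) W => q.1) e2) ⟨x, hx⟩
      have e4 : c * ind (U : Set X) x = 0 := e3
      rw [ind_of_mem (show x ∈ (U : Set X) from i.le hx), mul_one] at e4
      rw [e4]; exact zero_smul _ _
  · intro W (t : qSub (U : Set X) W) x hx
    obtain ⟨V, hV, hxV, ht⟩ := local_form t ⟨x, hx⟩
    by_cases h0 : t.1 ⟨x, hx⟩ = 0
    · refine ⟨V, hV, hxV, 0, ?_⟩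
      rw [map_zero]
      symm
      apply Subtype.ext
      funext y
      exact (ht y.1 y.2).trans (by rw [h0, zero_mul]; rfl)
    · have hxZ := qSub_zero t.2 ⟨x, hx⟩ h0
      refine ⟨V ⊓ U, inf_le_left.trans hV, ⟨hxV, hxZ⟩, t.1 ⟨x, hx⟩ • (ModuleCat.freeMk (homOfLE inf_le_right) : (ModuleCat.free ℚ).obj (V ⊓ U ⟶ U)), ?_⟩
      refine (etaU_apply U (V ⊓ U) (homOfLE inf_le_right) _).trans ?_
      apply Subtype.ext
      funext y
      exact (ht y.1 y.2.1).symm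

lemma exists_hom (U : Opens X) (F : Shv X) (s : F.obj.obj (op U)) :
    ∃ φ : qSh (U : Set X) ⟶ F, φ.hom.app (op U) (one U le_rfl) = s := by
  obtain ⟨g, hg⟩ := (freeP_W U F.obj F.property).2 (freePDesc U F.obj s)
  refine ⟨⟨g⟩, ?_⟩
  have h1 := congrArg (fun m => m.app (op U) (ModuleCat.freeMk (𝟙 U))) hg
  have h2 := congrArg (fun q => g.app (op U) q) (etaU_apply' U U (𝟙 U))
  refine h2.symm.trans (Eq.trans h1 ?_)
  refine (freePDesc_apply U F.obj s U (𝟙 U)).trans ?_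
  simp

lemma hom_ext_one {U : Opens X} {F : Shv X} {a b : qSh (U : Set X) ⟶ F}
    (h : a.hom.app (op U) (one U le_rfl) = b.hom.app (op U) (one U le_rfl)) : a = b :=
  qSh_hom_ext (B := U) le_rfl _ h

/-- Yoneda -/
def yon (U : Opens X) (F : Shv X) : (qSh (U : Set X) ⟶ F) ≃+ F.obj.obj (op U) :=
  AddEquiv.ofBijective
    (AddMonoidHom.mk' (fun φ => φ.hom.app (op U) (one U le_rfl)) (fun a b => rfl))
    ⟨fun _ _ h => hom_ext_one h, fun s => exists_hom U F s⟩

end yon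

section sky
variable {X : TopCat.{0}}

/-- evaluation at a point -/
def evL (Z : Set X) (p : X) (U : Opens X) (h : p ∈ U) : qSub Z U →ₗ[ℚ] ℚ where
  toFun f := f.1 ⟨p, h⟩
  map_add' _ _ := rfl
  map_smul' _ _ := rfl

/-- evaluation as a morphism -/
def evHom (Z : Set X) (p : X) (U : (Opens X)ᵒᵖ) (h : p ∈ U.unop) : (qPre Z).obj U ⟶ ModuleCat.of ℚ ℚ :=
  ModuleCat.ofHom (evL Z p U.unop h)

lemma skyEq (p : X) (U : (Opens X)ᵒᵖ) (h : p ∈ U.unop) :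
    ModuleCat.of ℚ ℚ = (skyscraperPresheaf p (ModuleCat.of ℚ ℚ)).obj U := (if_pos h).symm

/-- terminal values of the skyscraper -/
def skyTerm (p : X) (U : (Opens X)ᵒᵖ) (h : ¬ p ∈ U.unop) :
    IsTerminal ((skyscraperPresheaf p (ModuleCat.of ℚ ℚ)).obj U) :=
  ((if_neg h).symm.ndrec terminalIsTerminal)

/-- the components of `evSky` -/
def evApp (Z : Set X) (p : X) (U : (Opens X)ᵒᵖ) : (qPre Z).obj U ⟶ (skyscraperPresheaf p (ModuleCat.of ℚ ℚ)).obj U :=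
  if h : p ∈ U.unop then evHom Z p U h ≫ eqToHom (skyEq p U h) else (skyTerm p U h).from _

lemma skyMap (p : X) {U V : (Opens X)ᵒᵖ} (i : U ⟶ V) (hU : p ∈ U.unop) (hV : p ∈ V.unop) :
    (skyscraperPresheaf p (ModuleCat.of ℚ ℚ)).map i = eqToHom ((skyEq p U hU).symm.trans (skyEq p V hV)) :=
  dif_pos hV

/-- evaluation as a map to the skyscraper -/
def evSky (Z : Set X) (p : X) : qPre Z ⟶ skyscraperPresheaf p (ModuleCat.of ℚ ℚ) where
  app U := evApp Z p U
  naturality U V i := by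
    by_cases hV : p ∈ V.unop
    · have hU : p ∈ U.unop := leOfHom i.unop hV
      have e1 : evApp Z p U = evHom Z p U hU ≫ eqToHom (skyEq p U hU) := dif_pos hU
      have e2 : evApp Z p V = evHom Z p V hV ≫ eqToHom (skyEq p V hV) := dif_pos hV
      rw [e1, e2, skyMap p i hU hV, Category.assoc, eqToHom_trans, ← Category.assoc]
      rfl
    · exact (skyTerm p V hV).hom_ext ..

lemma evSky_app (Z : Set X) (p : X) (U : (Opens X)ᵒᵖ) (h : p ∈ U.unop) :
    (evSky Z p).app U = evHom Z p U h ≫ eqToHom (skyEq p U h) := dif_pos h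

lemma germ_ev (Z : Set X) (p : X) (U : Opens X) (h : p ∈ U) :
    (qPre Z).germ U p h ≫ StalkSkyscraperPresheafAdjunctionAuxs.fromStalk p (evSky Z p) =
      evHom Z p (op U) h := by
  refine (StalkSkyscraperPresheafAdjunctionAuxs.germ_fromStalk p (evSky Z p) U h).trans ?_
  rw [evSky_app Z p (op U) h, Category.assoc]
  refine (congrArg (fun m => evHom Z p (op U) h ≫ m) (eqToHom_trans (skyEq p (op U) h) (if_pos h))).trans ?_
  rw [eqToHom_refl, Category.comp_id]

lemma stalk_univ_iso (p : X) : IsIso (StalkSkyscraperPresheafAdjunctionAuxs.fromStalk p (evSky Set.univ p)) := by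
  rw [ConcreteCategory.isIso_iff_bijective]
  constructor
  · rw [injective_iff_map_eq_zero]
    intro t ht
    obtain ⟨U, hp, s, rfl⟩ := (qPre (X := X) Set.univ).exists_germ_eq t
    have h1 := congrArg (fun m => m s) (germ_ev Set.univ p U hp)
    have h2 : (evL Set.univ p U hp s) = 0 := h1.symm.trans ht
    obtain ⟨V, hV, hpV, hl⟩ := local_form (show qSub Set.univ U from s) ⟨p, hp⟩
    have h3 : (qPre (X := X) Set.univ).map (homOfLE hV).op s = 0 := by
      apply Subtype.ext
      funext y
      refine (hl y.1 y.2).trans ?_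
      have h2' : (show qSub Set.univ U from s).1 ⟨p, hp⟩ = 0 := h2
      rw [h2', zero_mul]; rfl
    have h4 := (qPre (X := X) Set.univ).germ_res_apply (homOfLE hV) p hpV s
    rw [← h4, h3, map_zero]
  · intro c
    refine ⟨(qPre (X := X) Set.univ).germ ⊤ p trivial (c • one ⊤ le_rfl : qSub Set.univ ⊤), ?_⟩
    have h1 := congrArg (fun m => m (c • one ⊤ le_rfl : qSub Set.univ ⊤)) (germ_ev Set.univ p ⊤ trivial)
    refine h1.trans ?_
    change c * ind Set.univ p = c
    rw [ind_of_mem (Set.mem_univ _), mul_one]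

lemma evSky_iso [T1Space X] (p : X) : IsIso (evSky {p} p) := by
  have : ∀ U, IsIso ((evSky {p} p).app U) := by
    intro U
    by_cases h : p ∈ U.unop
    · rw [evSky_app _ p U h]
      have : IsIso (evHom {p} p U h) := by
        rw [ConcreteCategory.isIso_iff_bijective]
        constructor
        · intro (s : qSub {p} U.unop) (t : qSub {p} U.unop) hst
          apply Subtype.ext
          funext y
          by_cases hy : y.1 = p
          · obtain ⟨y, hyU⟩ := y
            subst hy
            exact hst
          · rw [not_not.1 (fun h0 => hy (qSub_zero s.2 y h0)), not_not.1 (fun h0 => hy (qSub_zero t.2 y h0))]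
        · intro c
          have hi : (fun x : U.unop => ind {p} x) ∈ qSub {p} U.unop := ind_mem (fun x _ hn =>
            isClosed_singleton.isOpen_compl.mem_nhds hn)
          refine ⟨c • (⟨_, hi⟩ : qSub {p} U.unop), ?_⟩
          change c * ind {p} p = c
          rw [ind_of_mem (Set.mem_singleton p), mul_one]
      infer_instance
    · have t : IsTerminal ((skyscraperPresheaf p (ModuleCat.of ℚ ℚ)).obj U) :=
        skyTerm p U h
      have z : IsZero ((qPre {p}).obj U) := by
        have : Subsingleton ((qPre {p}).obj U) := by
          constructor
          intro (s : qSub {p} U.unop) (t : qSub {p} U.unop)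
          apply Subtype.ext
          funext y
          have hy : ¬ y.1 ∈ ({p} : Set X) := fun hy => h (hy ▸ y.2)
          rw [not_not.1 (fun h0 => hy (qSub_zero s.2 y h0)), not_not.1 (fun h0 => hy (qSub_zero t.2 y h0))]
        exact ModuleCat.isZero_of_subsingleton _
      have z2 : IsZero ((skyscraperPresheaf p (ModuleCat.of ℚ ℚ)).obj U) :=
        (isZero_zero _).of_iso (t.uniqueUpToIso HasZeroObject.zeroIsTerminal)
      exact ⟨0, z.eq_of_src _ _, z2.eq_of_src _ _⟩
  exact NatIso.isIso_of_isIso_app _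

/-- the skyscraper as `ℚ_{p}` -/
def skyIso [T1Space X] (p : X) : (qSh {p} : Shv X) ≅ skyscraperSheaf p (ModuleCat.of ℚ ℚ) :=
  (fullyFaithfulSheafToPresheaf _ _).preimageIso (X := qSh {p}) (Y := skyscraperSheaf p (ModuleCat.of ℚ ℚ))
    (@asIso _ _ _ _ (evSky {p} p) (evSky_iso p))

/-- constants to locally constant -/
def constMap : (Functor.const (Opens X)ᵒᵖ).obj (ModuleCat.of ℚ ℚ) ⟶ qPre (X := X) Set.univ where
  app U := ModuleCat.ofHom (LinearMap.toSpanSingleton ℚ (qSub Set.univ U.unop) (one ⊤ le_top))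
  naturality _ _ _ := rfl

lemma constMap_apply (U : Opens X) (c : ℚ) (x : U) :
    (show qSub Set.univ U from (constMap (X := X)).app (op U) c).1 x = c := by
  change c * ind Set.univ x.1 = c
  rw [ind_of_mem (Set.mem_univ _), mul_one]

lemma constMap_W : (Opens.grothendieckTopology X).W (constMap (X := X)) := by
  apply locW
  · intro W x hx (s : ℚ) (t : ℚ) hst
    have := congrArg (fun q : qSub Set.univ W => q.1 ⟨x, hx⟩) hst
    exact (constMap_apply W s ⟨x, hx⟩).symm.trans (Eq.trans this (constMap_apply W t ⟨x, hx⟩))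
  · intro W (t : qSub Set.univ W) x hx
    obtain ⟨V, hV, hxV, ht⟩ := local_form t ⟨x, hx⟩
    refine ⟨V, hV, hxV, t.1 ⟨x, hx⟩, ?_⟩
    apply Subtype.ext
    funext y
    refine (constMap_apply V _ y).trans ?_
    refine Eq.trans ?_ (ht y.1 y.2).symm
    rw [ind_of_mem (Set.mem_univ _), mul_one]

end sky

/-- the constant sheaf as `ℚ_univ` -/
def QGIso : QG ≅ qSh Set.univ :=
  (@asIso _ _ _ _ ((presheafToSheaf (Opens.grothendieckTopology GTop) (ModuleCat.{0} ℚ)).map (constMap (X := GTop)))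
    (((Opens.grothendieckTopology GTop).W_iff (constMap (X := GTop))).1 constMap_W)) ≪≫
    (sheafificationIso (J := Opens.grothendieckTopology GTop) (qSh Set.univ)).symm

/-- the skyscraper sheaf as `ℚ_{1}` -/
def skyQIso : skyQ ≅ qSh {(1 : SU2)} := (skyIso (X := GTop) (1 : SU2)).symm

/-- the adjunction -/
abbrev adjG := stalkSkyscraperSheafAdjunction (C := ModuleCat.{0} ℚ) (X := GTop) (1 : SU2)

/-- target of the unit -/
def TT : ShG := (TopCat.Sheaf.forget (ModuleCat.{0} ℚ) GTop ⋙ TopCat.Presheaf.stalkFunctor _ (1 : SU2) ⋙ skyscraperSheafFunctor (1 : SU2)).obj QG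

/-- the unit -/
def uu : QG ⟶ TT := unitQG

lemma KK_eq : KK = kernel uu := rfl

/-- stalk of QG -/
def stalkQG : (TopCat.Sheaf.forget (ModuleCat.{0} ℚ) GTop ⋙ TopCat.Presheaf.stalkFunctor _ (1 : SU2)).obj QG ≅ ModuleCat.of ℚ ℚ :=
  (TopCat.Sheaf.forget (ModuleCat.{0} ℚ) GTop ⋙ TopCat.Presheaf.stalkFunctor _ (1 : SU2)).mapIso QGIso ≪≫
   @asIso _ _ _ _ _ (stalk_univ_iso (X := GTop) (1 : SU2))

/-- identification of the target of the unit -/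
def TTIso : TT ≅ qSh {(1 : SU2)} :=
  (skyscraperSheafFunctor (X := GTop) (1 : SU2)).mapIso stalkQG ≪≫ skyQIso

lemma uu_ne : uu ≠ 0 := by
  intro h
  have h1 := adjG.left_triangle_components QG
  have h2 : (TopCat.Sheaf.forget (ModuleCat.{0} ℚ) GTop ⋙ TopCat.Presheaf.stalkFunctor _ (1 : SU2)).map uu = 0 := by
    rw [h]; exact Functor.map_zero _ _ _
  have h3 : 𝟙 ((TopCat.Sheaf.forget (ModuleCat.{0} ℚ) GTop ⋙ TopCat.Presheaf.stalkFunctor _ (1 : SU2)).obj QG) = 0 := by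
    rw [← h1]
    exact (congrArg (fun m => m ≫ adjG.counit.app _) h2).trans zero_comp
  have h4 : 𝟙 (ModuleCat.of ℚ ℚ) = 0 := by
    rw [← stalkQG.inv_hom_id, ← Category.id_comp stalkQG.hom, h3]; simp
  have h5 := congrArg (fun m => m (1 : ℚ)) h4
  exact one_ne_zero h5

section
variable {X : TopCat.{0}} [T1Space X]

lemma pt_mem (p : X) (U : Opens X) : (fun x : U => ind {p} x) ∈ qSub {p} U := ind_mem (fun x _ hn =>
            isClosed_singleton.isOpen_compl.mem_nhds hn)

lemma pt_form (p : X) (U : Opens X) (hp : p ∈ U) (s : qSub {p} U) : s = s.1 ⟨p, hp⟩ • ⟨_, pt_mem p U⟩ := by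
  apply Subtype.ext
  funext y
  change s.1 y = s.1 ⟨p, hp⟩ * ind {p} y.1
  by_cases hy : y.1 = p
  · obtain ⟨y, hyU⟩ := y
    subst hy
    rw [ind_of_mem (Set.mem_singleton _), mul_one]
  · rw [not_not.1 (fun h0 => hy (qSub_zero s.2 y h0)), ind_of_notMem (show y.1 ∉ ({p} : Set X) from hy), mul_zero]

/-- endomorphisms of `ℚ_p` -/
lemma pt_end (p : X) : Nonempty ((qSh {p} ⟶ qSh {p}) ≃+ ℚ) := by
  refine ⟨AddEquiv.ofBijective (AddMonoidHom.mk' (fun φ => (show qSub {p} ⊤ from φ.hom.app (op ⊤) (⟨_, pt_mem p ⊤⟩ : qSub {p} ⊤)).1 ⟨p, trivial⟩) (fun a b => rfl)) ⟨?_, ?_⟩⟩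
  · intro a b hab
    refine qSh_hom_ext (B := ⊤) (Set.subset_univ _) (pt_mem p ⊤) ?_
    refine (pt_form p ⊤ trivial _).trans (Eq.trans ?_ (pt_form p ⊤ trivial _).symm)
    exact congrArg (fun c : ℚ => c • (⟨_, pt_mem p ⊤⟩ : qSub {p} ⊤)) hab
  · intro c
    refine ⟨c • 𝟙 _, ?_⟩
    change c * ind {p} p = c
    rw [ind_of_mem (Set.mem_singleton p), mul_one]

lemma pt_openIn (p : X) : OpenIn (X := X) {p}ᶜ Set.univ :=
  ⟨Set.subset_univ _, fun x hx => Filter.mem_of_superset (isClosed_singleton.isOpen_compl.mem_nhds hx) (fun y hy _ => hy)⟩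

lemma epi_of_ne (p : X) (φ : (qSh Set.univ : Shv X) ⟶ qSh {p}) (h : φ ≠ 0) : Epi φ := by
  have hp : Epi (qMap (pt_openIn p).comp₂) := (qSC_shortExact (pt_openIn p) (fun x _ => by simp)).epi_g
  have he : Set.univ \ {p}ᶜ = {p} := by simp
  have hc : QComp (Set.univ : Set X) {p} := by
    have := (pt_openIn p).comp₂
    rwa [he] at this
  have hp' : Epi (qMap hc) := by
    have key : ∀ (Z : Set X) (h1 : QComp Set.univ Z), Z = Set.univ \ {p}ᶜ → Epi (qMap h1) := by
      rintro Z h1 rfl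
      exact hp
    exact key _ _ he.symm
  let c : ℚ := (show qSub {p} ⊤ from φ.hom.app (op ⊤) (one ⊤ le_rfl)).1 ⟨p, trivial⟩
  have e : φ = c • qMap hc := by
    refine hom_ext_one (U := ⊤) ?_
    refine (pt_form p ⊤ trivial _).trans ?_
    refine congrArg (fun q : qSub {p} ⊤ => c • q) (?_ : _ = qMul hc ⊤ (one ⊤ le_rfl))
    apply Subtype.ext
    funext y
    change ind {p} y.1 = ind Set.univ y.1 * ind {p} y.1
    rw [ind_of_mem (Set.mem_univ y.1), one_mul]
  have hc0 : c ≠ 0 := fun h0 => h (by rw [e, h0, zero_smul])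
  constructor
  intro T g k hgk
  rw [e, Linear.smul_comp, Linear.smul_comp] at hgk
  rw [← cancel_epi (qMap hc)]
  have := congrArg (fun m => c⁻¹ • m) hgk
  simpa [smul_smul, inv_mul_cancel₀ hc0] using this

end

instance : Epi uu := by
  have h : Epi (QGIso.inv ≫ uu ≫ TTIso.hom) := by
    apply epi_of_ne (X := GTop) (1 : SU2)
    intro h
    apply uu_ne
    have := congrArg (fun m => QGIso.hom ≫ m ≫ TTIso.inv) h
    simpa using this
  have e : uu = QGIso.hom ≫ (QGIso.inv ≫ uu ≫ TTIso.hom) ≫ TTIso.inv := by simp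
  rw [e]
  infer_instance

/-- the fundamental short exact sequence -/
def kSC : ShortComplex ShG := ShortComplex.mk (kernel.ι uu) uu (kernel.condition uu)

lemma kSC_shortExact : kSC.ShortExact :=
  ShortComplex.ShortExact.mk' (ShortComplex.exact_of_f_is_kernel _ (kernelIsKernel uu))
   (by change Mono (kernel.ι uu); infer_instance) (by change Epi uu; infer_instance)

instance : Injective (ModuleCat.of ℚ ℚ) := by
  rw [← Module.injective_iff_injective_object]
  exact Module.injective_of_isSemisimpleRing _ _

lemma skyQ_injective : Injective skyQ :=
  Injective.injective_of_adjoint adjG (ModuleCat.of ℚ ℚ)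

section api
variable {X : TopCat.{0}}

/-- sections -/
abbrev sec (F : Shv X) (U : Opens X) : Type := F.obj.obj (op U)

/-- restriction -/
def res (F : Shv X) {V U : Opens X} (h : V ≤ U) : sec F U →ₗ[ℚ] sec F V := (F.obj.map (homOfLE h).op).hom

/-- action of a morphism on sections -/
def ap {F G : Shv X} (a : F ⟶ G) (U : Opens X) : sec F U →ₗ[ℚ] sec G U := (a.hom.app (op U)).hom

lemma res_res (F : Shv X) {W V U : Opens X} (h : V ≤ U) (h' : W ≤ V) (s : sec F U) :
    res F h' (res F h s) = res F (h'.trans h) s := by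
  have := congrArg (fun m => m s) (F.obj.map_comp (homOfLE h).op (homOfLE h').op)
  exact this.symm

lemma res_self (F : Shv X) {U : Opens X} (h : U ≤ U) (s : sec F U) : res F h s = s := by
  have := congrArg (fun m => m s) (F.obj.map_id (op U))
  exact this

lemma ap_res {F G : Shv X} (a : F ⟶ G) {V U : Opens X} (h : V ≤ U) (s : sec F U) :
    ap a V (res F h s) = res G h (ap a U s) :=
  congrArg (fun m => m s) (a.hom.naturality (homOfLE h).op)

lemma ap_comp {F G H : Shv X} (a : F ⟶ G) (b : G ⟶ H) (U : Opens X) (s : sec F U) :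
    ap (a ≫ b) U s = ap b U (ap a U s) := rfl

lemma sec_ext (F : Shv X) {ι : Type} (U : ι → Opens X) (V : Opens X) (hU : ∀ i, U i ≤ V) (hc : V ≤ iSup U)
    (s t : sec F V) (h : ∀ i, res F (hU i) s = res F (hU i) t) : s = t :=
  TopCat.Sheaf.eq_of_locally_eq' F U V (fun i => homOfLE (hU i)) hc s t h

lemma sec_glue (F : Shv X) {ι : Type} (U : ι → Opens X) (V : Opens X) (hU : ∀ i, U i ≤ V) (hc : V ≤ iSup U)
    (s : ∀ i, sec F (U i)) (h : ∀ i j, res F inf_le_left (s i) = res F (inf_le_right : U i ⊓ U j ≤ U j) (s j)) :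
    ∃ t : sec F V, ∀ i, res F (hU i) t = s i := by
  obtain ⟨t, ht, -⟩ := TopCat.Sheaf.existsUnique_gluing' F U V (fun i => homOfLE (hU i)) hc s h
  exact ⟨t, ht⟩

lemma sec_glue₂ (F : Shv X) (U V W : Opens X) (hU : U ≤ W) (hV : V ≤ W) (hW : W ≤ U ⊔ V)
    (s : sec F U) (t : sec F V) (h : res F inf_le_left s = res F (inf_le_right : U ⊓ V ≤ V) t) :
    ∃ r : sec F W, res F hU r = s ∧ res F hV r = t := by
  obtain ⟨r, hr⟩ := sec_glue F (fun b : Bool => Bool.rec U V b) W (by rintro (_|_); exacts [hU, hV])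
    (hW.trans (sup_le (le_iSup (fun b : Bool => (Bool.rec U V b : Opens X)) false) (le_iSup (fun b : Bool => (Bool.rec U V b : Opens X)) true)))
    (fun b => Bool.rec s t b) (by
      rintro (_|_) (_|_)
      · rfl
      · exact h
      · have h1 := congrArg (fun q => res F (le_of_eq (inf_comm V U)) q) h
        simp only [res_res] at h1
        exact h1.symm
      · rfl)
  exact ⟨r, hr false, hr true⟩

lemma sec_exact {S : ShortComplex (Shv X)} (hS : S.ShortExact) (U : Opens X) (q : sec S.X₂ U)
    (hq : ap S.g U q = 0) : ∃ f : sec S.X₁ U, ap S.f U f = q := by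
  obtain ⟨φ, hφ⟩ := exists_hom U S.X₂ q
  have h0 : φ ≫ S.g = 0 := by
    apply hom_ext_one
    have : ap S.g U (φ.hom.app (op U) (one U le_rfl)) = 0 := by rw [hφ]; exact hq
    exact this
  have := hS.mono_f
  obtain ⟨k, hk⟩ := KernelFork.IsLimit.lift' hS.exact.fIsKernel φ h0
  refine ⟨k.hom.app (op U) (one U le_rfl), ?_⟩
  rw [← hφ, ← hk]
  rfl

lemma sec_lift_local {S : ShortComplex (Shv X)} (hS : S.ShortExact) (U : Opens X) (t : sec S.X₃ U)
    (x : X) (hx : x ∈ U) : ∃ (V : Opens X) (hV : V ≤ U), x ∈ V ∧ ∃ s : sec S.X₂ V, ap S.g V s = res S.X₃ hV t := by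
  have := hS.epi_g
  exact shv_epi_local S.g U t x hx

lemma open_openIn (U : Opens X) : OpenIn (U : Set X) ((⊤ : Opens X) : Set X) :=
  ⟨Set.subset_univ _, fun _ hx => Filter.mem_of_superset (U.isOpen.mem_nhds hx) (fun _ hy _ => hy)⟩

lemma flasque (I : Shv X) [Injective I] (U : Opens X) (s : sec I U) : ∃ t : sec I ⊤, res I le_top t = s := by
  obtain ⟨φ, hφ⟩ := exists_hom U I s
  have : Mono (qMap (open_openIn U).comp₁) :=
    (qSC_shortExact (open_openIn U) (fun x _ => by simp)).mono_f
  let g := Injective.factorThru φ (qMap (open_openIn U).comp₁)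
  have hg : qMap (open_openIn U).comp₁ ≫ g = φ := Injective.comp_factorThru _ _
  refine ⟨ap g ⊤ (one ⊤ le_rfl), ?_⟩
  refine (ap_res g le_top (one ⊤ le_rfl)).symm.trans ?_
  rw [← hφ, ← hg]
  change ap g U _ = ap g U _
  congr 1
  apply Subtype.ext
  funext y
  change ind _ y.1 = ind _ y.1 * ind _ y.1
  rw [ind_of_mem (show y.1 ∈ (U : Set X) from y.2), one_mul]

end api

section gluing
variable {X : TopCat.{0}} {S : ShortComplex (Shv X)}

/-- sections over `U` extend globally -/
def Ex (F : Shv X) (U : Opens X) : Prop := ∀ s : sec F U, ∃ t : sec F ⊤, res F le_top t = s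

/-- the section `s` lifts over `V` -/
def Lft (S : ShortComplex (Shv X)) {B : Opens X} (s : sec S.X₃ B) (V : Opens X) : Prop :=
  ∃ h : V ≤ B, ∃ t : sec S.X₂ V, ap S.g V t = res S.X₃ h s

lemma Lft.mono {B : Opens X} {s : sec S.X₃ B} {V V' : Opens X} (h : V' ≤ V) (hV : Lft S s V) : Lft S s V' := by
  obtain ⟨h1, t, ht⟩ := hV
  exact ⟨h.trans h1, res _ h t, by rw [ap_res, ht, res_res]⟩

lemma correct (hS : S.ShortExact) {B : Opens X} {s : sec S.X₃ B} {V V' W : Opens X} (hW : Ex S.X₁ W)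
    (hWV : W ≤ V) (hWV' : W ≤ V') (hV : V ≤ B) (hV' : V' ≤ B)
    (t : sec S.X₂ V) (ht : ap S.g V t = res S.X₃ hV s)
    (t' : sec S.X₂ V') (ht' : ap S.g V' t' = res S.X₃ hV' s) :
    ∃ t'' : sec S.X₂ V', ap S.g V' t'' = res S.X₃ hV' s ∧ res S.X₂ hWV' t'' = res S.X₂ hWV t := by
  obtain ⟨f, hf⟩ := sec_exact hS W (res S.X₂ hWV t - res S.X₂ hWV' t') (by
    rw [map_sub, ap_res, ap_res, ht, ht', res_res, res_res, sub_self])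
  obtain ⟨φ, hφ⟩ := hW f
  refine ⟨t' + ap S.f V' (res S.X₁ le_top φ), ?_, ?_⟩
  · rw [map_add, ht', ← ap_comp, S.zero]
    exact add_zero _
  · rw [map_add, ← ap_res, res_res, hφ, hf]
    abel

lemma Lft.glue (hS : S.ShortExact) {B : Opens X} {s : sec S.X₃ B} {V V' W : Opens X}
    (hi : Ex S.X₁ (V ⊓ V')) (h : Lft S s V) (h' : Lft S s V') (h1 : V ≤ W) (h2 : V' ≤ W) (h3 : W ≤ V ⊔ V') :
    Lft S s W := by
  obtain ⟨hV, t, ht⟩ := h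
  obtain ⟨hV', t', ht'⟩ := h'
  obtain ⟨t'', h4, h5⟩ := correct hS hi inf_le_left inf_le_right hV hV' t ht t' ht'
  obtain ⟨r, hr1, hr2⟩ := sec_glue₂ S.X₂ V V' W h1 h2 h3 t t'' h5.symm
  refine ⟨h3.trans (sup_le hV hV'), r, ?_⟩
  refine sec_ext S.X₃ (fun b : Bool => (Bool.rec V V' b : Opens X)) W (by rintro (_|_); exacts [h1, h2])
    (h3.trans (sup_le (le_iSup (fun b : Bool => (Bool.rec V V' b : Opens X)) false) (le_iSup (fun b : Bool => (Bool.rec V V' b : Opens X)) true))) _ _ ?_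
  rintro (_|_)
  · change res S.X₃ h1 _ = res S.X₃ h1 _
    rw [← ap_res, hr1, ht, res_res]
  · change res S.X₃ h2 _ = res S.X₃ h2 _
    rw [← ap_res, hr2, h4, res_res]

lemma exhaust (hS : S.ShortExact) {B : Opens X} {s : sec S.X₃ B} (U : ℕ → Opens X) (hU : Monotone U)
    (hE : ∀ k, Ex S.X₁ (U k)) (hL : ∀ k, Lft S s (U k)) (hc : B ≤ iSup U) : Lft S s B := by
  have hB : ∀ k, U k ≤ B := fun k => (hL k).1
  have step : ∀ k (t : {t : sec S.X₂ (U k) // ap S.g _ t = res S.X₃ (hB k) s}),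
      ∃ t' : {t : sec S.X₂ (U (k+1)) // ap S.g _ t = res S.X₃ (hB (k+1)) s},
        res S.X₂ (hU (Nat.le_succ k)) t'.1 = t.1 := by
    rintro k ⟨t, ht⟩
    obtain ⟨_, t', ht'⟩ := hL (k+1)
    obtain ⟨t'', h1, h2⟩ := correct hS (hE k) le_rfl (hU (Nat.le_succ k)) (hB k) (hB (k+1)) t ht t' ht'
    exact ⟨⟨t'', h1⟩, by rw [h2, res_self]⟩
  choose nx hnx using step
  have h0 : Nonempty {t : sec S.X₂ (U 0) // ap S.g _ t = res S.X₃ (hB 0) s} := by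
    obtain ⟨_, t, ht⟩ := hL 0
    exact ⟨⟨t, ht⟩⟩
  let T : ∀ k, {t : sec S.X₂ (U k) // ap S.g _ t = res S.X₃ (hB k) s} :=
    fun k => Nat.rec h0.some (fun k t => nx k t) k
  have hT : ∀ k, res S.X₂ (hU (Nat.le_succ k)) (T (k+1)).1 = (T k).1 := fun k => hnx k (T k)
  have hT2 : ∀ j k (h : j ≤ k), res S.X₂ (hU h) (T k).1 = (T j).1 := by
    intro j k h
    induction k, h using Nat.le_induction with
    | base => rw [res_self]
    | succ k h ih => rw [← ih, ← hT k, res_res]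
  obtain ⟨r, hr⟩ := sec_glue S.X₂ U B hB hc (fun k => (T k).1) (by
    intro i j
    rcases le_total i j with h | h
    · rw [← hT2 i j h, res_res]
    · rw [← hT2 j i h, res_res])
  refine ⟨le_rfl, r, ?_⟩
  refine sec_ext S.X₃ U B hB hc _ _ (fun k => ?_)
  rw [← ap_res, hr, (T k).2, res_res]

end gluing

section boxes
variable {X : TopCat.{0}} {ψ : (Fin 3 → ℝ) → X} (hψ : IsOpenEmbedding ψ)

/-- open boxes -/
def box (l u : Fin 3 → ℝ) : Opens X :=
  ⟨Set.image ψ (Set.univ.pi fun i => Set.Ioo (l i) (u i)),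
    hψ.isOpenMap _ (isOpen_set_pi Set.finite_univ (fun _ _ => isOpen_Ioo))⟩

lemma mem_box {l u v : Fin 3 → ℝ} : ψ v ∈ box hψ l u ↔ ∀ i, l i < v i ∧ v i < u i := by
  change ψ v ∈ Set.image ψ _ ↔ _
  rw [hψ.injective.mem_set_image]
  simp

lemma box_le_iff {l u : Fin 3 → ℝ} {V : Opens X} :
    box hψ l u ≤ V ↔ ∀ v, (∀ i, l i < v i ∧ v i < u i) → ψ v ∈ V := by
  constructor
  · intro h v hv
    exact h ((mem_box hψ).2 hv)
  · rintro h _ ⟨v, hv, rfl⟩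
    exact h v (by simpa using hv)

lemma box_mono {l u l' u' : Fin 3 → ℝ} (h1 : ∀ i, l i ≤ l' i) (h2 : ∀ i, u' i ≤ u i) :
    box hψ l' u' ≤ box hψ l u := by
  rw [box_le_iff]
  intro v hv
  rw [mem_box]
  exact fun i => ⟨(h1 i).trans_lt (hv i).1, (hv i).2.trans_le (h2 i)⟩

lemma box_inf (l u l' u' : Fin 3 → ℝ) : box hψ l u ⊓ box hψ l' u' =
    box hψ (fun i => max (l i) (l' i)) (fun i => min (u i) (u' i)) := by
  apply le_antisymm
  · rintro _ ⟨⟨v, hv, rfl⟩, h2⟩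
    rw [SetLike.mem_coe, mem_box] at h2
    rw [mem_box]
    intro i
    have h1 : v i ∈ Set.Ioo (l i) (u i) := hv i trivial
    exact ⟨max_lt h1.1 (h2 i).1, lt_min h1.2 (h2 i).2⟩
  · exact le_inf (box_mono hψ (fun i => le_max_left _ _) (fun i => min_le_left _ _))
      (box_mono hψ (fun i => le_max_right _ _) (fun i => min_le_right _ _))

lemma exists_box (V : Opens X) (v : Fin 3 → ℝ) (hv : ψ v ∈ V) :
    ∃ ε > 0, box hψ (fun i => v i - ε) (fun i => v i + ε) ≤ V := by
  have h1 : ψ ⁻¹' V ∈ 𝓝 v := hψ.continuous.continuousAt.preimage_mem_nhds (V.isOpen.mem_nhds hv)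
  obtain ⟨ε, hε, h2⟩ := Metric.mem_nhds_iff.1 h1
  refine ⟨ε, hε, (box_le_iff hψ).2 (fun w hw => h2 ?_)⟩
  rw [Metric.mem_ball, dist_pi_lt_iff hε]
  intro i
  rw [Real.dist_eq, abs_lt]
  constructor <;> linarith [(hw i).1, (hw i).2]

/-- extension property for all boxes -/
def BoxEx (F : Shv X) : Prop := ∀ l u, Ex F (box hψ l u)

variable {S : ShortComplex (Shv X)}

/-- lifting near a closed box -/
def pp (S : ShortComplex (Shv X)) {B : Opens X} (s : sec S.X₃ B) (l u : Fin 3 → ℝ) : Prop :=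
  ∃ ε > 0, Lft S s (box hψ (fun i => l i - ε) (fun i => u i + ε))

lemma pp_step (hS : S.ShortExact) (hF : BoxEx hψ S.X₁) {B : Opens X} (s : sec S.X₃ B)
    (l u : Fin 3 → ℝ) (i : Fin 3) (hi : l i ≤ u i)
    (h : ∀ t ∈ Set.Icc (l i) (u i), pp hψ S s (Function.update l i t) (Function.update u i t)) :
    pp hψ S s l u := by
  have key : Set.Icc (l i) (u i) ⊆ {t | pp hψ S s l (Function.update u i t)} := by
    apply IsClosed.Icc_subset_of_forall_exists_gt
    · apply isClosed_of_closure_subset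
      intro t ht
      have htI : t ∈ Set.Icc (l i) (u i) := by
        have := closure_mono Set.inter_subset_right ht
        rwa [isClosed_Icc.closure_eq] at this
      refine ⟨?_, htI⟩
      obtain ⟨ε, hε, hL⟩ := h t htI
      obtain ⟨t', ⟨ht'S, ht'I⟩, hd⟩ := Metric.mem_closure_iff.1 ht ε hε
      obtain ⟨ε', hε', hL'⟩ := ht'S
      rcases le_or_gt t t' with hle | hlt
      · refine ⟨ε', hε', hL'.mono (box_mono hψ (fun j => le_rfl) (fun j => ?_))⟩
        by_cases hj : j = i
        · subst hj; simpa using hle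
        · simp [Function.update_of_ne hj]
      · rw [Real.dist_eq, abs_lt] at hd
        set δ := min ε' (ε - (t - t')) with hδ
        have hδ0 : 0 < δ := lt_min hε' (by linarith)
        have hδ1 : δ ≤ ε' := min_le_left _ _
        have hδ2 : δ ≤ ε - (t - t') := min_le_right _ _
        refine ⟨δ, hδ0, ?_⟩
        have hA : Lft S s (box hψ (fun j => l j - δ) (fun j => Function.update u i t' j + δ)) :=
          hL'.mono (box_mono hψ (fun j => by linarith) (fun j => by linarith))
        have hC : Lft S s (box hψ (fun j => Function.update l i t' j - δ) (fun j => Function.update u i t j + δ)) := by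
          refine hL.mono (box_mono hψ (fun j => ?_) (fun j => ?_))
          · by_cases hj : j = i
            · subst hj; simp; linarith
            · simp [Function.update_of_ne hj]; linarith
          · linarith
        refine Lft.glue hS ?_ hA hC ?_ ?_ ?_
        · rw [box_inf]; exact hF _ _
        · refine box_mono hψ (fun j => le_rfl) (fun j => ?_)
          by_cases hj : j = i
          · subst hj; simp; linarith
          · simp [Function.update_of_ne hj]
        · refine box_mono hψ (fun j => ?_) (fun j => le_rfl)
          by_cases hj : j = i
          · subst hj; simp; linarith [ht'I.1]
          · simp [Function.update_of_ne hj]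
        · rw [box_le_iff]
          intro v hv
          rcases lt_or_ge (v i) (t' + δ) with hv1 | hv1
          · left
            refine (mem_box hψ).2 (fun j => ⟨(hv j).1, ?_⟩)
            by_cases hj : j = i
            · subst hj; simpa using hv1
            · have := (hv j).2
              simpa [Function.update_of_ne hj] using this
          · right
            refine (mem_box hψ).2 (fun j => ⟨?_, (hv j).2⟩)
            by_cases hj : j = i
            · subst hj; simp; linarith
            · have := (hv j).1
              simpa [Function.update_of_ne hj] using this
    · have := h (l i) ⟨le_rfl, hi⟩
      rwa [Function.update_eq_self] at this
    · rintro t ⟨⟨ε, hε, hL⟩, htI⟩ y hy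
      have hy' : t < y := hy
      refine ⟨min y (t + ε / 2), ⟨ε / 2, by linarith, hL.mono (box_mono hψ (fun j => by linarith) (fun j => ?_))⟩,
        lt_min hy' (by linarith), min_le_left _ _⟩
      by_cases hj : j = i
      · subst hj; simp only [Function.update_self]; linarith [min_le_right y (t + ε / 2)]
      · simp only [Function.update_of_ne hj]; linarith
  have := key ⟨hi, le_rfl⟩
  rwa [Set.mem_ofPred_eq, Function.update_eq_self] at this

lemma pp_all (hS : S.ShortExact) (hF : BoxEx hψ S.X₁) (l₀ u₀ : Fin 3 → ℝ) (s : sec S.X₃ (box hψ l₀ u₀))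
    (A : Finset (Fin 3)) : ∀ l u : Fin 3 → ℝ, (∀ j, l₀ j < l j ∧ l j ≤ u j ∧ u j < u₀ j) →
      (∀ j ∉ A, l j = u j) → pp hψ S s l u := by
  induction A using Finset.induction_on with
  | empty =>
    intro l u h1 h2
    have hlu : l = u := funext (fun j => h2 j (by simp))
    subst hlu
    obtain ⟨V, hV, hxV, t, ht⟩ := sec_lift_local hS (box hψ l₀ u₀) s (ψ l) ((mem_box hψ).2 (fun j => ⟨(h1 j).1, (h1 j).2.2⟩))
    obtain ⟨ε, hε, hb⟩ := exists_box hψ V l hxV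
    exact ⟨ε, hε, Lft.mono hb ⟨hV, t, ht⟩⟩
  | insert i A hiA ih =>
    intro l u h1 h2
    refine pp_step hψ hS hF s l u i (h1 i).2.1 (fun t ht => ih _ _ (fun j => ?_) (fun j hj => ?_))
    · by_cases hj : j = i
      · subst hj
        simp only [Function.update_self]
        exact ⟨(h1 j).1.trans_le ht.1, le_rfl, ht.2.trans_lt (h1 j).2.2⟩
      · simp only [Function.update_of_ne hj]
        exact h1 j
    · by_cases hj' : j = i
      · subst hj'; simp
      · simp only [Function.update_of_ne hj']
        exact h2 j (by simp [hj, hj'])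

lemma lift_box (hS : S.ShortExact) (hF : BoxEx hψ S.X₁) (l u : Fin 3 → ℝ) (s : sec S.X₃ (box hψ l u)) :
    ∃ t : sec S.X₂ (box hψ l u), ap S.g _ t = s := by
  have hd : ∀ k : ℕ, (0 : ℝ) < 1 / ((k : ℝ) + 1) := fun k => by positivity
  let U : ℕ → Opens X := fun k => box hψ (fun i => l i + 1 / ((k : ℝ) + 1)) (fun i => u i - 1 / ((k : ℝ) + 1))
  have main : Lft S s (box hψ l u) := by
    refine exhaust hS U ?_ (fun k => hF _ _) ?_ ?_
    · intro j k hjk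
      have : 1 / ((k : ℝ) + 1) ≤ 1 / ((j : ℝ) + 1) := by
        apply one_div_le_one_div_of_le (by positivity)
        have : (j : ℝ) ≤ k := by exact_mod_cast hjk
        linarith
      exact box_mono hψ (fun i => by linarith) (fun i => by linarith)
    · intro k
      have hle : U k ≤ box hψ l u := box_mono hψ (fun i => by linarith [hd k]) (fun i => by linarith [hd k])
      by_cases h : ∀ i, l i + 1 / ((k : ℝ) + 1) ≤ u i - 1 / ((k : ℝ) + 1)
      · obtain ⟨ε, hε, hL⟩ := pp_all hψ hS hF l u s Finset.univ (fun i => l i + 1 / ((k : ℝ) + 1))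
          (fun i => u i - 1 / ((k : ℝ) + 1)) (fun j => ⟨by linarith [hd k], h j, by linarith [hd k]⟩) (by simp)
        exact hL.mono (box_mono hψ (fun i => by linarith) (fun i => by linarith))
      · push Not at h
        obtain ⟨i, hi⟩ := h
        refine ⟨hle, 0, ?_⟩
        refine sec_ext S.X₃ (fun e : Empty => e.elim) (U k) (fun e => e.elim) ?_ _ _ (fun e => e.elim)
        refine (box_le_iff hψ).2 (fun v hv => ?_)
        have := hv i
        linarith [this.1, this.2]
    · refine (box_le_iff hψ).2 (fun v hv => ?_)
      have hev : ∀ᶠ k : ℕ in Filter.atTop, ∀ i, l i + 1 / ((k : ℝ) + 1) < v i ∧ v i < u i - 1 / ((k : ℝ) + 1) := by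
        rw [Filter.eventually_all]
        intro i
        have ht := tendsto_one_div_add_atTop_nhds_zero_nat (𝕜 := ℝ)
        have h1 := ht.eventually (gt_mem_nhds (show (0:ℝ) < v i - l i by linarith [(hv i).1]))
        have h2 := ht.eventually (gt_mem_nhds (show (0:ℝ) < u i - v i by linarith [(hv i).2]))
        filter_upwards [h1, h2] with k h3 h4
        constructor <;> linarith
      obtain ⟨k, hk⟩ := hev.exists
      rw [Opens.mem_iSup]
      exact ⟨k, (mem_box hψ).2 hk⟩
  obtain ⟨h, t, ht⟩ := main
  exact ⟨t, by rw [ht, res_self]⟩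

lemma BoxEx.quot (hS : S.ShortExact) [Injective S.X₂] (hF : BoxEx hψ S.X₁) : BoxEx hψ S.X₃ := by
  intro l u s
  obtain ⟨t, rfl⟩ := lift_box hψ hS hF l u s
  obtain ⟨r, rfl⟩ := flasque S.X₂ _ t
  exact ⟨ap S.g ⊤ r, by rw [ap_res]⟩

end boxes

section homalg
open Abelian
universe w v u
variable {C : Type u} [Category.{v} C] [Abelian C] [HasExt.{w} C]

/-- all Ext groups vanish -/
def Van (S Y : C) : Prop := ∀ n, Subsingleton (Ext S Y n)

/-- Ext groups concentrated in one degree -/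
def Shp (d : ℕ) (S Y : C) : Prop := Nonempty (Ext S Y d ≃+ ℚ) ∧ ∀ n, n ≠ d → Subsingleton (Ext S Y n)

variable {S : ShortComplex C} (hS : S.ShortExact) {Y : C}
include hS

lemma van_two (h1 : Van S.X₁ Y) (h2 : Van S.X₂ Y) : Van S.X₃ Y := by
  intro n
  refine subsingleton_of_forall_eq 0 (fun x => ?_)
  have h0 : (Ext.mk₀ S.g).comp x (zero_add n) = 0 := (h2 n).elim _ _
  rcases n with _ | n
  · have := hS.epi_g
    apply Ext.precomp_mk₀_injective_of_epi Y S.g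
    exact (h2 0).elim _ _
  · obtain ⟨y, hy⟩ := Ext.contravariant_sequence_exact₃ hS Y x h0 (n₀ := n) (by omega)
    rw [← hy, (h1 n).elim y 0, Ext.comp_zero]

lemma van_three (h : ∀ n, Function.Bijective (fun x : Ext S.X₂ Y n => (Ext.mk₀ S.f).comp x (zero_add n))) :
    Van S.X₃ Y := by
  intro n
  refine subsingleton_of_forall_eq 0 (fun x => ?_)
  have h0 : (Ext.mk₀ S.g).comp x (zero_add n) = 0 := by
    apply (h n).1
    dsimp only
    rw [Ext.mk₀_comp_mk₀_assoc, S.zero, Ext.mk₀_zero, Ext.zero_comp, Ext.comp_zero]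
  rcases n with _ | n
  · have := hS.epi_g
    apply Ext.precomp_mk₀_injective_of_epi Y S.g
    change (Ext.mk₀ S.g).comp x (zero_add 0) = (Ext.mk₀ S.g).comp 0 (zero_add 0)
    rw [h0, Ext.comp_zero]
  · obtain ⟨y, hy⟩ := Ext.contravariant_sequence_exact₃ hS Y x h0 (n₀ := n) (by omega)
    obtain ⟨z, hz⟩ := (h n).2 y
    rw [← hy, ← hz]
    exact hS.extClass_comp_assoc _

lemma shp_succ {d : ℕ} (h1 : Shp d S.X₁ Y) (h2 : Van S.X₂ Y) : Shp (d + 1) S.X₃ Y := by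
  have hb : ∀ n, Function.Bijective (hS.extClass.precomp Y (add_comm 1 n) : Ext S.X₁ Y n →+ Ext S.X₃ Y (n+1)) := by
    intro n
    constructor
    · rw [injective_iff_map_eq_zero]
      intro x hx
      obtain ⟨y, hy⟩ := Ext.contravariant_sequence_exact₁ hS Y x (add_comm 1 n) hx
      rw [← hy, (h2 n).elim y 0, Ext.comp_zero]
    · intro x
      exact Ext.contravariant_sequence_exact₃ hS Y x ((h2 _).elim _ _) (add_comm 1 n)
  have e := fun n => AddEquiv.ofBijective _ (hb n)
  refine ⟨⟨(e d).symm.trans h1.1.some⟩, fun n hn => ?_⟩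
  rcases n with _ | n
  · refine subsingleton_of_forall_eq 0 (fun x => ?_)
    have := hS.epi_g
    apply Ext.precomp_mk₀_injective_of_epi Y S.g
    exact (h2 0).elim _ _
  · have := h1.2 n (by omega)
    exact (e n).symm.toEquiv.subsingleton

end homalg

section boxes
open Abelian
variable {X : TopCat.{0}} {ψ : (Fin 3 → ℝ) → X} (hψ : IsOpenEmbedding ψ)

lemma box_preconnected (l u : Fin 3 → ℝ) : IsPreconnected (box hψ l u : Set X) :=
  (convex_pi (fun i _ => convex_Ioo (l i) (u i))).isPreconnected.image _ hψ.continuous.continuousOn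

lemma const_on {U : Opens X} (hU : IsPreconnected (U : Set X)) (f : qSub Set.univ U) (x y : U) :
    f.1 x = f.1 y := by
  have : PreconnectedSpace U := Subtype.preconnectedSpace hU
  have h : IsLocallyConstant f.1 := by
    rw [IsLocallyConstant.iff_eventually_eq]
    intro x
    filter_upwards [f.2 x] with y hy
    rw [hy, ind_of_mem (Set.mem_univ _), mul_one]
  exact h.apply_eq_of_preconnectedSpace x y

lemma cst_mem (U : Opens X) (c : ℚ) : (fun _ => c) ∈ qSub Set.univ U := by
  intro x
  filter_upwards with y
  rw [ind_of_mem (Set.mem_univ _), mul_one]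

/-- constant sections -/
def cst (U : Opens X) (c : ℚ) : qSub Set.univ U := ⟨_, cst_mem U c⟩

lemma const_form {U : Opens X} (hU : IsPreconnected (U : Set X)) (f : qSub Set.univ U) : ∃ c, f = cst U c := by
  by_cases h : Nonempty U
  · obtain ⟨x⟩ := h
    exact ⟨f.1 x, Subtype.ext (funext fun y => const_on hU f y x)⟩
  · exact ⟨0, Subtype.ext (funext fun y => absurd ⟨y⟩ h)⟩

lemma boxEx_univ : BoxEx hψ (qSh (Set.univ : Set X)) := by
  intro l u s
  obtain ⟨c, hc⟩ := const_form (box_preconnected hψ l u) s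
  exact ⟨cst ⊤ c, hc.symm⟩

universe w
variable [HasExt.{w} (Shv X)]

lemma box_ext_succ (l u : Fin 3 → ℝ) (n : ℕ) : ∀ (F : Shv X), BoxEx hψ F →
    Subsingleton (Ext (qSh (box hψ l u : Set X)) F (n + 1)) := by
  induction n with
  | zero =>
    intro F hF
    let S : ShortComplex (Shv X) := ShortComplex.mk (Injective.ι F) (cokernel.π (Injective.ι F)) (cokernel.condition _)
    have hS : S.ShortExact := { exact := ShortComplex.exact_cokernel _ }
    refine subsingleton_of_forall_eq 0 (fun x => ?_)
    obtain ⟨y, hy⟩ := Ext.covariant_sequence_exact₁ _ hS x (Ext.eq_zero_of_injective (I := Injective.under F) _) (n₀ := 0) rfl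
    obtain ⟨φ, rfl⟩ := Ext.mk₀_bijective _ _ |>.2 y
    obtain ⟨t, ht⟩ := lift_box hψ hS hF l u (ap φ (box hψ l u) (one (box hψ l u) le_rfl))
    obtain ⟨χ, hχ⟩ := exists_hom (box hψ l u) S.X₂ t
    have e : φ = χ ≫ S.g := by
      apply hom_ext_one
      refine ht.symm.trans ?_
      exact congrArg (ap S.g _) hχ.symm
    rw [← hy, e, ← Ext.mk₀_comp_mk₀, Ext.comp_assoc_of_second_deg_zero, hS.comp_extClass, Ext.comp_zero]
  | succ n ih =>
    intro F hF
    let S : ShortComplex (Shv X) := ShortComplex.mk (Injective.ι F) (cokernel.π (Injective.ι F)) (cokernel.condition _)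
    have hS : S.ShortExact := { exact := ShortComplex.exact_cokernel _ }
    have : Injective S.X₂ := inferInstanceAs (Injective (Injective.under F))
    refine subsingleton_of_forall_eq 0 (fun x => ?_)
    obtain ⟨y, hy⟩ := Ext.covariant_sequence_exact₁ _ hS x (Ext.eq_zero_of_injective (I := Injective.under F) _) (n₀ := n + 1) rfl
    have h3 := ih S.X₃ (BoxEx.quot hψ hS hF)
    rw [← hy, h3.elim y 0, Ext.zero_comp]

lemma box_shp (l u : Fin 3 → ℝ) (h : ∀ i, l i < u i) :
    Shp 0 (qSh (box hψ l u : Set X)) (qSh (Set.univ : Set X)) := by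
  constructor
  · refine ⟨Ext.addEquiv₀.trans ((yon _ _).trans ?_)⟩
    have x0 : box hψ l u :=
      ⟨ψ (fun i => (l i + u i) / 2), (mem_box hψ).2 (fun i => ⟨by linarith [h i], by linarith [h i]⟩)⟩
    refine AddEquiv.ofBijective (AddMonoidHom.mk' (fun f : qSub Set.univ (box hψ l u) => f.1 x0) (fun a b => rfl)) ⟨?_, ?_⟩
    · intro f g hfg
      obtain ⟨c, rfl⟩ := const_form (box_preconnected hψ l u) f
      obtain ⟨d, rfl⟩ := const_form (box_preconnected hψ l u) g
      have : c = d := hfg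
      rw [this]
    · intro c
      exact ⟨cst _ c, rfl⟩
  · intro n hn
    obtain ⟨n, rfl⟩ := Nat.exists_eq_succ_of_ne_zero hn
    exact box_ext_succ hψ l u n _ (boxEx_univ hψ)

lemma box_restr (l u l' u' : Fin 3 → ℝ) (h : ∀ i, l' i < u' i)
    (ho : OpenIn (box hψ l' u' : Set X) (box hψ l u : Set X)) (n : ℕ) :
    Function.Bijective (fun x : Ext (qSh (box hψ l u : Set X)) (qSh (Set.univ : Set X)) n =>
      (Ext.mk₀ (qMap ho.comp₁)).comp x (zero_add n)) := by
  rcases n with _ | n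
  · have x0 : box hψ l' u' :=
      ⟨ψ (fun i => (l' i + u' i) / 2), (mem_box hψ).2 (fun i => ⟨by linarith [h i], by linarith [h i]⟩)⟩
    have hle : box hψ l' u' ≤ box hψ l u := ho.1
    have key : ∀ φ : qSh (box hψ l u : Set X) ⟶ qSh (Set.univ : Set X),
        ap (qMap ho.comp₁ ≫ φ) (box hψ l' u') (one (box hψ l' u') le_rfl) = res _ hle (ap φ (box hψ l u) (one (box hψ l u) le_rfl)) := by
      intro φ
      refine (ap_comp _ _ _ _).trans (Eq.trans ?_ (ap_res _ _ _))
      refine congrArg (ap φ (box hψ l' u')) ?_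
      apply Subtype.ext
      refine (qMul_val_of_subset ho.comp₁ ho.1 _).trans ?_
      funext x
      exact (ind_of_mem x.2).trans (ind_of_mem (hle x.2)).symm
    constructor
    · intro x y hxy
      obtain ⟨φ, rfl⟩ := Ext.mk₀_bijective _ _ |>.2 x
      obtain ⟨χ, rfl⟩ := Ext.mk₀_bijective _ _ |>.2 y
      simp only [Ext.mk₀_comp_mk₀] at hxy
      have h1 := (Ext.mk₀_bijective _ _).1 hxy
      have h2 := (key φ).symm.trans ((congrArg (fun m => ap m (box hψ l' u') (one (box hψ l' u') le_rfl)) h1).trans (key χ))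
      congr 1
      apply hom_ext_one
      change ap φ _ _ = ap χ _ _
      obtain ⟨c, hc⟩ := const_form (box_preconnected hψ l u) (ap φ (box hψ l u) (one (box hψ l u) le_rfl))
      obtain ⟨d, hd⟩ := const_form (box_preconnected hψ l u) (ap χ (box hψ l u) (one (box hψ l u) le_rfl))
      replace h2 := ((congrArg (res _ hle) hc).symm.trans h2).trans (congrArg (res _ hle) hd)
      have : c = d := congrArg (fun q : qSub Set.univ (box hψ l' u') => q.1 x0) h2
      exact hc.trans (by rw [this]; exact hd.symm)
    · intro x
      obtain ⟨φ, rfl⟩ := Ext.mk₀_bijective _ _ |>.2 x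
      obtain ⟨c, hc⟩ := const_form (box_preconnected hψ l' u') (ap φ (box hψ l' u') (one (box hψ l' u') le_rfl))
      obtain ⟨χ, hχ⟩ := exists_hom (box hψ l u) (qSh (Set.univ : Set X)) (cst _ c)
      refine ⟨Ext.mk₀ χ, ?_⟩
      simp only [Ext.mk₀_comp_mk₀]
      congr 1
      apply hom_ext_one
      refine (key χ).trans ?_
      refine (congrArg (res _ hle) hχ).trans ?_
      exact hc.symm
  · have i1 := box_ext_succ hψ l u n _ (boxEx_univ hψ)
    have i2 := box_ext_succ hψ l' u' n _ (boxEx_univ hψ)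
    exact ⟨fun _ _ _ => i1.elim _ _, fun x => ⟨0, i2.elim _ _⟩⟩

end boxes

section cells
open Abelian Function
universe w
variable {X : TopCat.{0}} [HasExt.{w} (Shv X)]

lemma van_diff {Z' Z : Set X} (h : OpenIn Z' Z) (hZ : LC Z) {Y : Shv X} (h1 : Van (qSh Z') Y) (h2 : Van (qSh Z) Y) :
    Van (qSh (Z \ Z')) Y := van_two (qSC_shortExact h hZ) h1 h2

lemma shp_diff {Z' Z : Set X} (h : OpenIn Z' Z) (hZ : LC Z) {Y : Shv X} {d : ℕ} (h1 : Shp d (qSh Z') Y)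
    (h2 : Van (qSh Z) Y) : Shp (d + 1) (qSh (Z \ Z')) Y := shp_succ (qSC_shortExact h hZ) h1 h2

variable {ψ : (Fin 3 → ℝ) → X} (hψ : IsOpenEmbedding ψ)

/-- cells -/
def cell (ψ : (Fin 3 → ℝ) → X) (A : Fin 3 → Set ℝ) : Set X := Set.image ψ (Set.univ.pi A)

omit [HasExt.{w} (Shv X)]
include hψ

lemma mem_cell {A : Fin 3 → Set ℝ} {v : Fin 3 → ℝ} : ψ v ∈ cell ψ A ↔ ∀ i, v i ∈ A i := by
  unfold cell
  rw [hψ.injective.mem_set_image]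
  simp

lemma cell_LC {A : Fin 3 → Set ℝ} (hA : ∀ i, IsLocallyClosed (A i)) : LC (cell ψ A) := by
  choose U C hU hC hUC using hA
  rintro _ ⟨v, hv, rfl⟩
  rw [← hψ.map_nhds_eq, Filter.eventually_map]
  have h1 : ∀ᶠ w in 𝓝 v, ∀ i, w i ∈ U i := by
    rw [Filter.eventually_all]
    intro i
    apply (continuous_apply i).continuousAt.eventually
    have : v i ∈ A i := hv i trivial
    rw [hUC] at this
    exact (hU i).mem_nhds this.1
  filter_upwards [h1] with w hw hn
  rw [mem_cell hψ] at hn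
  push Not at hn
  obtain ⟨i, hi⟩ := hn
  have h2 : w i ∈ (C i)ᶜ := fun h => hi (by rw [hUC]; exact ⟨hw i, h⟩)
  rw [← hψ.map_nhds_eq, Filter.eventually_map]
  have h3 : ∀ᶠ z in 𝓝 w, z i ∈ (C i)ᶜ :=
    (continuous_apply i).continuousAt.eventually ((hC i).isOpen_compl.mem_nhds h2)
  filter_upwards [h3] with z hz hz2
  rw [mem_cell hψ] at hz2
  have := hz2 i
  rw [hUC] at this
  exact hz this.2

lemma cell_openIn (A : Fin 3 → Set ℝ) (i : Fin 3) {U : Set ℝ} (hU : IsOpen U) :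
    OpenIn (cell ψ (update A i (A i ∩ U))) (cell ψ A) := by
  constructor
  · rintro _ ⟨v, hv, rfl⟩
    rw [mem_cell hψ]
    intro j
    have := hv j trivial
    by_cases hj : j = i
    · subst hj
      rw [update_self] at this
      exact this.1
    · rwa [update_of_ne hj] at this
  · rintro _ ⟨v, hv, rfl⟩
    rw [← hψ.map_nhds_eq, Filter.eventually_map]
    have h0 : v i ∈ U := by
      have := hv i trivial
      rw [update_self] at this
      exact this.2
    have h1 : ∀ᶠ w in 𝓝 v, w i ∈ U := (continuous_apply i).continuousAt.eventually (hU.mem_nhds h0)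
    filter_upwards [h1] with w hw hA
    rw [mem_cell hψ] at hA ⊢
    intro j
    by_cases hj : j = i
    · subst hj
      rw [update_self]
      exact ⟨hA j, hw⟩
    · rw [update_of_ne hj]; exact hA j

lemma cell_diff (A : Fin 3 → Set ℝ) (i : Fin 3) (U : Set ℝ) :
    cell ψ A \ cell ψ (update A i (A i ∩ U)) = cell ψ (update A i (A i \ U)) := by
  ext x
  by_cases hx : ∃ v, ψ v = x
  · obtain ⟨v, rfl⟩ := hx
    rw [Set.mem_diff, mem_cell hψ, mem_cell hψ, mem_cell hψ]
    constructor
    · rintro ⟨h1, h2⟩ j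
      by_cases hj : j = i
      · subst hj
        rw [update_self]
        refine ⟨h1 j, fun hU => h2 (fun k => ?_)⟩
        by_cases hk : k = j
        · subst hk; rw [update_self]; exact ⟨h1 k, hU⟩
        · rw [update_of_ne hk]; exact h1 k
      · rw [update_of_ne hj]; exact h1 j
    · intro h
      have hi := h i
      rw [update_self] at hi
      refine ⟨fun j => ?_, fun h2 => ?_⟩
      · by_cases hj : j = i
        · subst hj; exact hi.1
        · have := h j
          rwa [update_of_ne hj] at this
      · have := h2 i
        rw [update_self] at this
        exact hi.2 this.2
  · have : ∀ B, x ∉ cell ψ B := by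
      rintro B ⟨v, _, rfl⟩
      exact hx ⟨v, rfl⟩
    simp [this]

variable [HasExt.{w} (Shv X)]

lemma van_step {A : Fin 3 → Set ℝ} (hA : ∀ i, IsLocallyClosed (A i)) (i : Fin 3) {U : Set ℝ} (hU : IsOpen U) {Y : Shv X}
    (h1 : Van (qSh (cell ψ (update A i (A i ∩ U)))) Y) (h2 : Van (qSh (cell ψ A)) Y) :
    Van (qSh (cell ψ (update A i (A i \ U)))) Y := by
  rw [← cell_diff hψ]
  exact van_diff (cell_openIn hψ A i hU) (cell_LC hψ hA) h1 h2

lemma shp_step {A : Fin 3 → Set ℝ} (hA : ∀ i, IsLocallyClosed (A i)) (i : Fin 3) {U : Set ℝ} (hU : IsOpen U) {Y : Shv X}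
    {d : ℕ} (h1 : Shp d (qSh (cell ψ (update A i (A i ∩ U)))) Y) (h2 : Van (qSh (cell ψ A)) Y) :
    Shp (d + 1) (qSh (cell ψ (update A i (A i \ U)))) Y := by
  rw [← cell_diff hψ]
  exact shp_diff (cell_openIn hψ A i hU) (cell_LC hψ hA) h1 h2

omit hψ [HasExt.{w} (Shv X)] in
lemma lc_update {A : Fin 3 → Set ℝ} (hA : ∀ i, IsLocallyClosed (A i)) (i : Fin 3) {a : Set ℝ} (ha : IsLocallyClosed a) :
    ∀ j, IsLocallyClosed (update A i a j) := by
  intro j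
  by_cases hj : j = i
  · subst hj; rwa [update_self]
  · rw [update_of_ne hj]; exact hA j

omit hψ [HasExt.{w} (Shv X)] in
lemma lc_Ico : IsLocallyClosed (Set.Ico (0:ℝ) 1) := by
  have : Set.Ico (0:ℝ) 1 = Set.Iio 1 ∩ Set.Ici 0 := by ext; simp [and_comm]
  rw [this]
  exact isOpen_Iio.isLocallyClosed.inter isClosed_Ici.isLocallyClosed

omit hψ [HasExt.{w} (Shv X)] in
lemma set1 : Set.Ioo (-1:ℝ) 1 ∩ Set.Iio 0 = Set.Ioo (-1) 0 := by
  ext x; simp only [Set.mem_inter_iff, Set.mem_Ioo, Set.mem_Iio]; grind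
omit hψ [HasExt.{w} (Shv X)] in
lemma set2 : Set.Ioo (-1:ℝ) 1 \ Set.Iio 0 = Set.Ico 0 1 := by
  ext x; simp only [Set.mem_diff, Set.mem_Ioo, Set.mem_Iio, Set.mem_Ico]; grind
omit hψ [HasExt.{w} (Shv X)] in
lemma set3 : Set.Ico (0:ℝ) 1 ∩ Set.Ioi 0 = Set.Ioo 0 1 := by
  ext x; simp only [Set.mem_inter_iff, Set.mem_Ioo, Set.mem_Ioi, Set.mem_Ico]; grind
omit hψ [HasExt.{w} (Shv X)] in
lemma set4 : Set.Ico (0:ℝ) 1 \ Set.Ioi 0 = {0} := by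
  ext x; simp only [Set.mem_diff, Set.mem_Ioi, Set.mem_Ico, Set.mem_singleton_iff]; grind

lemma van_H {A : Fin 3 → Set ℝ} (hA : ∀ i, IsLocallyClosed (A i)) (i : Fin 3) {Y : Shv X}
    (h : ∀ l u : ℝ, l < u → Van (qSh (cell ψ (update A i (Set.Ioo l u)))) Y) :
    Van (qSh (cell ψ (update A i (Set.Ico 0 1)))) Y := by
  have := van_step hψ (lc_update hA i (isOpen_Ioo (a := (-1:ℝ)) (b := 1)).isLocallyClosed) i (isOpen_Iio (a := (0:ℝ)))
    (Y := Y)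
  simp only [update_self, update_idem, set1, set2] at this
  exact this (h _ _ (by norm_num)) (h _ _ (by norm_num))

lemma van_P {A : Fin 3 → Set ℝ} (hA : ∀ i, IsLocallyClosed (A i)) (i : Fin 3) {Y : Shv X}
    (h : ∀ l u : ℝ, l < u → Van (qSh (cell ψ (update A i (Set.Ioo l u)))) Y) :
    Van (qSh (cell ψ (update A i {0}))) Y := by
  have := van_step hψ (lc_update hA i lc_Ico) i (isOpen_Ioi (a := (0:ℝ))) (Y := Y)
  simp only [update_self, update_idem, set3, set4] at this
  exact this (h _ _ (by norm_num)) (van_H hψ hA i h)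

lemma shp_P {A : Fin 3 → Set ℝ} (hA : ∀ i, IsLocallyClosed (A i)) (i : Fin 3) {Y : Shv X} {d : ℕ}
    (h1 : Shp d (qSh (cell ψ (update A i (Set.Ioo 0 1)))) Y) (h2 : Van (qSh (cell ψ (update A i (Set.Ico 0 1)))) Y) :
    Shp (d + 1) (qSh (cell ψ (update A i {0}))) Y := by
  have := shp_step hψ (lc_update hA i lc_Ico) i (isOpen_Ioi (a := (0:ℝ))) (Y := Y) (d := d)
  simp only [update_self, update_idem, set3, set4] at this
  exact this h1 h2

omit hψ [HasExt.{w} (Shv X)] in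
lemma upd_Ioo (l u : Fin 3 → ℝ) (i : Fin 3) (a b : ℝ) :
    (fun j => Set.Ioo (update l i a j) (update u i b j)) = update (fun j => Set.Ioo (l j) (u j)) i (Set.Ioo a b) := by
  funext j
  by_cases hj : j = i
  · subst hj; simp
  · simp [update_of_ne hj]

lemma van_O (l u : Fin 3 → ℝ) (h : ∀ i, l i < u i) (i : Fin 3) :
    Van (qSh (cell ψ (update (fun j => Set.Ioo (l j) (u j)) i (Set.Ico 0 1)))) (qSh (Set.univ : Set X)) := by
  have e1 : cell ψ (update (fun j => Set.Ioo (l j) (u j)) i (Set.Ioo (-1) 1)) =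
      box hψ (update l i (-1)) (update u i 1) := by
    rw [← upd_Ioo]; rfl
  have e2 : cell ψ (update (fun j => Set.Ioo (l j) (u j)) i (Set.Ioo (-1) 0)) =
      box hψ (update l i (-1)) (update u i 0) := by
    rw [← upd_Ioo]; rfl
  have o := cell_openIn hψ (update (fun j => Set.Ioo (l j) (u j)) i (Set.Ioo (-1) 1)) i (isOpen_Iio (a := (0:ℝ)))
  have d := cell_diff hψ (update (fun j => Set.Ioo (l j) (u j)) i (Set.Ioo (-1) 1)) i (Set.Iio (0:ℝ))
  have lc := cell_LC hψ (lc_update (fun j => (isOpen_Ioo (a := l j) (b := u j)).isLocallyClosed) i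
    (isOpen_Ioo (a := (-1:ℝ)) (b := 1)).isLocallyClosed)
  simp only [update_self, update_idem, set1, set2] at o d
  rw [← d]
  rw [e1] at lc
  rw [e1, e2] at o ⊢
  refine van_three (qSC_shortExact o lc) (fun n => ?_)
  refine box_restr hψ _ _ _ _ (fun j => ?_) o n
  by_cases hj : j = i
  · subst hj; simp
  · simp only [update_of_ne hj]; exact h j

omit hψ [HasExt.{w} (Shv X)] in
lemma u0 {α : Type*} (a b c x : α) : update ![a,b,c] 0 x = ![x,b,c] := by
  funext i; fin_cases i <;> rfl
omit hψ [HasExt.{w} (Shv X)] in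
lemma u1 {α : Type*} (a b c x : α) : update ![a,b,c] 1 x = ![a,x,c] := by
  funext i; fin_cases i <;> rfl
omit hψ [HasExt.{w} (Shv X)] in
lemma u2 {α : Type*} (a b c x : α) : update ![a,b,c] 2 x = ![a,b,x] := by
  funext i; fin_cases i <;> rfl
omit hψ [HasExt.{w} (Shv X)] in
lemma lc3 {a b c : Set ℝ} (ha : IsLocallyClosed a) (hb : IsLocallyClosed b) (hc : IsLocallyClosed c) :
    ∀ i, IsLocallyClosed (![a,b,c] i) := by
  intro i; fin_cases i <;> assumption
omit hψ [HasExt.{w} (Shv X)] in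
lemma ioo3 (a b c a' b' c' : ℝ) : (fun j => Set.Ioo (![a,b,c] j) (![a',b',c'] j)) = ![Set.Ioo a a', Set.Ioo b b', Set.Ioo c c'] := by
  funext i; fin_cases i <;> rfl

theorem pt_shp : Shp 3 (qSh {ψ 0}) (qSh (Set.univ : Set X)) := by
  have lO : ∀ l u : ℝ, IsLocallyClosed (Set.Ioo l u) := fun l u => isOpen_Ioo.isLocallyClosed
  have lP : IsLocallyClosed ({0} : Set ℝ) := isClosed_singleton.isLocallyClosed
  have lH := lc_Ico
  have lt3 : ∀ {a b c a' b' c' : ℝ}, a < a' → b < b' → c < c' → ∀ i, ![a,b,c] i < ![a',b',c'] i := by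
    intro a b c a' b' c' h1 h2 h3 i; fin_cases i <;> assumption
  have z1 : (0:ℝ) < 1 := one_pos
  have s0 : Shp 0 (qSh (cell ψ ![Set.Ioo 0 1, Set.Ioo 0 1, Set.Ioo 0 1])) (qSh (Set.univ : Set X)) := by
    have := box_shp hψ ![0,0,0] ![1,1,1] (lt3 z1 z1 z1)
    have e : (box hψ ![0,0,0] ![1,1,1] : Set X) = cell ψ ![Set.Ioo 0 1, Set.Ioo 0 1, Set.Ioo 0 1] := by
      rw [← ioo3]; rfl
    rwa [e] at this
  have v1 : Van (qSh (cell ψ ![Set.Ico 0 1, Set.Ioo 0 1, Set.Ioo 0 1])) (qSh (Set.univ : Set X)) := by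
    have := van_O hψ ![0,0,0] ![1,1,1] (lt3 z1 z1 z1) 0
    rwa [ioo3, u0] at this
  have s1 : Shp 1 (qSh (cell ψ ![{0}, Set.Ioo 0 1, Set.Ioo 0 1])) (qSh (Set.univ : Set X)) := by
    have := shp_P hψ (lc3 lH (lO 0 1) (lO 0 1)) 0 (Y := qSh (Set.univ : Set X)) (d := 0)
    rw [u0, u0, u0] at this
    exact this s0 v1
  have v2 : Van (qSh (cell ψ ![{0}, Set.Ico 0 1, Set.Ioo 0 1])) (qSh (Set.univ : Set X)) := by
    have := van_P hψ (lc3 lH lH (lO 0 1)) 0 (Y := qSh (Set.univ : Set X))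
    simp only [u0] at this
    refine this (fun l u hlu => ?_)
    have := van_O hψ ![l,0,0] ![u,1,1] (lt3 hlu z1 z1) 1
    rwa [ioo3, u1] at this
  have s2 : Shp 2 (qSh (cell ψ ![{0}, {0}, Set.Ioo 0 1])) (qSh (Set.univ : Set X)) := by
    have := shp_P hψ (lc3 lP lH (lO 0 1)) 1 (Y := qSh (Set.univ : Set X)) (d := 1)
    rw [u1, u1, u1] at this
    exact this s1 v2
  have v3 : Van (qSh (cell ψ ![{0}, {0}, Set.Ico 0 1])) (qSh (Set.univ : Set X)) := by
    have := van_P hψ (lc3 lP lH lH) 1 (Y := qSh (Set.univ : Set X))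
    simp only [u1] at this
    refine this (fun l u hlu => ?_)
    have := van_P hψ (lc3 lP (lO l u) lH) 0 (Y := qSh (Set.univ : Set X))
    simp only [u0] at this
    refine this (fun l' u' hlu' => ?_)
    have := van_O hψ ![l',l,0] ![u',u,1] (lt3 hlu' hlu z1) 2
    rwa [ioo3, u2] at this
  have s3 : Shp 3 (qSh (cell ψ ![{0}, {0}, {0}])) (qSh (Set.univ : Set X)) := by
    have := shp_P hψ (lc3 lP lP lH) 2 (Y := qSh (Set.univ : Set X)) (d := 2)
    rw [u2, u2, u2] at this
    exact this s2 v3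
  have e : cell ψ ![{0}, {0}, {0}] = {ψ 0} := by
    have : (Set.univ.pi ![{0}, {0}, {0}] : Set (Fin 3 → ℝ)) = {0} := by
      ext v
      simp [funext_iff, Fin.forall_fin_succ]
    unfold cell
    rw [this, Set.image_singleton]
  rwa [e] at s3

end cells

section chart
open ComplexConjugate

/-- normalising factor -/
def nrm (v : Fin 3 → ℝ) : ℝ := Real.sqrt (1 + v 0 ^ 2 + v 1 ^ 2 + v 2 ^ 2)

lemma nrm_pos (v : Fin 3 → ℝ) : 0 < nrm v := Real.sqrt_pos.2 (by positivity)

lemma nrm_sq (v : Fin 3 → ℝ) : nrm v ^ 2 = 1 + v 0 ^ 2 + v 1 ^ 2 + v 2 ^ 2 := Real.sq_sqrt (by positivity)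

/-- first entry -/
def ca (v : Fin 3 → ℝ) : ℂ := ⟨1 / nrm v, v 0 / nrm v⟩
/-- second entry -/
def cb (v : Fin 3 → ℝ) : ℂ := ⟨v 1 / nrm v, v 2 / nrm v⟩

lemma cab (v : Fin 3 → ℝ) : ca v * conj (ca v) + cb v * conj (cb v) = 1 := by
  have h := nrm_sq v
  have h0 := (nrm_pos v).ne'
  apply Complex.ext
  · simp [ca, cb]
    field_simp
    linarith
  · simp [ca, cb]
    ring

/-- matrix of the chart -/
def cM (v : Fin 3 → ℝ) : Matrix (Fin 2) (Fin 2) ℂ := !![ca v, cb v; -conj (cb v), conj (ca v)]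

lemma cM_det (v : Fin 3 → ℝ) : (cM v).det = 1 := by
  rw [cM, Matrix.det_fin_two_of, ← cab v]; ring

lemma cM_unitary (v : Fin 3 → ℝ) : cM v ∈ Matrix.unitaryGroup (Fin 2) ℂ := by
  rw [Matrix.mem_unitaryGroup_iff]
  have h := cab v
  ext i j
  fin_cases i <;> fin_cases j <;> simp [cM, Matrix.mul_apply, Fin.sum_univ_two, Matrix.star_apply]
  · exact h
  · ring
  · ring
  · rw [← h]; ring

/-- the chart -/
def chart (v : Fin 3 → ℝ) : SU2 := ⟨⟨cM v, cM_unitary v⟩, cM_det v⟩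

/-- matrix entries -/
def ent (g : SU2) : Matrix (Fin 2) (Fin 2) ℂ := g.1.1

lemma ent_cont : Continuous ent := continuous_subtype_val.comp continuous_subtype_val

lemma ent_inj {g h : SU2} (e : ent g = ent h) : g = h := Subtype.ext (Subtype.ext e)

lemma ent_form (g : SU2) : ent g 1 1 = conj (ent g 0 0) ∧ ent g 1 0 = - conj (ent g 0 1) := by
  have hd : (ent g).det = 1 := g.2
  have hu : star (ent g) * ent g = 1 := Matrix.mem_unitaryGroup_iff'.1 g.1.2
  have : star (ent g) = (ent g).adjugate := by
    calc star (ent g) = star (ent g) * (ent g * (ent g).adjugate) := by rw [Matrix.mul_adjugate, hd]; simp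
      _ = _ := by rw [← mul_assoc, hu, one_mul]
  rw [Matrix.adjugate_fin_two] at this
  have h1 := congrFun (congrFun this 0) 0
  have h2 := congrFun (congrFun this 1) 0
  simp [Matrix.star_apply] at h1 h2
  refine ⟨h1.symm, ?_⟩
  have := h2
  grind

lemma ent_norm (g : SU2) : (ent g 0 0).re ^ 2 + (ent g 0 0).im ^ 2 + (ent g 0 1).re ^ 2 + (ent g 0 1).im ^ 2 = 1 := by
  have hd : (ent g).det = 1 := g.2
  obtain ⟨h1, h2⟩ := ent_form g
  rw [Matrix.det_fin_two, h1, h2] at hd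
  have := congrArg Complex.re hd
  simp at this
  nlinarith

/-- inverse chart -/
def ichart (g : SU2) : Fin 3 → ℝ :=
  ![(ent g 0 0).im / (ent g 0 0).re, (ent g 0 1).re / (ent g 0 0).re, (ent g 0 1).im / (ent g 0 0).re]

lemma ichart_chart (v : Fin 3 → ℝ) : ichart (chart v) = v := by
  have h0 := (nrm_pos v).ne'
  funext i
  fin_cases i <;> simp [ichart, ent, chart, cM, ca, cb] <;> field_simp

lemma chart_ichart (g : SU2) (hg : 0 < (ent g 0 0).re) : chart (ichart g) = g := by
  have hn : nrm (ichart g) = 1 / (ent g 0 0).re := by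
    rw [nrm, Real.sqrt_eq_iff_mul_self_eq_of_pos (by positivity)]
    have := ent_norm g
    simp [ichart]
    field_simp
    linarith
  have ha : ca (ichart g) = ent g 0 0 := by
    apply Complex.ext <;> simp only [ca, hn] <;> simp [ichart] <;> field_simp
  have hb : cb (ichart g) = ent g 0 1 := by
    apply Complex.ext <;> simp only [cb, hn] <;> simp [ichart] <;> field_simp
  apply ent_inj
  change cM (ichart g) = _
  obtain ⟨h1, h2⟩ := ent_form g
  ext i j
  fin_cases i <;> fin_cases j <;> simp [cM, ha, hb, h1, h2]

lemma nrm_cont : Continuous nrm := by unfold nrm; fun_prop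

lemma cmk_cont {f g : (Fin 3 → ℝ) → ℝ} (hf : Continuous f) (hg : Continuous g) :
    Continuous (fun v => (⟨f v, g v⟩ : ℂ)) :=
  Complex.equivRealProdCLM.symm.continuous.comp (hf.prodMk hg)

lemma chart_cont : Continuous chart := by
  have ha : Continuous ca := cmk_cont (continuous_const.div nrm_cont (fun v => (nrm_pos v).ne'))
    ((continuous_apply 0).div nrm_cont (fun v => (nrm_pos v).ne'))
  have hb : Continuous cb := cmk_cont ((continuous_apply 1).div nrm_cont (fun v => (nrm_pos v).ne'))
    ((continuous_apply 2).div nrm_cont (fun v => (nrm_pos v).ne'))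
  refine Continuous.subtype_mk (Continuous.subtype_mk ?_ _) _
  refine continuous_matrix (fun i j => ?_)
  fin_cases i <;> fin_cases j <;> simp [cM] <;> fun_prop

/-- the chart as a partial homeomorphism -/
def chartPH : OpenPartialHomeomorph (Fin 3 → ℝ) SU2 where
  toFun := chart
  invFun := ichart
  source := Set.univ
  target := {g | 0 < (ent g 0 0).re}
  map_source' v _ := by
    change 0 < 1 / nrm v
    exact one_div_pos.2 (nrm_pos v)
  map_target' _ _ := trivial
  left_inv' v _ := ichart_chart v
  right_inv' g hg := chart_ichart g hg
  open_source := isOpen_univ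
  open_target := isOpen_lt continuous_const (Complex.continuous_re.comp (ent_cont.matrix_elem 0 0))
  continuousOn_toFun := chart_cont.continuousOn
  continuousOn_invFun := by
    have h00 := ent_cont.matrix_elem 0 0
    have h01 := ent_cont.matrix_elem 0 1
    rw [continuousOn_pi]
    intro i
    have hd : ∀ f : SU2 → ℝ, Continuous f →
        ContinuousOn (fun g => f g / (ent g 0 0).re) {g | 0 < (ent g 0 0).re} := fun f hf =>
      hf.continuousOn.div (Complex.continuous_re.comp h00).continuousOn (fun g hg => ne_of_gt hg)
    fin_cases i
    · exact hd _ (Complex.continuous_im.comp h00)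
    · exact hd _ (Complex.continuous_re.comp h01)
    · exact hd _ (Complex.continuous_im.comp h01)

lemma chart_open : IsOpenEmbedding (chart : (Fin 3 → ℝ) → GTop) := chartPH.isOpenEmbedding rfl

lemma chart_zero : chart 0 = 1 := by
  apply ent_inj
  change cM 0 = 1
  have : nrm 0 = 1 := by simp [nrm]
  ext i j
  fin_cases i <;> fin_cases j <;> simp [cM, ca, cb, this, Complex.ext_iff]

end chart

section final
open Abelian

lemma shp_iso {d : ℕ} {S S' Y Y' : ShG} (e : S ≅ S') (f : Y ≅ Y') (h : Shp d S' Y') : Shp d S Y := by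
  have eq : ∀ n, Nonempty (Ext S Y n ≃+ Ext S' Y' n) := fun n =>
    ⟨(((extFunctor n).mapIso e.symm.op).app Y ≪≫ ((extFunctor n).obj (op S')).mapIso f).addCommGroupIsoToAddEquiv⟩
  refine ⟨⟨(eq d).some.trans h.1.some⟩, fun n hn => ?_⟩
  have := h.2 n hn
  exact (eq n).some.toEquiv.subsingleton

lemma sky_shp : Shp 3 skyQ QG := by
  have := pt_shp (X := GTop) (ψ := chart) chart_open
  rw [chart_zero] at this
  exact shp_iso skyQIso QGIso this

lemma TT_inj : Injective TT := by
  have := skyQ_injective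
  exact Injective.of_iso (skyQIso.trans TTIso.symm) this

lemma end_equiv : Nonempty ((skyQ ⟶ TT) ≃+ ℚ) := by
  obtain ⟨e⟩ := pt_end (X := GTop) (1 : SU2)
  refine ⟨AddEquiv.trans ?_ e⟩
  exact ⟨⟨fun φ => skyQIso.inv ≫ φ ≫ TTIso.hom, fun φ => skyQIso.hom ≫ φ ≫ TTIso.inv,
    fun φ => by simp, fun φ => by simp⟩, fun φ χ => by simp⟩

section abs
universe w v u
variable {C : Type u} [Category.{v} C] [Abelian C] [HasExt.{w} C] {S : ShortComplex C} (hS : S.ShortExact) {T : C}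
include hS

lemma big (hI : Injective S.X₃) (n : ℕ) (hn : 1 ≤ n) : Nonempty (Ext T S.X₁ (n + 1) ≃+ Ext T S.X₂ (n + 1)) := by
  have hi : ∀ m, Subsingleton (Ext T S.X₃ (m + 1)) := fun m => Ext.subsingleton_of_injective _ _ _
  obtain ⟨m, rfl⟩ : ∃ m, n = m + 1 := ⟨n - 1, by omega⟩
  refine ⟨AddEquiv.ofBijective ((Ext.mk₀ S.f).postcomp T (add_zero (m + 1 + 1))) ⟨?_, ?_⟩⟩
  · rw [injective_iff_map_eq_zero]
    intro x hx
    obtain ⟨y, hy⟩ := Ext.covariant_sequence_exact₁ _ hS x hx (n₀ := m + 1) rfl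
    rw [← hy, (hi m).elim y 0, Ext.zero_comp]
  · intro x
    exact Ext.covariant_sequence_exact₂ _ hS x ((hi _).elim _ _)

lemma abs_final (hI : Injective S.X₃) (h : Shp 3 T S.X₂) (e : (T ⟶ S.X₃) ≃+ ℚ) :
    Nonempty (Ext T S.X₁ 1 ≃+ ℚ) ∧ Nonempty (Ext T S.X₁ 3 ≃+ ℚ) ∧
      ∀ n : ℕ, n ≠ 1 → n ≠ 3 → Subsingleton (Ext T S.X₁ n) := by
  refine ⟨?_, ⟨(big hS hI 2 (by norm_num)).some.trans h.1.some⟩, fun n h1 h3 => ?_⟩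
  · have h0 : Subsingleton (Ext T S.X₂ 0) := h.2 0 (by norm_num)
    have h1 : Subsingleton (Ext T S.X₂ 1) := h.2 1 (by norm_num)
    refine ⟨AddEquiv.trans (AddEquiv.ofBijective (hS.extClass.postcomp T (zero_add 1)) ⟨?_, ?_⟩).symm
      (Ext.addEquiv₀.trans e)⟩
    · rw [injective_iff_map_eq_zero]
      intro x hx
      obtain ⟨y, hy⟩ := Ext.covariant_sequence_exact₃ _ hS x (zero_add 1) hx
      rw [← hy, h0.elim y 0, Ext.zero_comp]
    · intro x
      exact Ext.covariant_sequence_exact₁ _ hS x (h1.elim _ _) (zero_add 1)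
  · rcases n with _ | n
    · refine subsingleton_of_forall_eq 0 (fun x => ?_)
      have := hS.mono_f
      apply Ext.postcomp_mk₀_injective_of_mono T S.f
      exact (h.2 0 (by norm_num)).elim _ _
    · have := h.2 (n + 1) h3
      exact (big hS hI n (by omega)).some.toEquiv.subsingleton

end abs

end final

/-- `Ext^n(i_*ℚ, K) ≅ ℚ` for `n ∈ {1, 3}`, and `Ext^n(i_*ℚ, K) = 0` otherwise. -/
theorem ext_skyscraper_K :
    (Nonempty ((Abelian.Ext skyQ KK 1) ≃+ ℚ)) ∧
    (Nonempty ((Abelian.Ext skyQ KK 3) ≃+ ℚ)) ∧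
    (∀ n : ℕ, n ≠ 1 → n ≠ 3 → Subsingleton (Abelian.Ext skyQ KK n)) :=
  abs_final kSC_shortExact TT_inj sky_shp end_equiv.some

end
end

section
/- In the abelian category Sh(G) of sheaves of ℚ-vector spaces on G = SU(2), one has Ext^n_{Sh(G)}(ℚ_G, K) ≅ ℚ for n = 3, and Ext^n_{Sh(G)}(ℚ_G, K) = 0 for all other integers n. -/
open CategoryTheory TopologicalSpace Limits

noncomputable section

attribute [local instance] Classical.propDecidable

/-- An abstract sheaf-cohomology-like theory on the opens of `X`, relative to a base point. -/
structure MVTheory (X : Type) [TopologicalSpace X] (pt : X) where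
  H : ℕ → Opens X → Type 1
  inst : ∀ n U, AddCommGroup (H n U)
  res : ∀ (n : ℕ) {U V : Opens X}, V ≤ U → H n U →+ H n V
  res_self : ∀ (n : ℕ) {U : Opens X} (h : U ≤ U) (c : H n U), res n h c = c
  res_res : ∀ (n : ℕ) {U V W : Opens X} (h : V ≤ U) (h' : W ≤ V) (c : H n U),
    res n h' (res n h c) = res n (h'.trans h) c
  δ : ∀ (n : ℕ) (U V : Opens X), H n (U ⊓ V) →+ H (n + 1) (U ⊔ V)
  δ_nat : ∀ (n : ℕ) {U V U' V' : Opens X} (h : U' ≤ U) (h' : V' ≤ V) (c : H n (U ⊓ V)),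
    res (n + 1) (sup_le_sup h h') (δ n U V c) = δ n U' V' (res n (inf_le_inf h h') c)
  ex_one : ∀ (n : ℕ) (U V : Opens X) (c : H n (U ⊓ V)), δ n U V c = 0 →
    ∃ (a : H n U) (b : H n V), c = res n inf_le_left a + res n inf_le_right b
  δ_left : ∀ (n : ℕ) (U V : Opens X) (a : H n U), δ n U V (res n inf_le_left a) = 0
  δ_right : ∀ (n : ℕ) (U V : Opens X) (a : H n V), δ n U V (res n inf_le_right a) = 0
  ex_two : ∀ (n : ℕ) (U V : Opens X) (c : H (n + 1) (U ⊔ V)), res (n + 1) le_sup_left c = 0 →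
    res (n + 1) le_sup_right c = 0 → ∃ e, δ n U V e = c
  ex_zero : ∀ (U V : Opens X) (c : H 0 (U ⊔ V)), res 0 le_sup_left c = 0 →
    res 0 le_sup_right c = 0 → c = 0
  ex_mid : ∀ (n : ℕ) (U V : Opens X) (a : H n U) (b : H n V),
    res n (inf_le_left : U ⊓ V ≤ U) a = res n inf_le_right b →
    ∃ c : H n (U ⊔ V), res n le_sup_left c = a ∧ res n le_sup_right c = b
  loc : ∀ (n : ℕ) (U : Opens X) (c : H (n + 1) U) (x : X), x ∈ U →
    ∃ (V : Opens X) (h : V ≤ U), x ∈ V ∧ res (n + 1) h c = 0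
  bot : ∀ (n : ℕ), Subsingleton (H n ⊥)
  const : ∀ (U : Opens X), pt ∉ U → ℚ →+ H 0 U
  res_const : ∀ {U V : Opens X} (h : V ≤ U) (hU : pt ∉ U) (hV : pt ∉ V) (q : ℚ),
    res 0 h (const U hU q) = const V hV q
  const_inj : ∀ {U : Opens X} (hU : pt ∉ U) (x : X) (_ : x ∈ U) (q : ℚ), const U hU q = 0 → q = 0
  loc_const : ∀ (U : Opens X) (c : H 0 U) (x : X), x ∈ U → x ≠ pt →
    ∃ (V : Opens X) (h : V ≤ U) (_ : x ∈ V) (hp : pt ∉ V) (q : ℚ), res 0 h c = const V hp q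
  loc_pt : ∀ (U : Opens X) (c : H 0 U), pt ∈ U →
    ∃ (V : Opens X) (h : V ≤ U) (_ : pt ∈ V), res 0 h c = 0
  sep : ∀ (U : Opens X) (c : H 0 U),
    (∀ x ∈ U, ∃ (V : Opens X) (h : V ≤ U) (_ : x ∈ V), res 0 h c = 0) → c = 0

namespace MVTheory

attribute [instance] MVTheory.inst

variable {X : Type} [TopologicalSpace X] {pt : X} (T : MVTheory X pt)

/-- Germs of classes in degree `n` along `Z` vanish. -/
def GV (n : ℕ) (Z : Set X) : Prop :=
  ∀ (U : Opens X), Z ⊆ U → ∀ c : T.H n U, ∃ (V : Opens X) (h : V ≤ U), Z ⊆ V ∧ T.res n h c = 0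

/-- Every germ along `A ∩ B` is a sum of germs along `A` and `B`. -/
def Sj (n : ℕ) (A B : Set X) : Prop :=
  ∀ (U : Opens X), A ∩ B ⊆ U → ∀ c : T.H n U, ∃ (V W : Opens X) (h : V ⊓ W ≤ U)
    (a : T.H n V) (b : T.H n W), A ⊆ V ∧ B ⊆ W ∧
    T.res n h c = T.res n inf_le_left a + T.res n inf_le_right b

lemma shrink [NormalSpace X] {A B : Set X} (hA : IsClosed A) (hB : IsClosed B)
    (U V W : Opens X) (hU : A ⊆ U) (hV : B ⊆ V) (hW : A ∩ B ⊆ W) :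
    ∃ U' V' : Opens X, U' ≤ U ∧ V' ≤ V ∧ A ⊆ U' ∧ B ⊆ V' ∧ U' ⊓ V' ≤ W := by
  have h1 : IsClosed (A \ (W : Set X)) := hA.sdiff W.isOpen
  have h2 : IsClosed (B \ (W : Set X)) := hB.sdiff W.isOpen
  have hd : Disjoint (A \ (W : Set X)) (B \ (W : Set X)) := by
    rw [Set.disjoint_left]
    rintro x ⟨hx, hxw⟩ ⟨hx', -⟩
    exact hxw (hW ⟨hx, hx'⟩)
  obtain ⟨O₁, O₂, ho₁, ho₂, hs₁, hs₂, hd⟩ := normal_separation h1 h2 hd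
  refine ⟨U ⊓ (⟨O₁, ho₁⟩ ⊔ W), V ⊓ (⟨O₂, ho₂⟩ ⊔ W), inf_le_left, inf_le_left, ?_, ?_, ?_⟩
  · intro x hx
    refine ⟨hU hx, ?_⟩
    by_cases hw : x ∈ (W : Set X)
    · exact Or.inr hw
    · exact Or.inl (hs₁ ⟨hx, hw⟩)
  · intro x hx
    refine ⟨hV hx, ?_⟩
    by_cases hw : x ∈ (W : Set X)
    · exact Or.inr hw
    · exact Or.inl (hs₂ ⟨hx, hw⟩)
  · rintro x ⟨⟨-, h1⟩, ⟨-, h2⟩⟩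
    rcases h1 with h1 | h1
    · rcases h2 with h2 | h2
      · exact (Set.disjoint_left.1 hd h1 h2).elim
      · exact h2
    · exact h1

lemma res_zero_of_le {n : ℕ} {U V W : Opens X} {c : T.H n U} (h : V ≤ U) (hc : T.res n h c = 0)
    (h' : W ≤ V) (h'' : W ≤ U) : T.res n h'' c = 0 := by
  rw [← T.res_res n h h' c, hc, map_zero]

lemma sj_of_gv [NormalSpace X] {A B : Set X} (hA : IsClosed A) (hB : IsClosed B) {n : ℕ}
    (h : T.GV n (A ∩ B)) : T.Sj n A B := by
  intro U hU c
  obtain ⟨W, hW, hZ, hc⟩ := h U hU c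
  obtain ⟨U', V', -, -, hAU, hBV, hle⟩ := shrink hA hB ⊤ ⊤ W (fun _ _ => trivial)
    (fun _ _ => trivial) hZ
  refine ⟨U', V', hle.trans hW, 0, 0, hAU, hBV, ?_⟩
  rw [T.res_zero_of_le hW hc hle, map_zero, map_zero, add_zero]

lemma gv_empty (n : ℕ) : T.GV n ∅ := by
  intro U _ c
  exact ⟨⊥, bot_le, Set.empty_subset _, (T.bot n).elim _ _⟩

/-- The Mayer-Vietoris step for the vanishing of one class. -/
lemma mv_step [NormalSpace X] {A B : Set X} (hA : IsClosed A) (hB : IsClosed B) {n : ℕ}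
    (hS : T.Sj n A B) (U : Opens X) (c : T.H (n + 1) U)
    {VA VB : Opens X} (hVA : VA ≤ U) (hVB : VB ≤ U) (hAV : A ⊆ VA) (hBV : B ⊆ VB)
    (hcA : T.res (n + 1) hVA c = 0) (hcB : T.res (n + 1) hVB c = 0) :
    ∃ (V : Opens X) (h : V ≤ U), A ∪ B ⊆ V ∧ T.res (n + 1) h c = 0 := by
  obtain ⟨e, he⟩ := T.ex_two n VA VB (T.res (n + 1) (sup_le hVA hVB) c)
    (by rw [T.res_res]; exact hcA) (by rw [T.res_res]; exact hcB)
  obtain ⟨V, W, hVW, a, b, hV, hW, hab⟩ := hS (VA ⊓ VB) (Set.inter_subset_inter hAV hBV) e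
  refine ⟨(VA ⊓ V) ⊔ (VB ⊓ W), sup_le (inf_le_left.trans hVA) (inf_le_left.trans hVB), ?_, ?_⟩
  · exact Set.union_subset (fun x hx => Or.inl ⟨hAV hx, hV hx⟩)
      (fun x hx => Or.inr ⟨hBV hx, hW hx⟩)
  · have h1 : T.res (n + 1) (sup_le_sup inf_le_left inf_le_left : (VA ⊓ V) ⊔ (VB ⊓ W) ≤ VA ⊔ VB)
        (T.δ n VA VB e) = 0 := by
      rw [T.δ_nat n inf_le_left inf_le_left]
      have h2 : T.res n (inf_le_inf inf_le_left inf_le_left : (VA ⊓ V) ⊓ (VB ⊓ W) ≤ VA ⊓ VB) e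
          = T.res n inf_le_left (T.res n inf_le_right a) +
            T.res n inf_le_right (T.res n inf_le_right b) := by
        rw [← T.res_res n hVW (inf_le_inf inf_le_right inf_le_right) e, hab, map_add,
          T.res_res, T.res_res, T.res_res, T.res_res]
      rw [h2, map_add, T.δ_left, T.δ_right, add_zero]
    rw [he, T.res_res] at h1
    exact h1

lemma gv_union [NormalSpace X] {A B : Set X} (hA : IsClosed A) (hB : IsClosed B) {n : ℕ}
    (hS : T.Sj n A B) (h1 : T.GV (n + 1) A) (h2 : T.GV (n + 1) B) : T.GV (n + 1) (A ∪ B) := by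
  intro U hU c
  obtain ⟨VA, hVA, hAV, hcA⟩ := h1 U (Set.subset_union_left.trans hU) c
  obtain ⟨VB, hVB, hBV, hcB⟩ := h2 U (Set.subset_union_right.trans hU) c
  exact T.mv_step hA hB hS U c hVA hVB hAV hBV hcA hcB

lemma gv_union_zero {A B : Set X} (h1 : T.GV 0 A) (h2 : T.GV 0 B) : T.GV 0 (A ∪ B) := by
  intro U hU c
  obtain ⟨VA, hVA, hAV, hcA⟩ := h1 U (Set.subset_union_left.trans hU) c
  obtain ⟨VB, hVB, hBV, hcB⟩ := h2 U (Set.subset_union_right.trans hU) c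
  refine ⟨VA ⊔ VB, sup_le hVA hVB, ?_, ?_⟩
  · exact Set.union_subset (fun x hx => Or.inl (hAV hx)) (fun x hx => Or.inr (hBV hx))
  · apply T.ex_zero
    · rw [T.res_res]; exact hcA
    · rw [T.res_res]; exact hcB

lemma gv_singleton (n : ℕ) (x : X) : T.GV (n + 1) {x} := by
  intro U hU c
  obtain ⟨V, h, hx, hc⟩ := T.loc n U c x (hU rfl)
  exact ⟨V, h, by simpa using hx, hc⟩

/-- The set of points near which a degree `0` class is the constant `q`
(with `q = 0` at the base point). -/
def cst {U : Opens X} (c : T.H 0 U) (q : ℚ) : Set X :=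
  {x | ∃ (V : Opens X) (h : V ≤ U) (_ : x ∈ V) (hp : pt ∉ V), T.res 0 h c = T.const V hp q} ∪
  {x | q = 0 ∧ ∃ (V : Opens X) (h : V ≤ U) (_ : x ∈ V), T.res 0 h c = 0}

lemma cst_open {U : Opens X} (c : T.H 0 U) (q : ℚ) : IsOpen (T.cst c q) := by
  apply IsOpen.union
  · rw [isOpen_iff_mem_nhds]
    rintro x ⟨V, h, hx, hp, hc⟩
    exact Filter.mem_of_superset (V.isOpen.mem_nhds hx) (fun y hy => ⟨V, h, hy, hp, hc⟩)
  · rw [isOpen_iff_mem_nhds]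
    rintro x ⟨hq, V, h, hx, hc⟩
    exact Filter.mem_of_superset (V.isOpen.mem_nhds hx) (fun y hy => ⟨hq, V, h, hy, hc⟩)

lemma cst_cover {U : Opens X} (c : T.H 0 U) {x : X} (hx : x ∈ U) : ∃ q, x ∈ T.cst c q := by
  by_cases hp : x = pt
  · subst hp
    obtain ⟨V, h, hx, hc⟩ := T.loc_pt U c hx
    exact ⟨0, Or.inr ⟨rfl, V, h, hx, hc⟩⟩
  · obtain ⟨V, h, hx, hp, q, hc⟩ := T.loc_const U c x hx hp
    exact ⟨q, Or.inl ⟨V, h, hx, hp, hc⟩⟩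

lemma cst_unique {U : Opens X} (c : T.H 0 U) {x : X} {q r : ℚ} (hq : x ∈ T.cst c q)
    (hr : x ∈ T.cst c r) : q = r := by
  rcases hq with ⟨V, h, hx, hp, hc⟩ | ⟨rfl, V, h, hx, hc⟩
  · rcases hr with ⟨V', h', hx', hp', hc'⟩ | ⟨rfl, V', h', hx', hc'⟩
    · have hp2 : pt ∉ V ⊓ V' := fun hh => hp hh.1
      have e1 : T.res 0 (inf_le_left.trans h : V ⊓ V' ≤ U) c = T.const _ hp2 q := by
        rw [← T.res_res 0 h inf_le_left, hc, T.res_const]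
      have e2 : T.res 0 (inf_le_left.trans h : V ⊓ V' ≤ U) c = T.const _ hp2 r := by
        rw [← T.res_res 0 h' inf_le_right, hc', T.res_const]
      have := T.const_inj hp2 x ⟨hx, hx'⟩ (q - r) (by rw [map_sub, ← e1, ← e2, sub_self])
      linarith
    · have hp2 : pt ∉ V ⊓ V' := fun hh => hp hh.1
      have e1 : T.res 0 (inf_le_left.trans h : V ⊓ V' ≤ U) c = T.const _ hp2 q := by
        rw [← T.res_res 0 h inf_le_left, hc, T.res_const]
      have e2 := T.res_zero_of_le h' hc' inf_le_right (inf_le_left.trans h : V ⊓ V' ≤ U)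
      exact T.const_inj hp2 x ⟨hx, hx'⟩ q (by rw [← e1, e2])
  · rcases hr with ⟨V', h', hx', hp', hc'⟩ | ⟨rfl, V', h', hx', hc'⟩
    · have hp2 : pt ∉ V ⊓ V' := fun hh => hp' hh.2
      have e1 : T.res 0 (inf_le_left.trans h : V ⊓ V' ≤ U) c = T.const _ hp2 r := by
        rw [← T.res_res 0 h' inf_le_right, hc', T.res_const]
      have e2 := T.res_zero_of_le h hc inf_le_left (inf_le_left.trans h : V ⊓ V' ≤ U)
      exact (T.const_inj hp2 x ⟨hx, hx'⟩ r (by rw [← e1, e2])).symm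
    · rfl

lemma cst_pt {U : Opens X} (c : T.H 0 U) {q : ℚ} (hq : pt ∈ T.cst c q) : q = 0 := by
  rcases hq with ⟨V, h, hx, hp, hc⟩ | ⟨rfl, V, h, hx, hc⟩
  · exact (hp hx).elim
  · rfl

lemma exists_cst {Z : Set X} (hZ : IsPreconnected Z) {U : Opens X} (hU : Z ⊆ U) (c : T.H 0 U) :
    ∃ q, Z ⊆ T.cst c q := by
  rcases Z.eq_empty_or_nonempty with rfl | ⟨z, hz⟩
  · exact ⟨0, Set.empty_subset _⟩
  · obtain ⟨q, hq⟩ := T.cst_cover c (hU hz)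
    refine ⟨q, ?_⟩
    have ho : IsOpen (⋃ r ∈ {r : ℚ | r ≠ q}, T.cst c r) :=
      isOpen_biUnion (fun r _ => T.cst_open c r)
    intro y hy
    by_contra hyq
    obtain ⟨r, hr⟩ := T.cst_cover c (hU hy)
    have hne : r ≠ q := fun h => hyq (h ▸ hr)
    obtain ⟨w, -, hw1, hw2⟩ := hZ _ _ (T.cst_open c q) ho (by
      intro w hw
      obtain ⟨s, hs⟩ := T.cst_cover c (hU hw)
      by_cases h : s = q
      · exact Or.inl (h ▸ hs)
      · exact Or.inr (Set.mem_biUnion (show s ∈ {r : ℚ | r ≠ q} from h) hs)) ⟨z, hz, hq⟩ ⟨y, hy, Set.mem_biUnion (show r ∈ {r : ℚ | r ≠ q} from hne) hr⟩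
    simp only [Set.mem_iUnion] at hw2
    obtain ⟨s, hs, hws⟩ := hw2
    exact hs (T.cst_unique c hws hw1)

lemma cst_zero {U : Opens X} (c : T.H 0 U) (W : Opens X) (hW : W ≤ U)
    (h : (W : Set X) ⊆ T.cst c 0) : T.res 0 hW c = 0 := by
  apply T.sep
  intro x hx
  rcases h hx with ⟨V, h, hx', hp, hc⟩ | ⟨-, V, h, hx', hc⟩
  · refine ⟨V ⊓ W, inf_le_right, ⟨hx', hx⟩, ?_⟩
    rw [T.res_res, T.res_zero_of_le h (by rw [hc, map_zero]) inf_le_left]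
  · refine ⟨V ⊓ W, inf_le_right, ⟨hx', hx⟩, ?_⟩
    rw [T.res_res, T.res_zero_of_le h hc inf_le_left]

lemma cst_const {U : Opens X} (c : T.H 0 U) (W : Opens X) (hW : W ≤ U) {q : ℚ} (hp : pt ∉ W)
    (h : (W : Set X) ⊆ T.cst c q) : T.res 0 hW c = T.const W hp q := by
  rw [← sub_eq_zero]
  apply T.sep
  intro x hx
  have hpV : ∀ V : Opens X, pt ∉ V ⊓ W := fun V hh => hp hh.2
  rcases h hx with ⟨V, h, hx', hp', hc⟩ | ⟨rfl, V, h, hx', hc⟩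
  · refine ⟨V ⊓ W, inf_le_right, ⟨hx', hx⟩, ?_⟩
    rw [map_sub, T.res_res, T.res_const _ _ (hpV V), ← T.res_res 0 h inf_le_left, hc,
      T.res_const _ _ (hpV V), sub_self]
  · refine ⟨V ⊓ W, inf_le_right, ⟨hx', hx⟩, ?_⟩
    rw [map_sub, T.res_res, T.res_zero_of_le h hc inf_le_left, map_zero, map_zero, sub_zero]

lemma gv_zero {Z : Set X} (hZ : IsPreconnected Z) (hp : pt ∈ Z) : T.GV 0 Z := by
  intro U hU c
  obtain ⟨q, hq⟩ := T.exists_cst hZ hU c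
  obtain rfl := T.cst_pt c (hq hp)
  exact ⟨U ⊓ ⟨_, T.cst_open c 0⟩, inf_le_left, fun x hx => ⟨hU hx, hq hx⟩,
    T.cst_zero c _ _ (fun x hx => hx.2)⟩

lemma sj_zero [NormalSpace X] [T1Space X] {A B : Set X} (hA : IsClosed A) (hB : IsClosed B)
    (hAB : IsPreconnected (A ∩ B)) : T.Sj 0 A B := by
  by_cases hp : pt ∈ A ∩ B
  · exact T.sj_of_gv hA hB (T.gv_zero hAB hp)
  intro U hU c
  obtain ⟨q, hq⟩ := T.exists_cst hAB hU c
  obtain ⟨U', V', -, -, hAU, hBV, hle⟩ := shrink hA hB ⊤ ⊤ (U ⊓ ⟨_, T.cst_open c q⟩)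
    (fun _ _ => trivial) (fun _ _ => trivial) (fun x hx => ⟨hU hx, hq hx⟩)
  let P : Opens X := ⟨{pt}ᶜ, isOpen_compl_singleton⟩
  by_cases hpA : pt ∈ A
  · have hpB : pt ∉ B := fun h => hp ⟨hpA, h⟩
    have hpW : pt ∉ V' ⊓ P := fun h => h.2 rfl
    have hl : U' ⊓ (V' ⊓ P) ≤ U ⊓ ⟨_, T.cst_open c q⟩ :=
      (inf_le_inf le_rfl inf_le_left).trans hle
    refine ⟨U', V' ⊓ P, hl.trans inf_le_left, 0, T.const _ hpW q, hAU, ?_, ?_⟩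
    · intro x hx
      exact ⟨hBV hx, fun h => hpB (by rw [← Set.mem_singleton_iff.1 h]; exact hx)⟩
    · have hpW' : pt ∉ U' ⊓ (V' ⊓ P) := fun h => h.2.2 rfl
      rw [map_zero, zero_add, T.res_const _ _ hpW',
        T.cst_const c _ _ hpW' (fun x hx => (hl hx).2)]
  · have hpW : pt ∉ U' ⊓ P := fun h => h.2 rfl
    have hl : (U' ⊓ P) ⊓ V' ≤ U ⊓ ⟨_, T.cst_open c q⟩ :=
      (inf_le_inf inf_le_left le_rfl).trans hle
    refine ⟨U' ⊓ P, V', hl.trans inf_le_left, T.const _ hpW q, 0, ?_, hBV, ?_⟩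
    · intro x hx
      exact ⟨hAU hx, fun h => hpA (by rw [← Set.mem_singleton_iff.1 h]; exact hx)⟩
    · have hpW' : pt ∉ (U' ⊓ P) ⊓ V' := fun h => h.1.2 rfl
      rw [map_zero, add_zero, T.res_const _ _ hpW',
        T.cst_const c _ _ hpW' (fun x hx => (hl hx).2)]

end MVTheory

/-- A family of closed connected sets which can be subdivided. -/
structure CellFamily {X : Type} [TopologicalSpace X] (D : Set (Set X)) : Prop where
  closed : ∀ Z ∈ D, IsClosed Z
  conn : ∀ Z ∈ D, IsPreconnected Z
  inter : ∀ S ⊆ D, S.Nonempty → ⋂₀ S ∈ D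
  split : ∀ Z ∈ D, ∀ x ∈ Z, ∀ y ∈ Z, x ≠ y → ∃ A ∈ D, ∃ B ∈ D, A ∪ B = Z ∧ A ≠ Z ∧ B ≠ Z

namespace MVTheory

variable {X : Type} [TopologicalSpace X] {pt : X} (T : MVTheory X pt)

lemma gv_cell_aux [CompactSpace X] [T2Space X] {D : Set (Set X)} (hD : CellFamily D) (n : ℕ)
    (hSj : ∀ A ∈ D, ∀ B ∈ D, T.Sj n A B) : ∀ Z ∈ D, T.GV (n + 1) Z := by
  intro Z hZ U hU c
  by_contra hcon
  let F : Set (Set X) := {Y | Y ∈ D ∧ Y ⊆ Z ∧ ¬ ∃ (V : Opens X) (h : V ≤ U), Y ⊆ V ∧ T.res _ h c = 0}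
  obtain ⟨M, hMZ, hM⟩ := zorn_superset_nonempty F (by
    intro S hS hch hne
    refine ⟨⋂₀ S, ⟨hD.inter S (fun Y hY => (hS hY).1) hne, ?_, ?_⟩, fun s hs => Set.sInter_subset_of_mem hs⟩
    · obtain ⟨Y, hY⟩ := hne
      exact (Set.sInter_subset_of_mem hY).trans (hS hY).2.1
    · rintro ⟨V, hV, hSV, hc⟩
      obtain ⟨Y, hY, hYV⟩ : ∃ Y ∈ S, Y ⊆ V := by
        have : Nonempty S := hne.to_subtype
        obtain ⟨Y, hY⟩ := exists_subset_nhds_of_isCompact' (ι := S) (V := fun Y => (Y : Set X))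
          (by
            intro a b
            rcases hch.total a.2 b.2 with h | h
            · exact ⟨a, le_rfl, h⟩
            · exact ⟨b, h, le_rfl⟩)
          (fun Y => (hD.closed _ (hS Y.2).1).isCompact) (fun Y => hD.closed _ (hS Y.2).1)
          (U := (V : Set X)) (by
            intro x hx
            exact V.isOpen.mem_nhds (hSV (by rw [Set.sInter_eq_iInter]; exact hx)))
        exact ⟨Y, Y.2, hY⟩
      exact (hS hY).2.2 ⟨V, hV, hYV, hc⟩) Z ⟨hZ, subset_rfl, hcon⟩
  have hMF : M ∈ F := hM.prop
  apply hMF.2.2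
  by_cases hsub : M.Subsingleton
  · rcases hsub.eq_empty_or_singleton with h | ⟨x, h⟩
    · rw [h]; exact T.gv_empty _ U (Set.empty_subset _) c
    · rw [h]
      exact T.gv_singleton _ x U (by rw [← h]; exact hMF.2.1.trans hU) c
  · rw [Set.not_subsingleton_iff] at hsub
    obtain ⟨x, hx, y, hy, hxy⟩ := hsub
    obtain ⟨A, hA, B, hB, hABM, hAM, hBM⟩ := hD.split M hMF.1 x hx y hy hxy
    have key : ∀ Y ∈ D, Y ⊆ M → Y ≠ M → ∃ (V : Opens X) (h : V ≤ U), Y ⊆ V ∧ T.res _ h c = 0 := by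
      intro Y hY hYM hne
      by_contra hh
      exact hne (hYM.antisymm (hM.le_of_le ⟨hY, hYM.trans hMF.2.1, hh⟩ hYM))
    obtain ⟨VA, hVA, hAV, hcA⟩ := key A hA (hABM ▸ Set.subset_union_left) hAM
    obtain ⟨VB, hVB, hBV, hcB⟩ := key B hB (hABM ▸ Set.subset_union_right) hBM
    rw [← hABM]
    exact T.mv_step (hD.closed A hA) (hD.closed B hB) (hSj A hA B hB) U c hVA hVB hAV hBV hcA hcB

lemma gv_cell [CompactSpace X] [T2Space X] {D : Set (Set X)} (hD : CellFamily D) (n : ℕ) :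
    ∀ Z ∈ D, T.GV (n + 1) Z := by
  have hAB : ∀ A ∈ D, ∀ B ∈ D, A ∩ B ∈ D := by
    intro A hA B hB
    rw [← Set.sInter_pair]
    exact hD.inter _ (by rintro _ (rfl | rfl) <;> assumption) ⟨A, Or.inl rfl⟩
  induction n with
  | zero =>
    exact T.gv_cell_aux hD 0 (fun A hA B hB =>
      T.sj_zero (hD.closed A hA) (hD.closed B hB) (hD.conn _ (hAB A hA B hB)))
  | succ n ih =>
    exact T.gv_cell_aux hD (n + 1) (fun A hA B hB =>
      T.sj_of_gv (hD.closed A hA) (hD.closed B hB) (ih _ (hAB A hA B hB)))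

/-- The germs in degree `k` along `Z` form a copy of `ℚ`. -/
def IsQ (k : ℕ) (Z : Set X) : Prop :=
  ∃ (U₀ : Opens X) (_ : Z ⊆ U₀) (φ : ℚ →+ T.H k U₀),
    (∀ (U : Opens X), Z ⊆ U → ∀ c : T.H k U, ∃ (V : Opens X) (h : V ≤ U) (h₀ : V ≤ U₀) (q : ℚ),
      Z ⊆ V ∧ T.res k h c = T.res k h₀ (φ q)) ∧
    (∀ (V : Opens X) (h₀ : V ≤ U₀) (q : ℚ), Z ⊆ V → T.res k h₀ (φ q) = 0 → q = 0)

lemma isQ_pair [T2Space X] {x : X} (hx : x ≠ pt) : T.IsQ 0 ({pt} ∪ {x}) := by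
  obtain ⟨U₁, U₂, ho₁, ho₂, hp₁, hx₂, hd⟩ := t2_separation hx.symm
  let W₁ : Opens X := ⟨U₁, ho₁⟩
  let W₂ : Opens X := ⟨U₂, ho₂⟩
  have hd' : ∀ y, y ∈ W₁ → y ∈ W₂ → False := fun y h1 h2 => Set.disjoint_left.1 hd h1 h2
  have hb : W₁ ⊓ W₂ = ⊥ := by
    ext y
    simp only [Opens.coe_inf, Set.mem_inter_iff, SetLike.mem_coe, Opens.coe_bot,
      Set.mem_empty_iff_false, iff_false]
    exact fun h => hd' y h.1 h.2
  have hsub : Subsingleton (T.H 0 (W₁ ⊓ W₂)) := by rw [hb]; exact T.bot 0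
  have hpt : pt ∉ W₂ := fun h => hd' pt hp₁ h
  choose f hf using fun q : ℚ => T.ex_mid 0 W₁ W₂ 0 (T.const W₂ hpt q) (Subsingleton.elim _ _)
  refine ⟨W₁ ⊔ W₂, ?_, AddMonoidHom.mk' f ?_, ?_, ?_⟩
  · rintro y (hy | hy)
    · exact Or.inl (by rw [Set.mem_singleton_iff.1 hy]; exact hp₁)
    · exact Or.inr (by rw [Set.mem_singleton_iff.1 hy]; exact hx₂)
  · intro a b
    rw [← sub_eq_zero]
    apply T.ex_zero
    · rw [map_sub, map_add, (hf _).1, (hf _).1, (hf _).1]; simp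
    · rw [map_sub, map_add, (hf _).2, (hf _).2, (hf _).2, map_add]; simp
  · intro U hU c
    obtain ⟨V₁, h₁, hpV, hc₁⟩ := T.loc_pt U c (hU (Or.inl rfl))
    obtain ⟨V₂, h₂, hxV, hpV₂, q, hc₂⟩ := T.loc_const U c x (hU (Or.inr rfl)) hx
    refine ⟨(V₁ ⊓ W₁) ⊔ (V₂ ⊓ W₂), sup_le (inf_le_left.trans h₁) (inf_le_left.trans h₂),
      sup_le_sup inf_le_right inf_le_right, q, ?_, ?_⟩
    · rintro y (hy | hy)
      · rw [Set.mem_singleton_iff.1 hy]; exact Or.inl ⟨hpV, hp₁⟩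
      · rw [Set.mem_singleton_iff.1 hy]; exact Or.inr ⟨hxV, hx₂⟩
    · rw [← sub_eq_zero]
      apply T.ex_zero
      · rw [map_sub, T.res_res, T.res_res, T.res_zero_of_le h₁ hc₁ inf_le_left, zero_sub,
          neg_eq_zero]
        exact T.res_zero_of_le le_sup_left (hf q).1 inf_le_right _
      · have hp' : pt ∉ V₂ ⊓ W₂ := fun h => hpt h.2
        rw [map_sub, T.res_res, T.res_res, ← T.res_res 0 h₂ inf_le_left, hc₂,
          ← T.res_res 0 (le_sup_right : W₂ ≤ W₁ ⊔ W₂) inf_le_right]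
        erw [(hf q).2]
        rw [T.res_const _ _ hp', T.res_const _ _ hp', sub_self]
  · intro V h₀ q hV h
    have hp' : pt ∉ V ⊓ W₂ := fun h => hpt h.2
    refine T.const_inj hp' x ⟨hV (Or.inr rfl), hx₂⟩ q ?_
    rw [← T.res_const (inf_le_right : V ⊓ W₂ ≤ W₂) hpt hp', ← (hf q).2, T.res_res]
    exact T.res_zero_of_le h₀ h inf_le_left _

lemma isQ_step [NormalSpace X] {A B : Set X} (hA : IsClosed A) (hB : IsClosed B) {k : ℕ}
    (hA' : ∀ n, T.GV n A) (hB' : ∀ n, T.GV n B) (h : T.IsQ k (A ∩ B)) :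
    T.IsQ (k + 1) (A ∪ B) := by
  obtain ⟨U₀, hU₀, φ, h1, h2⟩ := h
  obtain ⟨VA, VB, -, -, hAV, hBV, hle⟩ := shrink hA hB ⊤ ⊤ U₀ (fun _ _ => trivial)
    (fun _ _ => trivial) hU₀
  refine ⟨VA ⊔ VB, Set.union_subset (fun x hx => Or.inl (hAV hx)) (fun x hx => Or.inr (hBV hx)),
    (T.δ k VA VB).comp ((T.res k hle).comp φ), ?_, ?_⟩
  · intro U hU c
    obtain ⟨WA, hWA, hAW, hcA⟩ := hA' (k + 1) U (Set.subset_union_left.trans hU) c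
    obtain ⟨WB, hWB, hBW, hcB⟩ := hB' (k + 1) U (Set.subset_union_right.trans hU) c
    obtain ⟨e, he⟩ := T.ex_two k WA WB (T.res (k + 1) (sup_le hWA hWB) c)
      (by rw [T.res_res]; exact hcA) (by rw [T.res_res]; exact hcB)
    obtain ⟨V, hV, hV₀, q, hZV, hq⟩ := h1 (WA ⊓ WB) (Set.inter_subset_inter hAW hBW) e
    obtain ⟨OA, OB, hOA, hOB, hAO, hBO, hOle⟩ := shrink hA hB (VA ⊓ WA) (VB ⊓ WB) V
      (fun x hx => ⟨hAV hx, hAW hx⟩) (fun x hx => ⟨hBV hx, hBW hx⟩) hZV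
    refine ⟨OA ⊔ OB, sup_le ((hOA.trans inf_le_right).trans hWA) ((hOB.trans inf_le_right).trans hWB),
      sup_le_sup (hOA.trans inf_le_left) (hOB.trans inf_le_left), q,
      Set.union_subset (fun x hx => Or.inl (hAO hx)) (fun x hx => Or.inr (hBO hx)), ?_⟩
    have e1 := congrArg (T.res (k + 1) (sup_le_sup (hOA.trans inf_le_right)
      (hOB.trans inf_le_right) : OA ⊔ OB ≤ WA ⊔ WB)) he
    rw [T.res_res, T.δ_nat k (hOA.trans inf_le_right) (hOB.trans inf_le_right),
      ← T.res_res k hV hOle, hq, T.res_res] at e1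
    rw [← e1]
    simp only [AddMonoidHom.comp_apply]
    rw [T.δ_nat k (hOA.trans inf_le_left) (hOB.trans inf_le_left), T.res_res]
  · intro V h₀ q hV hq
    simp only [AddMonoidHom.comp_apply] at hq
    let WA := VA ⊓ V
    let WB := VB ⊓ V
    have e1 : T.δ k WA WB (T.res k ((inf_le_inf inf_le_left inf_le_left : WA ⊓ WB ≤ VA ⊓ VB).trans hle) (φ q)) = 0 := by
      rw [← T.res_res k hle (inf_le_inf inf_le_left inf_le_left : WA ⊓ WB ≤ VA ⊓ VB),
        ← T.δ_nat k inf_le_left inf_le_left]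
      exact T.res_zero_of_le h₀ hq (sup_le inf_le_right inf_le_right) _
    obtain ⟨a, b, hab⟩ := T.ex_one k WA WB _ e1
    obtain ⟨OA, hOA, hAO, ha⟩ := hA' k WA (fun x hx => ⟨hAV hx, hV (Or.inl hx)⟩) a
    obtain ⟨OB, hOB, hBO, hb⟩ := hB' k WB (fun x hx => ⟨hBV hx, hV (Or.inr hx)⟩) b
    refine h2 (OA ⊓ OB) ((inf_le_inf hOA hOB).trans
      ((inf_le_inf inf_le_left inf_le_left : WA ⊓ WB ≤ VA ⊓ VB).trans hle)) q
      (Set.inter_subset_inter hAO hBO) ?_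
    have e2 := congrArg (T.res k (inf_le_inf hOA hOB)) hab
    rw [T.res_res, map_add, T.res_res, T.res_res, T.res_zero_of_le hOA ha inf_le_left,
      T.res_zero_of_le hOB hb inf_le_right, add_zero] at e2
    exact e2

/-- The cohomology of a sphere, given a decomposition into cells. -/
lemma sphere [CompactSpace X] [T2Space X] (x : X) (hx : x ≠ pt) (S P N : ℕ → Set X) (m : ℕ)
    (h0 : S 0 = {pt} ∪ {x}) (hi : ∀ k < m, P k ∩ N k = S k) (hu : ∀ k < m, P k ∪ N k = S (k + 1))
    (hP : ∀ k < m, ∃ D, CellFamily D ∧ P k ∈ D) (hN : ∀ k < m, ∃ D, CellFamily D ∧ N k ∈ D)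
    (hpt : ∀ k < m, pt ∈ S k) :
    ∀ k ≤ m, T.IsQ k (S k) ∧ ∀ n, n ≠ k → T.GV n (S k) := by
  intro k
  induction k with
  | zero =>
    intro _
    rw [h0]
    refine ⟨T.isQ_pair hx, ?_⟩
    intro n hn
    obtain ⟨n, rfl⟩ := Nat.exists_eq_succ_of_ne_zero hn
    refine T.gv_union isClosed_singleton isClosed_singleton ?_ (T.gv_singleton _ _)
      (T.gv_singleton _ _)
    refine T.sj_of_gv isClosed_singleton isClosed_singleton ?_
    have : ({pt} ∩ {x} : Set X) = ∅ := by
      rw [Set.singleton_inter_eq_empty]; exact fun h => hx h.symm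
    rw [this]
    exact T.gv_empty _
  | succ k ih =>
    intro hk
    obtain ⟨ih1, ih2⟩ := ih (Nat.le_of_succ_le hk)
    have hk' : k < m := hk
    obtain ⟨DP, hDP, hPD⟩ := hP k hk'
    obtain ⟨DN, hDN, hND⟩ := hN k hk'
    have hpS : pt ∈ P k ∩ N k := by rw [hi k hk']; exact hpt k hk'
    have gP : ∀ n, T.GV n (P k) := by
      rintro (_ | n)
      · exact T.gv_zero (hDP.conn _ hPD) hpS.1
      · exact T.gv_cell hDP n _ hPD
    have gN : ∀ n, T.GV n (N k) := by
      rintro (_ | n)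
      · exact T.gv_zero (hDN.conn _ hND) hpS.2
      · exact T.gv_cell hDN n _ hND
    have cP := hDP.closed _ hPD
    have cN := hDN.closed _ hND
    rw [← hu k hk']
    refine ⟨T.isQ_step cP cN gP gN (by rw [hi k hk']; exact ih1), ?_⟩
    rintro (_ | n) hn
    · exact T.gv_union_zero (gP 0) (gN 0)
    · refine T.gv_union cP cN (T.sj_of_gv cP cN ?_) (gP _) (gN _)
      rw [hi k hk']
      exact ih2 n (fun h => hn (by rw [h]))

end MVTheory

section Cells

variable {X : Type} [TopologicalSpace X] (p : X → Fin 4 → ℝ)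

/-- Hemisphere of the sub-sphere of dimension `k`. -/
def hemi (k : Fin 4) (s : ℝ) : Set X := {x | 0 ≤ s * p x k ∧ ∀ j, k < j → p x j = 0}

/-- The family of cells in a hemisphere, given by closed convex sets in the disc. -/
def hemiFam (k : Fin 4) (s : ℝ) : Set (Set X) :=
  {Z | ∃ C : Set (Fin 4 → ℝ), IsClosed C ∧ Convex ℝ C ∧
    Z = hemi p k s ∩ {x | Function.update (p x) k 0 ∈ C}}

lemma sum_update (v : Fin 4 → ℝ) (k : Fin 4) (t : ℝ) :
    ∑ i, (Function.update v k t i) ^ 2 = ∑ i, (Function.update v k 0 i) ^ 2 + t ^ 2 := by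
  fin_cases k <;> simp [Fin.sum_univ_four, Function.update] <;> ring

lemma convex_disc : Convex ℝ {y : Fin 4 → ℝ | ∑ i, y i ^ 2 ≤ 1} := by
  have : ConvexOn ℝ Set.univ (fun y : Fin 4 → ℝ => ∑ i, y i ^ 2) := by
    refine ⟨convex_univ, ?_⟩
    intro x _ y _ a b ha hb hab
    simp only [Pi.add_apply, Pi.smul_apply, smul_eq_mul, Finset.mul_sum, ← Finset.sum_add_distrib]
    refine Finset.sum_le_sum (fun i _ => ?_)
    have hb' : b = 1 - a := by linarith
    subst hb'
    nlinarith [mul_nonneg (mul_nonneg ha hb) (sq_nonneg (x i - y i))]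
  simpa using this.convex_le 1

lemma hemi_cell (hp : Topology.IsEmbedding p) (hr : Set.range p = {v | ∑ i, v i ^ 2 = 1})
    (k : Fin 4) (s : ℝ) (hs : s ^ 2 = 1) : CellFamily (hemiFam p k s) := by
  have hc : ∀ j, Continuous fun x => p x j := fun j => (continuous_apply j).comp hp.continuous
  have hcu : Continuous fun x => Function.update (p x) k 0 :=
    hp.continuous.update k continuous_const
  have hsum : ∀ x, ∑ i, p x i ^ 2 = 1 := fun x => by
    have : p x ∈ Set.range p := ⟨x, rfl⟩
    rw [hr] at this
    exact this
  -- the `k`-th coordinate is determined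
  have hk : ∀ x ∈ hemi p k s,
      p x k = s * Real.sqrt (1 - ∑ i, (Function.update (p x) k 0 i) ^ 2) := by
    intro x hx
    have h1 := sum_update (p x) k (p x k)
    rw [Function.update_eq_self, hsum] at h1
    have h2 : 1 - ∑ i, (Function.update (p x) k 0 i) ^ 2 = (s * p x k) ^ 2 := by
      rw [mul_pow, hs]; linarith
    rw [h2, Real.sqrt_sq hx.1, ← mul_assoc, ← pow_two, hs, one_mul]
  refine ⟨?_, ?_, ?_, ?_⟩
  · rintro _ ⟨C, hC, -, rfl⟩
    refine IsClosed.inter ?_ (hC.preimage hcu)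
    refine IsClosed.inter (isClosed_le continuous_const ((hc k).const_mul s)) ?_
    have : {x | ∀ j, k < j → p x j = 0} = ⋂ j, ⋂ (_ : k < j), {x | p x j = 0} := by
      ext; simp
    show IsClosed {x | ∀ j, k < j → p x j = 0}
    rw [this]
    exact isClosed_iInter fun j => isClosed_iInter fun _ => isClosed_eq (hc j) continuous_const
  · rintro _ ⟨C, hC, hconv, rfl⟩
    rw [← hp.isInducing.isPreconnected_image]
    let E : Set (Fin 4 → ℝ) := C ∩ ({y | ∑ i, y i ^ 2 ≤ 1} ∩ {y | ∀ j, k ≤ j → y j = 0})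
    have hE : Convex ℝ E := by
      refine hconv.inter (convex_disc.inter ?_)
      intro x hx y hy a b _ _ _ j hj
      simp [hx j hj, hy j hj]
    have : p '' (hemi p k s ∩ {x | Function.update (p x) k 0 ∈ C}) =
        (fun y : Fin 4 → ℝ => Function.update y k (s * Real.sqrt (1 - ∑ i, y i ^ 2))) '' E := by
      ext v
      constructor
      · rintro ⟨x, ⟨hx, hxC⟩, rfl⟩
        refine ⟨Function.update (p x) k 0, ⟨hxC, ?_, ?_⟩, ?_⟩
        · have h1 := sum_update (p x) k (p x k)
          rw [Function.update_eq_self, hsum] at h1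
          show ∑ i, (Function.update (p x) k 0 i) ^ 2 ≤ 1
          nlinarith [sq_nonneg (p x k)]
        · intro j hj
          by_cases h : j = k
          · subst h; simp
          · rw [Function.update_of_ne h]
            exact hx.2 j (lt_of_le_of_ne hj (Ne.symm h))
        · show Function.update _ _ _ = _
          rw [← hk x hx, Function.update_idem, Function.update_eq_self]
      · rintro ⟨y, ⟨hyC, hy1, hy0⟩, rfl⟩
        have hyk : Function.update y k 0 = y := by
          rw [← hy0 k le_rfl, Function.update_eq_self]
        have hmem : Function.update y k (s * Real.sqrt (1 - ∑ i, y i ^ 2)) ∈ Set.range p := by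
          rw [hr]
          show _ = _
          have hy1' : ∑ i, y i ^ 2 ≤ 1 := hy1
          rw [sum_update, hyk, mul_pow, hs, Real.sq_sqrt (by linarith)]
          ring
        obtain ⟨x, hx⟩ := hmem
        refine ⟨x, ⟨⟨?_, ?_⟩, ?_⟩, hx⟩
        · rw [hx, Function.update_self, ← mul_assoc, ← pow_two, hs, one_mul]
          exact Real.sqrt_nonneg _
        · intro j hj
          rw [hx, Function.update_of_ne hj.ne', hy0 j hj.le]
        · show Function.update _ _ _ ∈ C
          rw [hx, Function.update_idem, hyk]
          exact hyC
    rw [this]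
    refine hE.isPreconnected.image _ (Continuous.continuousOn ?_)
    exact continuous_id.update k (by fun_prop)
  · intro S hS hne
    have hS' : ∀ Z ∈ S, ∃ C : Set (Fin 4 → ℝ), IsClosed C ∧ Convex ℝ C ∧
        Z = hemi p k s ∩ {x | Function.update (p x) k 0 ∈ C} := fun Z hZ => hS hZ
    choose! C hC using hS'
    refine ⟨⋂ Z ∈ S, C Z, ?_, ?_, ?_⟩
    · exact isClosed_biInter fun Z hZ => (hC Z hZ).1
    · exact convex_iInter fun Z => convex_iInter fun hZ => (hC Z hZ).2.1
    · ext x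
      simp only [Set.mem_sInter, Set.mem_inter_iff, Set.mem_setOf_eq, Set.mem_iInter]
      constructor
      · intro h
        refine ⟨?_, fun Z hZ => ?_⟩
        · obtain ⟨Z, hZ⟩ := hne
          have := h Z hZ
          rw [(hC Z hZ).2.2] at this
          exact this.1
        · have := h Z hZ
          rw [(hC Z hZ).2.2] at this
          exact this.2
      · intro h Z hZ
        rw [(hC Z hZ).2.2]
        exact ⟨h.1, h.2 Z hZ⟩
  · rintro _ ⟨C, hC, hconv, rfl⟩ x hx y hy hxy
    have hne : Function.update (p x) k 0 ≠ Function.update (p y) k 0 := by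
      intro h
      apply hxy
      apply hp.injective
      have h2 := hk x hx.1
      rw [h, ← hk y hy.1] at h2
      calc p x = Function.update (Function.update (p x) k 0) k (p x k) := by
            rw [Function.update_idem, Function.update_eq_self]
        _ = Function.update (Function.update (p y) k 0) k (p y k) := by rw [h, h2]
        _ = p y := by rw [Function.update_idem, Function.update_eq_self]
    have main : ∀ x ∈ hemi p k s ∩ {x | Function.update (p x) k 0 ∈ C},
        ∀ y ∈ hemi p k s ∩ {x | Function.update (p x) k 0 ∈ C}, ∀ i,
        Function.update (p x) k 0 i < Function.update (p y) k 0 i →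
        ∃ A ∈ hemiFam p k s, ∃ B ∈ hemiFam p k s,
          A ∪ B = hemi p k s ∩ {x | Function.update (p x) k 0 ∈ C} ∧
          A ≠ hemi p k s ∩ {x | Function.update (p x) k 0 ∈ C} ∧
          B ≠ hemi p k s ∩ {x | Function.update (p x) k 0 ∈ C} := by
      intro x hx y hy i hi
      obtain ⟨t, ht1, ht2⟩ := exists_between hi
      refine ⟨_, ⟨C ∩ {v | v i ≤ t}, hC.inter (isClosed_le (continuous_apply i) continuous_const),
        hconv.inter (convex_halfSpace_le (f := fun v : Fin 4 → ℝ => v i) ⟨fun _ _ => rfl, fun _ _ => rfl⟩ t), rfl⟩,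
        _, ⟨C ∩ {v | t ≤ v i}, hC.inter (isClosed_le continuous_const (continuous_apply i)),
        hconv.inter (convex_halfSpace_ge (f := fun v : Fin 4 → ℝ => v i) ⟨fun _ _ => rfl, fun _ _ => rfl⟩ t), rfl⟩, ?_, ?_, ?_⟩
      · ext z
        constructor
        · rintro (⟨h1, h2, -⟩ | ⟨h1, h2, -⟩) <;> exact ⟨h1, h2⟩
        · rintro ⟨h1, h2⟩
          rcases le_total (Function.update (p z) k 0 i) t with h | h
          · exact Or.inl ⟨h1, h2, h⟩
          · exact Or.inr ⟨h1, h2, h⟩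
      · intro h
        rw [← h] at hy
        have : Function.update (p y) k 0 i ≤ t := hy.2.2
        linarith
      · intro h
        rw [← h] at hx
        have : t ≤ Function.update (p x) k 0 i := hx.2.2
        linarith
    obtain ⟨i, hi⟩ := Function.ne_iff.1 hne
    rcases lt_or_gt_of_ne hi with h | h
    · exact main x hx y hy i h
    · exact main y hy x hx i h

lemma hemi_mem (k : Fin 4) (s : ℝ) : hemi p k s ∈ hemiFam p k s :=
  ⟨Set.univ, isClosed_univ, convex_univ, by simp⟩

end Cells

/-- Coordinates on `SU(2)`. -/
def su2coord (g : SU2) : Fin 4 → ℝ :=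
  ![((g : Matrix.unitaryGroup (Fin 2) ℂ) : Matrix (Fin 2) (Fin 2) ℂ) 0 0 |>.re,
    ((g : Matrix.unitaryGroup (Fin 2) ℂ) : Matrix (Fin 2) (Fin 2) ℂ) 0 0 |>.im,
    ((g : Matrix.unitaryGroup (Fin 2) ℂ) : Matrix (Fin 2) (Fin 2) ℂ) 1 0 |>.re,
    ((g : Matrix.unitaryGroup (Fin 2) ℂ) : Matrix (Fin 2) (Fin 2) ℂ) 1 0 |>.im]

lemma su2coord_continuous : Continuous su2coord := by
  have h : Continuous fun g : SU2 =>
    ((g : Matrix.unitaryGroup (Fin 2) ℂ) : Matrix (Fin 2) (Fin 2) ℂ) :=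
    continuous_subtype_val.comp continuous_subtype_val
  have h2 : ∀ i j, Continuous fun g : SU2 =>
    ((g : Matrix.unitaryGroup (Fin 2) ℂ) : Matrix (Fin 2) (Fin 2) ℂ) i j := fun i j =>
    h.matrix_elem i j
  refine continuous_pi fun i => ?_
  fin_cases i
  · exact Complex.continuous_re.comp (h2 0 0)
  · exact Complex.continuous_im.comp (h2 0 0)
  · exact Complex.continuous_re.comp (h2 1 0)
  · exact Complex.continuous_im.comp (h2 1 0)

/-- The matrix with given coordinates. -/
def su2mat (v : Fin 4 → ℝ) : Matrix (Fin 2) (Fin 2) ℂ :=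
  !![⟨v 0, v 1⟩, -⟨v 2, -v 3⟩; ⟨v 2, v 3⟩, ⟨v 0, -v 1⟩]

lemma su2mat_coord (g : SU2) :
    su2mat (su2coord g) = ((g : Matrix.unitaryGroup (Fin 2) ℂ) : Matrix (Fin 2) (Fin 2) ℂ) := by
  obtain ⟨⟨M, hM⟩, hd⟩ := g
  have hd' : M.det = 1 := hd
  have h1 : star M * M = 1 := (Matrix.mem_unitaryGroup_iff').1 hM
  have h2 : star M = M.adjugate := by
    have h3 : M * M.adjugate = 1 := by rw [Matrix.mul_adjugate, hd', one_smul]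
    calc star M = star M * (M * M.adjugate) := by rw [h3, mul_one]
      _ = M.adjugate := by rw [← mul_assoc, h1, one_mul]
  have e1 := congrFun (congrFun h2 0) 0
  have e2 := congrFun (congrFun h2 1) 0
  simp [Matrix.adjugate_fin_two, Matrix.star_apply] at e1 e2
  ext i j
  have f1 : M 1 1 = (starRingEnd ℂ) (M 0 0) := e1.symm
  have f2 : M 0 1 = - (starRingEnd ℂ) (M 1 0) := by
    have := congrArg (starRingEnd ℂ) e2
    simp at this
    rw [this]
  fin_cases i <;> fin_cases j <;> simp [su2mat, su2coord, f1, f2] <;> apply Complex.ext <;> simp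

lemma su2coord_range : Set.range su2coord = {v | ∑ i, v i ^ 2 = 1} := by
  have hdet : ∀ v, (su2mat v).det = ((∑ i, v i ^ 2 : ℝ) : ℂ) := by
    intro v
    rw [su2mat, Matrix.det_fin_two_of]
    apply Complex.ext <;> simp [Fin.sum_univ_four, pow_two] <;> ring
  ext v
  constructor
  · rintro ⟨g, rfl⟩
    have h : (su2mat (su2coord g)).det = 1 := by
      rw [su2mat_coord]; exact g.2
    rw [hdet] at h
    exact_mod_cast h
  · intro hv
    have hv' : v 0 ^ 2 + v 1 ^ 2 + v 2 ^ 2 + v 3 ^ 2 = 1 := by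
      have : ∑ i, v i ^ 2 = 1 := hv
      rwa [Fin.sum_univ_four] at this
    have hu : su2mat v ∈ Matrix.unitaryGroup (Fin 2) ℂ := by
      rw [Matrix.mem_unitaryGroup_iff]
      ext i j
      fin_cases i <;> fin_cases j <;>
        simp [su2mat, Matrix.mul_apply, Fin.sum_univ_two, Matrix.star_apply] <;>
        apply Complex.ext <;> simp <;> nlinarith [hv']
    refine ⟨⟨⟨su2mat v, hu⟩, ?_⟩, ?_⟩
    · show (su2mat v).det = 1
      rw [hdet, (show ∑ i, v i ^ 2 = 1 from hv)]; simp
    · ext i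
      fin_cases i <;> simp [su2coord, su2mat]

lemma su2coord_emb : Topology.IsEmbedding su2coord := by
  have hcm : Continuous su2mat := by
    have : ∀ {f g : (Fin 4 → ℝ) → ℝ}, Continuous f → Continuous g →
        Continuous fun v => (⟨f v, g v⟩ : ℂ) := by
      intro f g hf hg
      exact Complex.equivRealProdCLM.symm.continuous.comp (hf.prodMk hg)
    refine continuous_pi fun i => continuous_pi fun j => ?_
    fin_cases i <;> fin_cases j
    · exact this (continuous_apply 0) (continuous_apply 1)
    · exact (this (continuous_apply 2) (continuous_apply 3).neg).neg
    · exact this (continuous_apply 2) (continuous_apply 3)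
    · exact this (continuous_apply 0) (continuous_apply 1).neg
  refine Topology.IsEmbedding.of_comp su2coord_continuous hcm ?_
  have : su2mat ∘ su2coord = Subtype.val ∘ Subtype.val := funext su2mat_coord
  rw [this]
  exact Topology.IsEmbedding.subtypeVal.comp Topology.IsEmbedding.subtypeVal

instance su2_compact : CompactSpace SU2 := by
  have : IsCompact (Set.range su2coord) := by
    rw [su2coord_range]
    refine Metric.isCompact_of_isClosed_isBounded ?_ ?_
    · exact isClosed_eq (by fun_prop) continuous_const
    · refine (Metric.isBounded_closedBall (x := (0 : Fin 4 → ℝ)) (r := 1)).subset ?_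
      intro v hv
      rw [mem_closedBall_zero_iff, pi_norm_le_iff_of_nonneg zero_le_one]
      intro i
      have h1 : v i ^ 2 ≤ ∑ i, v i ^ 2 :=
        Finset.single_le_sum (f := fun i => v i ^ 2) (fun i _ => sq_nonneg _) (Finset.mem_univ i)
      rw [show ∑ i, v i ^ 2 = 1 from hv] at h1
      rw [Real.norm_eq_abs]
      exact (sq_le_one_iff_abs_le_one _).1 h1
  rw [← isCompact_univ_iff, su2coord_emb.isInducing.isCompact_iff, Set.image_univ]
  exact this

lemma su2_cells : ∃ (x : SU2) (_ : x ≠ 1) (S P N : ℕ → Set SU2), S 0 = {1} ∪ {x} ∧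
    (∀ k < 3, P k ∩ N k = S k) ∧ (∀ k < 3, P k ∪ N k = S (k + 1)) ∧
    (∀ k < 3, ∃ D, CellFamily D ∧ P k ∈ D) ∧ (∀ k < 3, ∃ D, CellFamily D ∧ N k ∈ D) ∧
    (∀ k < 3, 1 ∈ S k) ∧ S 3 = Set.univ := by
  have h1 : su2coord 1 = ![1, 0, 0, 0] := by
    ext i; fin_cases i <;> simp [su2coord]
  obtain ⟨x, hx⟩ : ![-1, 0, 0, 0] ∈ Set.range su2coord := by
    rw [su2coord_range]; simp [Fin.sum_univ_four]
  have hinj := su2coord_emb.injective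
  refine ⟨x, ?_, fun k => {g | ∀ j : Fin 4, k < (j : ℕ) → su2coord g j = 0},
    fun k => hemi su2coord (Fin.ofNat 4 (k + 1)) 1, fun k => hemi su2coord (Fin.ofNat 4 (k + 1)) (-1), ?_, ?_, ?_, ?_, ?_, ?_, ?_⟩
  · rintro rfl
    rw [h1] at hx
    have := congrFun hx 0
    simp at this
    norm_num at this
  · ext g
    simp only [Set.mem_setOf_eq, Set.mem_union, Set.mem_singleton_iff]
    rw [← hinj.eq_iff (a := g) (b := 1), ← hinj.eq_iff (a := g) (b := x), h1, hx]
    constructor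
    · intro h
      have hs : su2coord g ∈ Set.range su2coord := ⟨g, rfl⟩
      rw [su2coord_range] at hs
      have hs' : ∑ i, su2coord g i ^ 2 = 1 := hs
      rw [Fin.sum_univ_four, h 1 (by decide), h 2 (by decide), h 3 (by decide)] at hs'
      have h0 : su2coord g 0 = 1 ∨ su2coord g 0 = -1 := by
        have h9 : (su2coord g 0 - 1) * (su2coord g 0 + 1) = 0 := by nlinarith
        rcases mul_eq_zero.1 h9 with h9 | h9
        · left; linarith
        · right; linarith
      rcases h0 with h0 | h0
      · left; ext i; fin_cases i
        · exact h0
        · exact h 1 (by decide)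
        · exact h 2 (by decide)
        · exact h 3 (by decide)
      · right; ext i; fin_cases i
        · exact h0
        · exact h 1 (by decide)
        · exact h 2 (by decide)
        · exact h 3 (by decide)
    · rintro (h | h) j hj
      · rw [h]; fin_cases j <;> simp at hj ⊢
      · rw [h]; fin_cases j <;> simp at hj ⊢
  · intro k hk
    ext g
    simp only [hemi, Set.mem_inter_iff, Set.mem_setOf_eq]
    constructor
    · rintro ⟨⟨ha, hb⟩, ⟨hc, -⟩⟩ j hj
      by_cases h : j = Fin.ofNat 4 (k + 1)
      · rw [h]; linarith
      · refine hb j ?_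
        rw [Fin.lt_def]
        have h' : (j : ℕ) ≠ (Fin.ofNat 4 (k + 1) : Fin 4).val := fun h'' => h (Fin.ext h'')
        have : (Fin.ofNat 4 (k + 1) : Fin 4).val = k + 1 := Nat.mod_eq_of_lt (by omega)
        omega
    · intro h
      have : (Fin.ofNat 4 (k + 1) : Fin 4).val = k + 1 := Nat.mod_eq_of_lt (by omega)
      have h0 := h (Fin.ofNat 4 (k + 1)) (by omega)
      have h2 : ∀ j, Fin.ofNat 4 (k + 1) < j → su2coord g j = 0 := by
        intro j hj
        rw [Fin.lt_def] at hj
        exact h j (by omega)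
      exact ⟨⟨by rw [h0, mul_zero], h2⟩, ⟨by rw [h0, mul_zero], h2⟩⟩
  · intro k hk
    ext g
    simp only [hemi, Set.mem_union, Set.mem_setOf_eq]
    have h0 : (Fin.ofNat 4 (k + 1) : Fin 4).val = k + 1 := Nat.mod_eq_of_lt (by omega)
    constructor
    · rintro (⟨-, h⟩ | ⟨-, h⟩) <;> exact fun j hj => h j (by rw [Fin.lt_def]; omega)
    · intro h
      have h2 : ∀ j, Fin.ofNat 4 (k + 1) < j → su2coord g j = 0 := by
        intro j hj
        rw [Fin.lt_def] at hj
        exact h j (by omega)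
      rcases le_total 0 (su2coord g (Fin.ofNat 4 (k + 1))) with h' | h'
      · left; exact ⟨by linarith, h2⟩
      · right; exact ⟨by linarith, h2⟩
  · intro k _
    exact ⟨_, hemi_cell su2coord su2coord_emb su2coord_range _ 1 (by norm_num), hemi_mem _ _ _⟩
  · intro k _
    exact ⟨_, hemi_cell su2coord su2coord_emb su2coord_range _ (-1) (by norm_num), hemi_mem _ _ _⟩
  · intro k _ j hj
    rw [h1]; fin_cases j <;> simp at hj ⊢
  · ext g
    simp only [Set.mem_setOf_eq, Set.mem_univ, iff_true]
    intro j hj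
    omega

section ShPart

variable (X : Type) [TopologicalSpace X]

abbrev ShM : Type 1 := Sheaf (Opens.grothendieckTopology X) (ModuleCat.{0} ℚ)

/-- `U ↦ ℚ[U]`, the free sheaf on an open set. -/
def QF : Opens X ⥤ ShM X :=
  yoneda ⋙ (Functor.whiskeringRight _ _ _).obj (ModuleCat.free ℚ) ⋙ presheafToSheaf _ _

variable {X}

instance free_left : (ModuleCat.free.{0} ℚ).IsLeftAdjoint := (ModuleCat.adj.{0} ℚ).isLeftAdjoint

instance cas_left : (Sheaf.composeAndSheafify (Opens.grothendieckTopology X)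
      (ModuleCat.free.{0} ℚ)).IsLeftAdjoint := inferInstance

def QFiso : (yoneda ⋙ presheafToSheaf (Opens.grothendieckTopology X) (Type)) ⋙ Sheaf.composeAndSheafify (Opens.grothendieckTopology X)
      (ModuleCat.free.{0} ℚ) ≅ QF X :=
  Functor.associator _ _ _ ≪≫ Functor.isoWhiskerLeft yoneda (presheafToSheafCompComposeAndSheafifyIso (Opens.grothendieckTopology X)
        (ModuleCat.free.{0} ℚ))

lemma QF_pushout (U V : Opens X) :
    ((Opens.mayerVietorisSquare U V).map (QF X)).IsPushout := by
  have h := (Opens.mayerVietorisSquare U V).isPushout.map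
    (Sheaf.composeAndSheafify (Opens.grothendieckTopology X) (ModuleCat.free.{0} ℚ))
  refine Square.IsPushout.of_iso h ((Square.mapFunctor.mapIso QFiso).app (Opens.mayerVietorisSquare U V).toSquare)

instance QF_mono {U V : Opens X} (f : U ⟶ V) : Mono ((QF X).map f) := by
  have h0 : Mono f := ⟨fun _ _ _ => Subsingleton.elim _ _⟩
  have h1 : Mono (yoneda.map f) := inferInstance
  have h2 : Mono (Functor.whiskerRight (yoneda.map f) (ModuleCat.free.{0} ℚ)) := by
    rw [NatTrans.mono_iff_mono_app]
    intro W
    rw [NatTrans.mono_iff_mono_app] at h1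
    have := h1 W
    have hi := (mono_iff_injective _).1 this
    change Mono ((ModuleCat.free ℚ).map ((yoneda.map f).app W))
    rw [ModuleCat.mono_iff_injective]
    exact Finsupp.mapDomain_injective hi
  exact inferInstanceAs (Mono ((presheafToSheaf _ _).map
    (Functor.whiskerRight (yoneda.map f) (ModuleCat.free.{0} ℚ))))

def mvSC (U V : Opens X) : ShortComplex (ShM X) where
  X₁ := (QF X).obj (U ⊓ V)
  X₂ := (QF X).obj U ⊞ (QF X).obj V
  X₃ := (QF X).obj (U ⊔ V)
  f := biprod.lift ((QF X).map (homOfLE inf_le_left)) (-(QF X).map (homOfLE inf_le_right))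
  g := biprod.desc ((QF X).map (homOfLE le_sup_left)) ((QF X).map (homOfLE le_sup_right))
  zero := ((Opens.mayerVietorisSquare U V).map (QF X)).cokernelCofork.condition

lemma mvSC_exact (U V : Opens X) : (mvSC U V).ShortExact := by
  have h := (QF_pushout U V).isColimitCokernelCofork
  have hg := ((mvSC U V).exact_and_epi_g_iff_g_is_cokernel.2 ⟨h⟩)
  have : Mono (mvSC U V).f := by
    have : Mono ((mvSC U V).f ≫ (biprod.snd : (QF X).obj U ⊞ (QF X).obj V ⟶ _)) := by
      have : (mvSC U V).f ≫ (biprod.snd : (QF X).obj U ⊞ (QF X).obj V ⟶ _) =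
        (-(QF X).map (homOfLE inf_le_right)) := biprod.lift_snd _ _
      rw [this]
      refine ⟨fun {Z} (a b : Z ⟶ (QF X).obj (U ⊓ V)) h => ?_⟩
      have h1 : -(a ≫ (QF X).map (homOfLE (inf_le_right : U ⊓ V ≤ V))) =
          -(b ≫ (QF X).map (homOfLE (inf_le_right : U ⊓ V ≤ V))) :=
        (Preadditive.comp_neg _ _).symm.trans (h.trans (Preadditive.comp_neg _ _))
      exact (cancel_mono _).1 (neg_injective h1)
    exact mono_of_mono _ (biprod.snd : (QF X).obj U ⊞ (QF X).obj V ⟶ _)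
  have := hg.2
  exact ⟨hg.1⟩

def mvMap {U V U' V' : Opens X} (h : U' ≤ U) (h' : V' ≤ V) : mvSC U' V' ⟶ mvSC U V where
  τ₁ := (QF X).map (homOfLE (inf_le_inf h h'))
  τ₂ := biprod.map ((QF X).map (homOfLE h)) ((QF X).map (homOfLE h'))
  τ₃ := (QF X).map (homOfLE (sup_le_sup h h'))
  comm₁₂ := by
    apply biprod.hom_ext
    · simp [mvSC, ← Functor.map_comp]
    · simp [mvSC, ← Functor.map_comp]
  comm₂₃ := by
    apply biprod.hom_ext'
    · simp [mvSC, ← Functor.map_comp]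
    · simp [mvSC, ← Functor.map_comp]

/-- The universal section of `ℚ[U]` over `U`. -/
def uSec (U : Opens X) : ((QF X).obj U).obj.obj (.op U) :=
  (toSheafify (Opens.grothendieckTopology X) (yoneda.obj U ⋙ ModuleCat.free.{0} ℚ)).app (.op U)
    (ModuleCat.freeMk (𝟙 U) : (ModuleCat.free.{0} ℚ).obj ((yoneda.obj U).obj (.op U)))

lemma QF_ext {U : Opens X} {F : ShM X} (f g : (QF X).obj U ⟶ F)
    (h : f.hom.app (.op U) (uSec U) = g.hom.app (.op U) (uSec U)) : f = g := by
  apply Sheaf.hom_ext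
  refine sheafify_hom_ext (Opens.grothendieckTopology X)
    (P := yoneda.obj U ⋙ ModuleCat.free.{0} ℚ) _ _ F.property ?_
  ext W : 2
  refine ModuleCat.free_hom_ext (R := ℚ) (X := (yoneda.obj U).obj W) ?_
  intro (x : W.unop ⟶ U)
  have hx : (yoneda.obj U ⋙ ModuleCat.free.{0} ℚ).map x.op
      (ModuleCat.freeMk (𝟙 U) : (ModuleCat.free.{0} ℚ).obj ((yoneda.obj U).obj (.op U))) =
      (ModuleCat.freeMk x : (ModuleCat.free.{0} ℚ).obj ((yoneda.obj U).obj W)) := by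
    refine (ModuleCat.free_map_apply _ _).trans ?_
    congr 1
  have key : ∀ f : (QF X).obj U ⟶ F,
      (toSheafify (Opens.grothendieckTopology X) (yoneda.obj U ⋙ ModuleCat.free.{0} ℚ) ≫
        f.hom).app W
      (ModuleCat.freeMk x : (ModuleCat.free.{0} ℚ).obj ((yoneda.obj U).obj W)) =
      F.obj.map x.op (f.hom.app (.op U) (uSec U)) := by
    intro f
    rw [← hx]
    exact ConcreteCategory.congr_hom ((toSheafify (Opens.grothendieckTopology X)
      (yoneda.obj U ⋙ ModuleCat.free.{0} ℚ) ≫ f.hom).naturality x.op) _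
  exact (key f).trans ((congrArg _ h).trans (key g).symm)

lemma QF_exists {U : Opens X} {F : ShM X} (s : F.obj.obj (.op U)) :
    ∃ f : (QF X).obj U ⟶ F, f.hom.app (.op U) (uSec U) = s := by
  let η : (yoneda.obj U ⋙ ModuleCat.free.{0} ℚ) ⟶ F.obj :=
    { app := fun W => ModuleCat.freeDesc (X := (yoneda.obj U).obj W)
        (↾ fun (x : W.unop ⟶ U) => F.obj.map x.op s)
      naturality := by
        intro W W' g
        refine ModuleCat.free_hom_ext (R := ℚ) (X := (yoneda.obj U).obj W) ?_
        intro (x : W.unop ⟶ U)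
        have h1 : (yoneda.obj U ⋙ ModuleCat.free.{0} ℚ).map g
          (ModuleCat.freeMk x : (ModuleCat.free.{0} ℚ).obj ((yoneda.obj U).obj W)) =
          (ModuleCat.freeMk (g.unop ≫ x) : (ModuleCat.free.{0} ℚ).obj ((yoneda.obj U).obj W')) :=
          ModuleCat.free_map_apply _ _
        refine (congrArg (ModuleCat.freeDesc (X := (yoneda.obj U).obj W')
          (↾ fun (x : W'.unop ⟶ U) => F.obj.map x.op s)) h1).trans ?_
        refine (ModuleCat.freeDesc_apply _ _).trans ?_
        refine Eq.trans ?_ (congrArg (F.obj.map g) (ModuleCat.freeDesc_apply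
          (↾ fun (x : W.unop ⟶ U) => F.obj.map x.op s) x).symm)
        change F.obj.map (x.op ≫ g) s = F.obj.map g (F.obj.map x.op s)
        rw [F.obj.map_comp]
        rfl }
  refine ⟨⟨sheafifyLift (Opens.grothendieckTopology X) η F.property⟩, ?_⟩
  have h := congrArg (fun (t : (yoneda.obj U ⋙ ModuleCat.free.{0} ℚ) ⟶ F.obj) => t.app (.op U)
    (ModuleCat.freeMk (𝟙 U) : (ModuleCat.free.{0} ℚ).obj ((yoneda.obj U).obj (.op U))))
    (toSheafify_sheafifyLift (Opens.grothendieckTopology X) η F.property)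
  refine h.trans ?_
  refine (ModuleCat.freeDesc_apply _ _).trans ?_
  change F.obj.map (𝟙 _) s = s
  rw [F.obj.map_id]
  rfl

lemma QF_map_uSec {U V : Opens X} (h : V ⟶ U) :
    ((QF X).map h).hom.app (.op V) (uSec V) = ((QF X).obj U).obj.map h.op (uSec U) := by
  have h1 := congrArg (fun (t : (yoneda.obj V ⋙ ModuleCat.free.{0} ℚ) ⟶ ((QF X).obj U).obj) =>
    t.app (.op V)
    (ModuleCat.freeMk (𝟙 V) : (ModuleCat.free.{0} ℚ).obj ((yoneda.obj V).obj (.op V))))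
    (toSheafify_naturality (Opens.grothendieckTopology X)
      (Functor.whiskerRight (yoneda.map h) (ModuleCat.free.{0} ℚ)))
  refine h1.symm.trans ?_
  have h2 := ConcreteCategory.congr_hom ((toSheafify (Opens.grothendieckTopology X)
      (yoneda.obj U ⋙ ModuleCat.free.{0} ℚ)).naturality h.op)
      (ModuleCat.freeMk (𝟙 U) : (ModuleCat.free.{0} ℚ).obj ((yoneda.obj U).obj (.op U)))
  refine Eq.trans ?_ h2
  change (toSheafify (Opens.grothendieckTopology X)
      (yoneda.obj U ⋙ ModuleCat.free.{0} ℚ)).app _ _ = (toSheafify (Opens.grothendieckTopology X)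
      (yoneda.obj U ⋙ ModuleCat.free.{0} ℚ)).app _ _
  congr 1
  refine (ModuleCat.free_map_apply _ _).trans (Eq.trans ?_ (ModuleCat.free_map_apply _ _).symm)
  congr 1

/-- Sections of `F` over `U` are morphisms out of `ℚ[U]`. -/
def secEquiv (U : Opens X) (F : ShM X) : ((QF X).obj U ⟶ F) ≃+ F.obj.obj (.op U) :=
  AddEquiv.ofBijective
    { toFun := fun f => f.hom.app (.op U) (uSec U)
      map_zero' := rfl
      map_add' := fun _ _ => rfl : ((QF X).obj U ⟶ F) →+ F.obj.obj (.op U) }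
    ⟨fun f g h => QF_ext f g h, fun s => QF_exists s⟩

lemma secEquiv_nat {U V : Opens X} (h : V ⟶ U) (F : ShM X) (f : (QF X).obj U ⟶ F) :
    secEquiv V F ((QF X).map h ≫ f) = F.obj.map h.op (secEquiv U F f) := by
  refine (congrArg (f.hom.app (.op V)) (QF_map_uSec h)).trans ?_
  exact ConcreteCategory.congr_hom (f.hom.naturality h.op) (uSec U)

lemma secEquiv_comp {U : Opens X} {F G : ShM X} (f : (QF X).obj U ⟶ F) (g : F ⟶ G) :
    secEquiv U G (f ≫ g) = g.hom.app (.op U) (secEquiv U F f) := rfl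

end ShPart

section ShPartTwo

open Abelian

section MVabs
variable {C : Type*} [Category C] [Abelian C] [HasExt.{1} C] {P A B R Y : C}
  {i : P ⟶ A} {j : P ⟶ B} {k : A ⟶ R} {l : B ⟶ R} {zero : biprod.lift i (-j) ≫ biprod.desc k l = 0}
  (hS : (ShortComplex.mk (biprod.lift i (-j)) (biprod.desc k l) zero).ShortExact)

lemma mvabs_f (n : ℕ) (x : Ext (A ⊞ B) Y n) :
    (Ext.mk₀ (biprod.lift i (-j))).comp x (zero_add n) =
      (Ext.mk₀ i).comp ((Ext.mk₀ biprod.inl).comp x (zero_add n)) (zero_add n) -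
      (Ext.mk₀ j).comp ((Ext.mk₀ biprod.inr).comp x (zero_add n)) (zero_add n) := by
  have : biprod.lift i (-j) = i ≫ biprod.inl + -(j ≫ biprod.inr) := by
    apply biprod.hom_ext <;> simp
  rw [this, Ext.mk₀_add, Ext.mk₀_neg, Ext.add_comp, Ext.neg_comp, Ext.mk₀_comp_mk₀_assoc,
    Ext.mk₀_comp_mk₀_assoc, sub_eq_add_neg]

include hS in
lemma mvabs_one (n : ℕ) (c : Ext P Y n) (h : hS.extClass.comp c (add_comm 1 n) = 0) :
    ∃ (a : Ext A Y n) (b : Ext B Y n), c = (Ext.mk₀ i).comp a (zero_add n) +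
      (Ext.mk₀ j).comp b (zero_add n) := by
  obtain ⟨x, hx⟩ := Ext.contravariant_sequence_exact₁ hS Y c (add_comm 1 n) h
  refine ⟨(Ext.mk₀ biprod.inl).comp x (zero_add n), -(Ext.mk₀ biprod.inr).comp x (zero_add n), ?_⟩
  rw [Ext.comp_neg, ← sub_eq_add_neg, ← mvabs_f]
  exact hx.symm

lemma mvabs_left (n : ℕ) (a : Ext A Y n) :
    hS.extClass.comp ((Ext.mk₀ i).comp a (zero_add n)) (add_comm 1 n) = 0 := by
  have h := hS.extClass_comp_assoc ((Ext.mk₀ (biprod.fst : A ⊞ B ⟶ A)).comp a (zero_add n))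
    (h := add_comm 1 n)
  rw [← h]
  congr 1
  exact ((Ext.mk₀_comp_mk₀_assoc (biprod.lift i (-j)) biprod.fst a).trans (by simp)).symm

lemma mvabs_right (n : ℕ) (a : Ext B Y n) :
    hS.extClass.comp ((Ext.mk₀ j).comp a (zero_add n)) (add_comm 1 n) = 0 := by
  have h := hS.extClass_comp_assoc ((Ext.mk₀ (biprod.snd : A ⊞ B ⟶ B)).comp (-a) (zero_add n))
    (h := add_comm 1 n)
  rw [← h]
  congr 1
  exact ((Ext.mk₀_comp_mk₀_assoc (biprod.lift i (-j)) biprod.snd (-a)).trans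
    (by simp [Ext.mk₀_neg])).symm

lemma mvabs_g (n : ℕ) (c : Ext R Y n) {a : Ext A Y n} {b : Ext B Y n}
    (h : (Ext.mk₀ k).comp c (zero_add n) = a) (h' : (Ext.mk₀ l).comp c (zero_add n) = b) :
    (Ext.mk₀ (biprod.desc k l)).comp c (zero_add n) =
      (Ext.mk₀ biprod.fst).comp a (zero_add n) + (Ext.mk₀ biprod.snd).comp b (zero_add n) := by
  subst h h'
  rw [Ext.mk₀_comp_mk₀_assoc, Ext.mk₀_comp_mk₀_assoc, ← Ext.add_comp, ← Ext.mk₀_add]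
  congr 2
  apply biprod.hom_ext' <;> simp

lemma mvabs_two (n : ℕ) (c : Ext R Y (n + 1)) (h : (Ext.mk₀ k).comp c (zero_add _) = 0)
    (h' : (Ext.mk₀ l).comp c (zero_add _) = 0) :
    ∃ e : Ext P Y n, hS.extClass.comp e (add_comm 1 n) = c := by
  refine Ext.contravariant_sequence_exact₃ hS Y c ?_ (add_comm 1 n)
  exact (mvabs_g _ c h h').trans (by simp)

include hS in
lemma mvabs_zero (c : Ext R Y 0) (h : (Ext.mk₀ k).comp c (zero_add _) = 0)
    (h' : (Ext.mk₀ l).comp c (zero_add _) = 0) : c = 0 := by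
  have : Epi (biprod.desc k l) := hS.epi_g
  apply Ext.precomp_mk₀_injective_of_epi Y (biprod.desc k l)
  refine Eq.trans ((mvabs_g _ c h h').trans (by simp)) (map_zero _).symm

include hS in
lemma mvabs_mid (n : ℕ) (a : Ext A Y n) (b : Ext B Y n)
    (h : (Ext.mk₀ i).comp a (zero_add _) = (Ext.mk₀ j).comp b (zero_add _)) :
    ∃ c : Ext R Y n, (Ext.mk₀ k).comp c (zero_add _) = a ∧
      (Ext.mk₀ l).comp c (zero_add _) = b := by
  obtain ⟨c, hc⟩ := Ext.contravariant_sequence_exact₂ hS Y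
    ((Ext.mk₀ biprod.fst).comp a (zero_add n) + (Ext.mk₀ biprod.snd).comp b (zero_add n)) (by
      refine (mvabs_f n _).trans ?_
      simp [Ext.comp_add, Ext.mk₀_comp_mk₀_assoc, h])
  have hc' : (Ext.mk₀ (biprod.desc k l)).comp c (zero_add n) =
    ((Ext.mk₀ biprod.fst).comp a (zero_add n) + (Ext.mk₀ biprod.snd).comp b (zero_add n)) := hc
  refine ⟨c, ?_, ?_⟩
  · have := congrArg (fun t => (Ext.mk₀ (biprod.inl : A ⟶ A ⊞ B)).comp t (zero_add n)) hc'
    simpa [Ext.comp_add, Ext.mk₀_comp_mk₀_assoc] using this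
  · have := congrArg (fun t => (Ext.mk₀ (biprod.inr : B ⟶ A ⊞ B)).comp t (zero_add n)) hc'
    simpa [Ext.comp_add, Ext.mk₀_comp_mk₀_assoc] using this

end MVabs

variable {X : Type} [TopologicalSpace X] [HasExt.{1} (ShM X)]

/-- restriction of Ext classes -/
def eres (F : ShM X) (n : ℕ) {U V : Opens X} (h : V ≤ U) :
    Ext ((QF X).obj U) F n →+ Ext ((QF X).obj V) F n :=
  (Ext.mk₀ ((QF X).map (homOfLE h))).precomp F (zero_add n)

lemma eres_apply (F : ShM X) (n : ℕ) {U V : Opens X} (h : V ≤ U) (c : Ext ((QF X).obj U) F n) :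
    eres F n h c = (Ext.mk₀ ((QF X).map (homOfLE h))).comp c (zero_add n) := rfl

lemma eres_self (F : ShM X) (n : ℕ) {U : Opens X} (h : U ≤ U) (c : Ext ((QF X).obj U) F n) :
    eres F n h c = c := by
  have : homOfLE h = 𝟙 U := rfl
  rw [eres_apply, this, (QF X).map_id, Ext.mk₀_id_comp]

lemma eres_res (F : ShM X) (n : ℕ) {U V W : Opens X} (h : V ≤ U) (h' : W ≤ V)
    (c : Ext ((QF X).obj U) F n) : eres F n h' (eres F n h c) = eres F n (h'.trans h) c := by
  rw [eres_apply, eres_apply, eres_apply, Ext.mk₀_comp_mk₀_assoc, ← (QF X).map_comp]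
  rfl

lemma eres_postcomp {F G : ShM X} {m n p : ℕ} {U V : Opens X} (h : V ≤ U)
    (c : Ext ((QF X).obj U) F n) (g : Ext F G m) (e : n + m = p) :
    eres G p h (c.comp g e) = (eres F n h c).comp g e := by
  rw [eres_apply, eres_apply]
  exact (Ext.comp_assoc _ _ _ _ _ (by omega)).symm

def edel (F : ShM X) (n : ℕ) (U V : Opens X) :
    Ext ((QF X).obj (U ⊓ V)) F n →+ Ext ((QF X).obj (U ⊔ V)) F (n + 1) :=
  ((mvSC_exact U V).extClass).precomp F (add_comm 1 n)

lemma edel_apply (F : ShM X) (n : ℕ) (U V : Opens X) (c : Ext ((QF X).obj (U ⊓ V)) F n) :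
    edel F n U V c = ((mvSC_exact U V).extClass).comp c (add_comm 1 n) := rfl

lemma edel_nat (F : ShM X) (n : ℕ) {U V U' V' : Opens X} (h : U' ≤ U) (h' : V' ≤ V)
    (c : Ext ((QF X).obj (U ⊓ V)) F n) :
    eres F (n + 1) (sup_le_sup h h') (edel F n U V c) =
      edel F n U' V' (eres F n (inf_le_inf h h') c) := by
  have key := (ShortComplex.ShortExact.extClass_naturality (mvSC_exact U' V') (mvSC_exact U V)
    (mvMap h h'))
  have h1 := Ext.comp_assoc (mvSC_exact U' V').extClass (Ext.mk₀ (mvMap h h').τ₁) c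
    (add_zero 1) (zero_add n) (show 1 + 0 + n = n + 1 by omega)
  have h2 := Ext.comp_assoc (Ext.mk₀ (mvMap h h').τ₃) (mvSC_exact U V).extClass c
    (zero_add 1) (add_comm 1 n) (show 0 + 1 + n = n + 1 by omega)
  rw [key] at h1
  exact h2.symm.trans h1

/-- local vanishing for all sheaves -/
def LocVan (n : ℕ) : Prop := ∀ (F : ShM X) (U : Opens X) (c : Ext ((QF X).obj U) F (n + 1))
    (x : X), x ∈ U → ∃ (V : Opens X) (h : V ≤ U), x ∈ V ∧ eres F (n + 1) h c = 0

lemma epi_local {F G : ShM X} (g : F ⟶ G) [Epi g] (U : Opens X) (f : (QF X).obj U ⟶ G)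
    (x : X) (hx : x ∈ U) : ∃ (V : Opens X) (h : V ≤ U) (_ : x ∈ V) (t : (QF X).obj V ⟶ F),
      t ≫ g = (QF X).map (homOfLE h) ≫ f := by
  have h1 : Sheaf.IsLocallySurjective g := (Sheaf.isLocallySurjective_iff_epi' _ g).2 inferInstance
  have h2 := h1.imageSieve_mem (secEquiv U G f) 
  obtain ⟨V, i, ⟨t, ht⟩, hV⟩ := h2 x hx
  obtain ⟨t', rfl⟩ := (secEquiv V F).surjective t
  refine ⟨V, leOfHom i, hV, t', ?_⟩
  apply (secEquiv V G).injective
  rw [secEquiv_nat]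
  exact ht

lemma locVan (n : ℕ) : LocVan (X := X) n := by
  induction n with
  | zero =>
    intro F U c x hx
    let S : ShortComplex (ShM X) := ShortComplex.mk (Injective.ι F) (cokernel.π _)
      (cokernel.condition _)
    have hS : S.ShortExact :=
      { exact := ShortComplex.exact_of_g_is_cokernel _ (cokernelIsCokernel _)
        mono_f := inferInstanceAs (Mono (Injective.ι F))
        epi_g := inferInstanceAs (Epi (cokernel.π _)) }
    obtain ⟨c', hc⟩ := Ext.covariant_sequence_exact₁ _ hS c (Ext.eq_zero_of_injective _) (zero_add 1)
    obtain ⟨f, rfl⟩ := Ext.addEquiv₀.symm.surjective c'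
    obtain ⟨V, h, hV, t, ht⟩ := epi_local (cokernel.π (Injective.ι F)) U f x hx
    refine ⟨V, h, hV, ?_⟩
    rw [← hc]
    have e1 := eres_postcomp h (Ext.addEquiv₀.symm f) hS.extClass (zero_add 1)
    refine e1.trans ?_
    have e2 : eres _ 0 h (Ext.addEquiv₀.symm f) = Ext.mk₀ (t ≫ cokernel.π (Injective.ι F)) := by
      rw [ht]
      exact Ext.mk₀_comp_mk₀ _ _
    rw [e2, ← Ext.mk₀_comp_mk₀]
    refine (Ext.comp_assoc (Ext.mk₀ t) (Ext.mk₀ S.g) hS.extClass _ (zero_add 1) (by omega)).trans ?_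
    rw [hS.comp_extClass, Ext.comp_zero]
  | succ n ih =>
    intro F U c x hx
    let S : ShortComplex (ShM X) := ShortComplex.mk (Injective.ι F) (cokernel.π _)
      (cokernel.condition _)
    have hS : S.ShortExact :=
      { exact := ShortComplex.exact_of_g_is_cokernel _ (cokernelIsCokernel _)
        mono_f := inferInstanceAs (Mono (Injective.ι F))
        epi_g := inferInstanceAs (Epi (cokernel.π _)) }
    obtain ⟨c', hc⟩ := Ext.covariant_sequence_exact₁ _ hS c (Ext.eq_zero_of_injective _) rfl
    obtain ⟨V, h, hV, h0⟩ := ih _ U c' x hx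
    refine ⟨V, h, hV, ?_⟩
    rw [← hc]
    refine (eres_postcomp h c' hS.extClass rfl).trans ?_
    rw [h0, Ext.zero_comp]

end ShPartTwo

section ShPartThree

open Abelian

variable {X : Type} [TopologicalSpace X]

lemma sheaf_sep (F : ShM X) (U : Opens X) (s : F.obj.obj (.op U))
    (h : ∀ x ∈ U, ∃ (V : Opens X) (h : V ≤ U), x ∈ V ∧ F.obj.map (homOfLE h).op s = 0) : s = 0 := by
  have hF := (Presheaf.isSheaf_iff_isSheaf_forget (Opens.grothendieckTopology X) F.obj
    (forget (ModuleCat.{0} ℚ))).1 F.property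
  have hF' := ((isSheaf_iff_isSheaf_of_type _ _).1 hF).isSeparated
  let S : Sieve U :=
    { arrows := fun V f => F.obj.map f.op s = 0
      downward_closed := by
        intro V W f hf g
        change F.obj.map (f.op ≫ g.op) s = 0
        rw [F.obj.map_comp]
        change F.obj.map g.op (F.obj.map f.op s) = 0
        have hf' : F.obj.map f.op s = 0 := hf
        rw [hf', map_zero] }
  have hS : S ∈ Opens.grothendieckTopology X U := by
    intro x hx
    obtain ⟨V, h, hV, h0⟩ := h x hx
    exact ⟨V, homOfLE h, h0, hV⟩
  refine (hF' S hS).ext (t₁ := s) (t₂ := 0) ?_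
  intro V f hf
  have hf' : F.obj.map f.op s = 0 := hf
  exact hf'.trans (map_zero (F.obj.map f.op).hom).symm

lemma hom_sep (F : ShM X) (U : Opens X) (f : (QF X).obj U ⟶ F)
    (h : ∀ x ∈ U, ∃ (V : Opens X) (h : V ≤ U), x ∈ V ∧ (QF X).map (homOfLE h) ≫ f = 0) :
    f = 0 := by
  apply (secEquiv U F).injective
  rw [map_zero]
  apply sheaf_sep
  intro x hx
  obtain ⟨V, h, hV, h0⟩ := h x hx
  refine ⟨V, h, hV, ?_⟩
  rw [← secEquiv_nat, h0, map_zero]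

/-- the constant sheaf -/
abbrev CQ (X : Type) [TopologicalSpace X] : ShM X :=
  (constantSheaf (Opens.grothendieckTopology X) (ModuleCat.{0} ℚ)).obj (ModuleCat.of ℚ ℚ)

/-- constant presheaf to the constant sheaf -/
def cUnit (X : Type) [TopologicalSpace X] :
    (Functor.const (Opens X)ᵒᵖ).obj (ModuleCat.of ℚ ℚ) ⟶ (CQ X).obj :=
  toSheafify (Opens.grothendieckTopology X) ((Functor.const (Opens X)ᵒᵖ).obj (ModuleCat.of ℚ ℚ))

def cSec (U : Opens X) : ℚ →+ (CQ X).obj.obj (.op U) :=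
  ((cUnit X).app (.op U)).hom.toAddMonoidHom

lemma cSec_res {U V : Opens X} (h : V ≤ U) (q : ℚ) :
    (CQ X).obj.map (homOfLE h).op (cSec U q) = cSec V q :=
  (ConcreteCategory.congr_hom ((cUnit X).naturality (homOfLE h).op) q).symm

lemma cSec_inj {U : Opens X} {x : X} (hx : x ∈ U) (q : ℚ) (h : cSec U q = 0) : q = 0 := by
  have hi : Presheaf.IsLocallyInjective (Opens.grothendieckTopology X) (cUnit X) :=
    inferInstanceAs (Presheaf.IsLocallyInjective _ (toSheafify (Opens.grothendieckTopology X)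
      ((Functor.const (Opens X)ᵒᵖ).obj (ModuleCat.of ℚ ℚ))))
  have h2 := Presheaf.equalizerSieve_mem (Opens.grothendieckTopology X) (cUnit X)
    (X := Opposite.op U) (q : ℚ) (0 : ℚ) (h.trans (map_zero (cSec U)).symm)
  obtain ⟨V, i, hi, hV⟩ := h2 x hx
  exact hi

lemma cSec_loc {U : Opens X} {x : X} (hx : x ∈ U) (s : (CQ X).obj.obj (.op U)) :
    ∃ (V : Opens X) (h : V ≤ U) (q : ℚ), x ∈ V ∧ (CQ X).obj.map (homOfLE h).op s = cSec V q := by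
  have hi : Presheaf.IsLocallySurjective (Opens.grothendieckTopology X) (cUnit X) :=
    inferInstanceAs (Presheaf.IsLocallySurjective _ (toSheafify (Opens.grothendieckTopology X)
      ((Functor.const (Opens X)ᵒᵖ).obj (ModuleCat.of ℚ ℚ))))
  obtain ⟨V, i, ⟨q, hq⟩, hV⟩ := hi.imageSieve_mem s x hx
  exact ⟨V, leOfHom i, q, hV, hq.symm⟩

/-- constants as morphisms -/
def cHom (U : Opens X) : ℚ →+ ((QF X).obj U ⟶ CQ X) :=
  (secEquiv U (CQ X)).symm.toAddMonoidHom.comp (cSec U)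

lemma secEquiv_cHom (U : Opens X) (q : ℚ) : secEquiv U (CQ X) (cHom U q) = cSec U q :=
  (secEquiv U (CQ X)).apply_symm_apply _

lemma cHom_res {U V : Opens X} (h : V ≤ U) (q : ℚ) :
    (QF X).map (homOfLE h) ≫ cHom U q = cHom V q := by
  apply (secEquiv V (CQ X)).injective
  rw [secEquiv_nat, secEquiv_cHom, secEquiv_cHom, cSec_res]

section K

variable {S : ShM X} (g : CQ X ⟶ S) (pt : X)
  (ha : ∀ U : Opens X, pt ∉ U → Subsingleton (S.obj.obj (.op U)))
  (hb : ∀ U : Opens X, pt ∈ U → ∀ s : (CQ X).obj.obj (.op U), g.hom.app (.op U) s = 0 →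
    ∃ (V : Opens X) (h : V ≤ U), pt ∈ V ∧ (CQ X).obj.map (homOfLE h).op s = 0)

include ha in
lemma cHom_zero (U : Opens X) (hU : pt ∉ U) (f : (QF X).obj U ⟶ CQ X) : f ≫ g = 0 := by
  have := ha U hU
  apply (secEquiv U S).injective
  exact Subsingleton.elim _ _

/-- constants in the kernel -/
def kHom (U : Opens X) (hU : pt ∉ U) : ℚ →+ ((QF X).obj U ⟶ kernel g) :=
  AddMonoidHom.mk' (fun q => kernel.lift g (cHom U q) (cHom_zero g pt ha U hU _)) (by
    intro a b
    rw [← cancel_mono (kernel.ι g), Preadditive.add_comp, kernel.lift_ι, kernel.lift_ι,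
      kernel.lift_ι, map_add])

lemma kHom_ι (U : Opens X) (hU : pt ∉ U) (q : ℚ) :
    kHom g pt ha U hU q ≫ kernel.ι g = cHom U q := kernel.lift_ι _ _ _

lemma kHom_res {U V : Opens X} (h : V ≤ U) (hU : pt ∉ U) (hV : pt ∉ V) (q : ℚ) :
    (QF X).map (homOfLE h) ≫ kHom g pt ha U hU q = kHom g pt ha V hV q := by
  rw [← cancel_mono (kernel.ι g), Category.assoc, kHom_ι, kHom_ι, cHom_res]

lemma kHom_inj {U : Opens X} (hU : pt ∉ U) (x : X) (hx : x ∈ U) (q : ℚ)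
    (h : kHom g pt ha U hU q = 0) : q = 0 := by
  apply cSec_inj hx
  rw [← secEquiv_cHom, ← kHom_ι g pt ha U hU, h, zero_comp, map_zero]

lemma kHom_loc [T1Space X] (U : Opens X) (f : (QF X).obj U ⟶ kernel g) (x : X) (hx : x ∈ U)
    (hp : x ≠ pt) : ∃ (V : Opens X) (h : V ≤ U) (_ : x ∈ V) (hp : pt ∉ V) (q : ℚ),
      (QF X).map (homOfLE h) ≫ f = kHom g pt ha V hp q := by
  obtain ⟨V, h, q, hV, hq⟩ := cSec_loc hx (secEquiv U _ (f ≫ kernel.ι g))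
  let W : Opens X := V ⊓ ⟨{pt}ᶜ, isOpen_compl_singleton⟩
  have hW : W ≤ V := inf_le_left
  have hpW : pt ∉ W := fun h => h.2 rfl
  refine ⟨W, hW.trans h, ⟨hV, hp⟩, hpW, q, ?_⟩
  rw [← cancel_mono (kernel.ι g), Category.assoc, kHom_ι]
  have h1 : (QF X).map (homOfLE h) ≫ f ≫ kernel.ι g = cHom V q := by
    apply (secEquiv V (CQ X)).injective
    rw [secEquiv_nat, secEquiv_cHom, hq]
  rw [← cHom_res hW, ← h1]
  have e : (QF X).map (homOfLE (hW.trans h)) =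
      (QF X).map (homOfLE hW) ≫ (QF X).map (homOfLE h) := by
    rw [← Functor.map_comp]
    rfl
  rw [e]
  simp only [Category.assoc]

include hb in
lemma kHom_pt (U : Opens X) (f : (QF X).obj U ⟶ kernel g) (hU : pt ∈ U) :
    ∃ (V : Opens X) (h : V ≤ U) (_ : pt ∈ V), (QF X).map (homOfLE h) ≫ f = 0 := by
  obtain ⟨V, h, hV, h0⟩ := hb U hU (secEquiv U _ (f ≫ kernel.ι g)) (by
    rw [← secEquiv_comp, Category.assoc, kernel.condition, comp_zero, map_zero])
  refine ⟨V, h, hV, ?_⟩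
  rw [← cancel_mono (kernel.ι g), Category.assoc, zero_comp]
  apply (secEquiv V (CQ X)).injective
  rw [secEquiv_nat, h0, map_zero]

variable [HasExt.{1} (ShM X)]

lemma eres_mk (F : ShM X) {U V : Opens X} (h : V ≤ U) (f : (QF X).obj U ⟶ F) :
    eres F 0 h (Ext.mk₀ f) = Ext.mk₀ ((QF X).map (homOfLE h) ≫ f) :=
  Ext.mk₀_comp_mk₀ _ _

lemma ext_bot (F : ShM X) (n : ℕ) : Subsingleton (Ext ((QF X).obj ⊥) F n) := by
  have h0 : 𝟙 ((QF X).obj ⊥) = 0 := hom_sep _ _ _ (fun x hx => hx.elim)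
  refine ⟨fun a b => ?_⟩
  rw [← Ext.mk₀_id_comp a, ← Ext.mk₀_id_comp b, h0, Ext.mk₀_zero, Ext.zero_comp, Ext.zero_comp]

lemma mk₀_surj {A B : ShM X} (c : Ext A B 0) : ∃ f, c = Ext.mk₀ f :=
  ⟨_, (Ext.mk₀_homEquiv₀_apply c).symm⟩

/-- The cohomology theory of the kernel sheaf. -/
def theMV [T1Space X] : MVTheory X pt where
  H n U := Ext ((QF X).obj U) (kernel g) n
  inst _ _ := inferInstance
  res n _ _ h := eres (kernel g) n h
  res_self n _ h c := eres_self _ n h c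
  res_res n _ _ _ h h' c := eres_res _ n h h' c
  δ n U V := edel (kernel g) n U V
  δ_nat n _ _ _ _ h h' c := edel_nat _ n h h' c
  ex_one n U V c h := mvabs_one (mvSC_exact U V) n c h
  δ_left n U V a := mvabs_left (mvSC_exact U V) n a
  δ_right n U V a := mvabs_right (mvSC_exact U V) n a
  ex_two n U V c h h' := mvabs_two (mvSC_exact U V) n c h h'
  ex_zero U V c h h' := mvabs_zero (mvSC_exact U V) c h h'
  ex_mid n U V a b h := mvabs_mid (mvSC_exact U V) n a b h
  loc n U c x hx := locVan n _ U c x hx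
  bot n := ext_bot _ n
  const U hU := Ext.addEquiv₀.symm.toAddMonoidHom.comp (kHom g pt ha U hU)
  res_const h hU hV q := by
    refine (eres_mk _ h _).trans ?_
    rw [kHom_res g pt ha h hU hV]
    rfl
  const_inj hU x hx q h := by
    have h' : Ext.mk₀ (kHom g pt ha _ hU q) = 0 := h
    exact kHom_inj g pt ha hU x hx q ((Ext.mk₀_eq_zero_iff _).1 h')
  loc_const U c x hx hp := by
    obtain ⟨f, rfl⟩ := mk₀_surj c
    obtain ⟨V, h, hV, hp, q, e⟩ := kHom_loc g pt ha U f x hx hp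
    refine ⟨V, h, hV, hp, q, ?_⟩
    rw [eres_mk, e]
    rfl
  loc_pt U c hU := by
    obtain ⟨f, rfl⟩ := mk₀_surj c
    obtain ⟨V, h, hV, e⟩ := kHom_pt g pt hb U f hU
    exact ⟨V, h, hV, by rw [eres_mk, e, Ext.mk₀_zero]⟩
  sep U c h := by
    obtain ⟨f, rfl⟩ := mk₀_surj c
    rw [Ext.mk₀_eq_zero_iff]
    apply hom_sep
    intro x hx
    obtain ⟨V, h, hV, e⟩ := h x hx
    rw [eres_mk, Ext.mk₀_eq_zero_iff] at e
    exact ⟨V, h, hV, e⟩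

end K

/-- The constant sheaf corepresents global sections. -/
def cqIso (X : Type) [TopologicalSpace X] : (QF X).obj ⊤ ≅ CQ X :=
  (presheafToSheaf _ _).mapIso (NatIso.ofComponents
    (F := yoneda.obj (⊤ : Opens X) ⋙ ModuleCat.free.{0} ℚ)
    (G := (Functor.const (Opens X)ᵒᵖ).obj (ModuleCat.of ℚ ℚ))
    (fun W =>
      { hom := ModuleCat.freeDesc (X := (yoneda.obj (⊤ : Opens X)).obj W) (M := ModuleCat.of ℚ ℚ)
          (↾ fun _ => (1 : ℚ))
        inv := ModuleCat.ofHom (Finsupp.lsingle (homOfLE le_top : W.unop ⟶ ⊤))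
        hom_inv_id := by
          refine ModuleCat.free_hom_ext (R := ℚ) (X := (yoneda.obj (⊤ : Opens X)).obj W) ?_
          intro x
          refine (congrArg (ModuleCat.ofHom (Finsupp.lsingle (homOfLE le_top : W.unop ⟶ ⊤)))
            (ModuleCat.freeDesc_apply _ _)).trans ?_
          rfl
        inv_hom_id := by
          apply ModuleCat.hom_ext
          apply LinearMap.ext_ring
          exact ModuleCat.freeDesc_apply (M := ModuleCat.of ℚ ℚ) _ _ })
    (by
      intro W W' f
      refine ModuleCat.free_hom_ext (R := ℚ) (X := (yoneda.obj (⊤ : Opens X)).obj W) ?_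
      intro x
      have h1 : (yoneda.obj (⊤ : Opens X) ⋙ ModuleCat.free.{0} ℚ).map f
          (ModuleCat.freeMk x : (ModuleCat.free.{0} ℚ).obj ((yoneda.obj (⊤ : Opens X)).obj W)) =
          (ModuleCat.freeMk ((yoneda.obj (⊤ : Opens X)).map f x) :
            (ModuleCat.free.{0} ℚ).obj ((yoneda.obj (⊤ : Opens X)).obj W')) :=
          ModuleCat.free_map_apply _ _
      refine (congrArg (ModuleCat.freeDesc (X := (yoneda.obj (⊤ : Opens X)).obj W')
        (M := ModuleCat.of ℚ ℚ) (↾ fun _ => (1 : ℚ))) h1).trans ?_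
      refine (ModuleCat.freeDesc_apply _ _).trans ?_
      exact (ModuleCat.freeDesc_apply (M := ModuleCat.of ℚ ℚ) (↾ fun _ => (1 : ℚ)) x).symm))

end ShPartThree

section Final

open Abelian

lemma unit_ha (U : Opens SU2) (hU : (1 : SU2) ∉ U) :
    Subsingleton (((skyscraperSheafFunctor (C := ModuleCat.{0} ℚ) (X := GTop) (1 : SU2)).obj
      (TopCat.Presheaf.stalk (X := GTop) QG.obj (1 : SU2))).obj.obj (.op U)) := by
  have e : ((skyscraperSheafFunctor (C := ModuleCat.{0} ℚ) (X := GTop) (1 : SU2)).obj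
      (TopCat.Presheaf.stalk (X := GTop) QG.obj (1 : SU2))).obj.obj (.op U) =
      terminal (ModuleCat.{0} ℚ) := if_neg hU
  rw [e]
  exact ModuleCat.subsingleton_of_isZero
    ((isZero_zero (ModuleCat.{0} ℚ)).of_iso (HasZeroObject.zeroIsoTerminal).symm)

lemma unit_hb (U : Opens SU2) (hU : (1 : SU2) ∈ U) (s : (CQ SU2).obj.obj (.op U))
    (h : unitQG.hom.app (.op U) s = 0) :
    ∃ (V : Opens SU2) (h : V ≤ U), (1 : SU2) ∈ V ∧ (CQ SU2).obj.map (homOfLE h).op s = 0 := by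
  have h1 := StalkSkyscraperPresheafAdjunctionAuxs.germ_fromStalk (X := GTop) (1 : SU2)
    (StalkSkyscraperPresheafAdjunctionAuxs.toSkyscraperPresheaf (X := GTop) (1 : SU2)
      (𝟙 (TopCat.Presheaf.stalk (X := GTop) QG.obj (1 : SU2)))) U hU
  rw [StalkSkyscraperPresheafAdjunctionAuxs.fromStalk_to_skyscraper, Category.comp_id] at h1
  have h2 := ConcreteCategory.congr_hom h1 s
  have h3 : TopCat.Presheaf.germ (X := GTop) QG.obj U (1 : SU2) hU s = 0 := by
    have key : ∀ {A B C : ModuleCat.{0} ℚ} (f : A ⟶ B) (k : B ⟶ C) (a : A), f a = 0 →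
        (f ≫ k) a = 0 := by
      intro A B C f k a ha
      rw [ConcreteCategory.comp_apply, ha, map_zero]
    exact h2.trans (key _ _ s h)
  obtain ⟨W, m, i, j, e⟩ := TopCat.Presheaf.germ_eq (X := GTop) QG.obj (1 : SU2) hU hU s 0
    (h3.trans (map_zero (ModuleCat.Hom.hom _)).symm)
  exact ⟨W, leOfHom i, m, e.trans (map_zero (ModuleCat.Hom.hom _))⟩

/-- The cohomology theory on `SU2`. -/
def su2MV : MVTheory SU2 (1 : SU2) := theMV (X := SU2) unitQG (1 : SU2) unit_ha unit_hb

lemma mv_top {X : Type} [TopologicalSpace X] {pt : X} (T : MVTheory X pt) (k : ℕ)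
    (h : T.IsQ k Set.univ) : ∃ f : ℚ →+ T.H k ⊤, Function.Bijective f := by
  obtain ⟨U, hU, φ, h1, h2⟩ := h
  obtain rfl : U = ⊤ := top_le_iff.1 hU
  refine ⟨φ, (injective_iff_map_eq_zero _).2 ?_, ?_⟩
  · intro q hq
    refine h2 ⊤ le_rfl q (fun _ h => h) ?_
    rw [hq, map_zero]
  · intro c
    obtain ⟨V, h, h₀, q, hV, e⟩ := h1 ⊤ (fun _ h => h) c
    obtain rfl : V = ⊤ := top_le_iff.1 hV
    rw [T.res_self, T.res_self] at e
    exact ⟨q, e.symm⟩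

lemma mv_top_zero {X : Type} [TopologicalSpace X] {pt : X} (T : MVTheory X pt) (n : ℕ)
    (h : T.GV n Set.univ) (c : T.H n ⊤) : c = 0 := by
  obtain ⟨V, h, hV, e⟩ := h ⊤ (fun _ h => h) c
  obtain rfl : V = ⊤ := top_le_iff.1 hV
  rwa [T.res_self] at e

lemma su2_result : (∃ f : ℚ →+ su2MV.H 3 ⊤, Function.Bijective f) ∧
    ∀ n, n ≠ 3 → ∀ c : su2MV.H n ⊤, c = 0 := by
  obtain ⟨x, hx, S, P, N, h0, hi, hu, hP, hN, hpt, hS⟩ := su2_cells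
  have := su2_compact
  have h := su2MV.sphere x hx S P N 3 h0 hi hu hP hN hpt 3 le_rfl
  rw [hS] at h
  exact ⟨mv_top _ _ h.1, fun n hn => mv_top_zero _ _ (h.2 n hn)⟩

/-- Transport of `Ext` groups along an isomorphism in the first variable. -/
def extIso {C : Type 1} [Category.{0} C] [Abelian C] [HasExt.{1} C] {A B : C} (e : A ≅ B) (F : C)
    (n : ℕ) : Ext A F n ≃+ Ext B F n where
  toFun c := (Ext.mk₀ e.inv).comp c (zero_add n)
  invFun c := (Ext.mk₀ e.hom).comp c (zero_add n)
  left_inv c := by simp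
  right_inv c := by simp
  map_add' a b := Ext.comp_add _ _ _ _

lemma ext_result : Nonempty (Ext QG KK 3 ≃+ ℚ) ∧
    ∀ n : ℕ, n ≠ 3 → Subsingleton (Ext QG KK n) := by
  obtain ⟨⟨f, hf⟩, h⟩ := su2_result
  let f' : ℚ →+ Ext ((QF SU2).obj ⊤) KK 3 := f
  have hf' : Function.Bijective f' := hf
  refine ⟨⟨((AddEquiv.ofBijective f' hf').trans (extIso (cqIso SU2) KK 3)).symm⟩, ?_⟩
  intro n hn
  refine ⟨fun a b => ?_⟩
  apply (extIso (cqIso SU2) KK n).symm.injective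
  exact (h n hn _).trans (h n hn _).symm

end Final

/-- `Ext^n(ℚ_G, K) ≅ ℚ` for `n = 3`, and `Ext^n(ℚ_G, K) = 0` otherwise. -/
theorem ext_constant_K :
    (Nonempty ((Abelian.Ext QG KK 3) ≃+ ℚ)) ∧
    (∀ n : ℕ, n ≠ 3 → Subsingleton (Abelian.Ext QG KK n)) := by
  exact ext_result

end
end
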